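/- Fix κ > 0 and an integer m ≥ 3. There exist α ∈ (0,1] and C > 0, both independent of n, such that for all sufficiently large n, every classical solution φ of the HJB equation on B_κ^n (i.e. φ is Lipschitz on the closed ball, twice continuously differentiable on B_κ^n, satisfies the HJB equation on B_κ^n, and vanishes on the boundary {|x| = κ √n (log n)^m}) satisfies the weighted interior Schauder bound |φ|*_{2,α,B_κ^n} ≤ C √n (log n)^{k₀}, where k₀ = 4m(1 + 1/α). -/

import Mathlib

/-!
The bound holds with `α = 1/2`; no general regularity theory is used, only the comparison of the HJB
equation with the Laplace equation.

Let `T = (log n) ^ m` and let `R = κ √n T` be the radius of the ball. Since `l_i^n = O(√n)`, the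
maximum principle gives `|φ| = O(R)` (`sol_bound`). Around a point `x0` take
`ρ = dist (x0, ∂B) / (K T ^ 2)` and write `x = x0 + ρ D z` with `D = diag (√(μ_i ν_i))`. Divided by
`n`, the second order part of the HJB operator tends to the Laplacian in `z`, because `x` and the
control term are `o(n)` on the ball. The choice of `ρ` makes the first order part small as well, so
for `K` and `n` large the rescaled operator is within `ε` of the Laplacian and depends on `z` in an
`ε`-Lipschitz way (`hjb_ellOp`).

For such operators a second order expansion with remainder `O(|z| ^ (5/2))` is obtained by
Caffarelli's perturbation method:

* solutions satisfy an interior Hölder estimate (`holder_estimate`), proved by doubling the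
  variables and coupling the two points by reflection;
* harmonic polynomials are dense in the continuous functions on the unit sphere
  (`exists_harmonic_near`), and their third order Taylor remainder is controlled by Bernstein's
  gradient estimate (`bernstein`, `harmonic_taylor`);
* hence a solution is close to a harmonic polynomial (`approx`), so that subtracting a quadratic
  polynomial and rescaling improves the accuracy by a fixed factor (`quad_step`); summing the
  corrections gives the expansion at the centre (`pointwise_C2`).

Undoing the scaling, `φ` has at every `x0` a quadratic expansion with amplitude `O(R)` on a ball of
radius comparable to `ρ` (`local_expansion`). Comparing second differences of the expansions at two
points turns this into a weighted Hölder bound for the Hessian (`schauder_of_expands`), which costs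
at most the factor `(K T ^ 2) ^ 3`. The result is of order `√n (log n) ^ (7 * m)`, less than
`√n (log n) ^ (12 * m)`, and `12 * m = k₀` at `α = 1/2`.
-/

open Finset Metric Set

noncomputable section

namespace HW

variable {I : ℕ}

/-- `ℝ^I` with the Euclidean norm. -/
abbrev Euc (I : ℕ) := EuclideanSpace ℝ (Fin I)

/-- First partial derivative `∂_i φ (x)`. -/
noncomputable def pd1 (φ : Euc I → ℝ) (i : Fin I) (x : Euc I) : ℝ :=
  fderiv ℝ φ x (EuclideanSpace.single i 1)

/-- Second partial derivative `∂²_{ii} φ (x)`. -/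
noncomputable def pd2 (φ : Euc I → ℝ) (i : Fin I) (x : Euc I) : ℝ :=
  fderiv ℝ (pd1 φ i) x (EuclideanSpace.single i 1)

/-- The fluid fraction `ν_i = (a_i/μ_i) · μ̄` where `μ̄ = (∑ a_j/μ_j)⁻¹`. -/
noncomputable def nu (μ a : Fin I → ℝ) (i : Fin I) : ℝ :=
  (a i / μ i) * (∑ j, a j / μ j)⁻¹

/-- The radius `κ √n (log n)^m` of the ball `B_κ^n`. -/
noncomputable def Rad (κ : ℝ) (m n : ℕ) : ℝ :=
  κ * Real.sqrt n * Real.log n ^ m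

/-- The HJB equation at `x`, with a general "front" function `g` in place of `(e·x)^+`
(the true HJB equation uses `g y = max y 0`, the smoothed one uses `g = f_a`).
Here `lam = λ^n`, `l_i^n = a_i λ^n − μ_i ν_i n`. -/
def HJBgen (μ a c : Fin I → ℝ) (γ lam : ℝ) (n : ℕ) (g : ℝ → ℝ)
    (φ : Euc I → ℝ) (x : Euc I) : Prop :=
  0 = -γ * φ x
    + g (∑ j, x j) * (⨅ i, (c i + μ i * pd1 φ i x - (1 / 2) * μ i * pd2 φ i x))
    + ∑ i, ((a i * lam - μ i * nu μ a i * n) - μ i * x i) * pd1 φ i x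
    + (1 / 2) * ∑ i, (a i * lam + μ i * (nu μ a i * n + x i)) * pd2 φ i x

/-- A classical solution on `B = ball 0 R`: Lipschitz on the closed ball, `C²` on the open
ball, vanishing on the boundary sphere, and satisfying the (generalized) HJB equation on `B`. -/
def IsSolGen (μ a c : Fin I → ℝ) (γ lam : ℝ) (n : ℕ) (R : ℝ) (g : ℝ → ℝ)
    (φ : Euc I → ℝ) : Prop :=
  (∃ K : NNReal, LipschitzOnWith K φ (closedBall 0 R)) ∧
  ContDiffOn ℝ 2 φ (ball 0 R) ∧
  (∀ x : Euc I, ‖x‖ = R → φ x = 0) ∧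
  (∀ x ∈ ball (0 : Euc I) R, HJBgen μ a c γ lam n g φ x)

/-- α-Hölder continuity of the second derivative on every compact subset of `ball 0 R`. -/
def HolderSecond (α R : ℝ) (φ : Euc I → ℝ) : Prop :=
  ∀ K : Set (Euc I), K ⊆ ball 0 R → IsCompact K →
    ∃ C : ℝ, ∀ x ∈ K, ∀ y ∈ K,
      ‖fderiv ℝ (fderiv ℝ φ) x - fderiv ℝ (fderiv ℝ φ) y‖ ≤ C * ‖x - y‖ ^ α

/-- Pointwise form of the bound `|φ|*_{2,α,ball 0 R} ≤ M`: each of the four constituent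
(weighted) seminorms is bounded by `M`.  For `x` in the ball, `dist (x, ∂B) = R − ‖x‖`. -/
def SchauderBound (α R M : ℝ) (φ : Euc I → ℝ) : Prop :=
  (∀ x : Euc I, ‖x‖ < R → |φ x| ≤ M) ∧
  (∀ x : Euc I, ‖x‖ < R → (R - ‖x‖) * ‖fderiv ℝ φ x‖ ≤ M) ∧
  (∀ x : Euc I, ‖x‖ < R → (R - ‖x‖) ^ 2 * ‖fderiv ℝ (fderiv ℝ φ) x‖ ≤ M) ∧
  (∀ x y : Euc I, ‖x‖ < R → ‖y‖ < R → x ≠ y →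
    (min (R - ‖x‖) (R - ‖y‖)) ^ (2 + α) *
        ‖fderiv ℝ (fderiv ℝ φ) x - fderiv ℝ (fderiv ℝ φ) y‖ ≤
      M * ‖x - y‖ ^ α)

open Filter Topology

/-! ### Second derivatives along lines -/

/-- `g` is differentiable near `0`, `g' 0 = a`, and `g'` is differentiable at `0` with
derivative `b`. -/
def HasD2 (g : ℝ → ℝ) (a b : ℝ) : Prop :=
  ∃ g' : ℝ → ℝ, (∀ᶠ t in 𝓝 (0 : ℝ), HasDerivAt g (g' t) t) ∧ g' 0 = a ∧ HasDerivAt g' b 0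

lemma HasD2.congr {g : ℝ → ℝ} {a b a' b' : ℝ} (h : HasD2 g a b) (ha : a = a') (hb : b = b') :
    HasD2 g a' b' := by subst ha hb; exact h

lemma HasD2.const (c : ℝ) : HasD2 (fun _ => c) 0 0 :=
  ⟨fun _ => 0, Eventually.of_forall fun t => hasDerivAt_const t c, rfl, hasDerivAt_const _ _⟩

lemma HasD2.id : HasD2 (fun t => t) 1 0 :=
  ⟨fun _ => 1, Eventually.of_forall fun t => hasDerivAt_id t, rfl, hasDerivAt_const _ _⟩

lemma HasD2.add {f g : ℝ → ℝ} {a b c d : ℝ} (hf : HasD2 f a b) (hg : HasD2 g c d) :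
    HasD2 (fun t => f t + g t) (a + c) (b + d) := by
  obtain ⟨f', h1, h2, h3⟩ := hf
  obtain ⟨g', k1, k2, k3⟩ := hg
  refine ⟨fun t => f' t + g' t, ?_, by simp [h2, k2], h3.add k3⟩
  filter_upwards [h1, k1] with t u v using u.add v

lemma HasD2.mul {f g : ℝ → ℝ} {a b c d : ℝ} (hf : HasD2 f a b) (hg : HasD2 g c d) :
    HasD2 (fun t => f t * g t) (a * g 0 + f 0 * c) (b * g 0 + 2 * a * c + f 0 * d) := by
  obtain ⟨f', h1, h2, h3⟩ := hf
  obtain ⟨g', k1, k2, k3⟩ := hg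
  refine ⟨fun t => f' t * g t + f t * g' t, ?_, by simp [h2, k2], ?_⟩
  · filter_upwards [h1, k1] with t u v using u.mul v
  · have := (h3.mul k1.self_of_nhds).add (h1.self_of_nhds.mul k3)
    refine this.congr_deriv ?_
    rw [h2, k2]; ring

lemma HasD2.const_mul {g : ℝ → ℝ} {c d : ℝ} (k : ℝ) (hg : HasD2 g c d) :
    HasD2 (fun t => k * g t) (k * c) (k * d) :=
  ((HasD2.const k).mul hg).congr (by ring) (by ring)

lemma HasD2.sub {f g : ℝ → ℝ} {a b c d : ℝ} (hf : HasD2 f a b) (hg : HasD2 g c d) :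
    HasD2 (fun t => f t - g t) (a - c) (b - d) := by
  have := hf.add (hg.const_mul (-1))
  simpa [sub_eq_add_neg] using this

lemma HasD2.comp {F F' f : ℝ → ℝ} {F1 F2 a b : ℝ} (hf : HasD2 f a b)
    (hF : ∀ᶠ s in 𝓝 (f 0), HasDerivAt F (F' s) s) (h1 : F' (f 0) = F1)
    (h2 : HasDerivAt F' F2 (f 0)) :
    HasD2 (fun t => F (f t)) (F1 * a) (F2 * a ^ 2 + F1 * b) := by
  obtain ⟨f', k1, k2, k3⟩ := hf
  have hc : ContinuousAt f 0 := k1.self_of_nhds.continuousAt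
  refine ⟨fun t => F' (f t) * f' t, ?_, by simp [h1, k2], ?_⟩
  · filter_upwards [k1, hc.eventually hF] with t u v using v.comp t u
  · have := (h2.comp (0 : ℝ) k1.self_of_nhds).mul k3
    refine this.congr_deriv ?_
    simp only [Function.comp, h1, k2]; ring

lemma HasD2.line {E : Type*} [NormedAddCommGroup E] [NormedSpace ℝ E] {w : E → ℝ} {x : E}
    (hw : ContDiffAt ℝ 2 w x) (ξ : E) :
    HasD2 (fun t : ℝ => w (x + t • ξ)) (fderiv ℝ w x ξ) (fderiv ℝ (fderiv ℝ w) x ξ ξ) := by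
  have hl : ∀ t : ℝ, HasDerivAt (fun t : ℝ => x + t • ξ) ξ t := fun t => by
    simpa using ((hasDerivAt_id t).smul_const ξ).const_add x
  have hl0 : Tendsto (fun t : ℝ => x + t • ξ) (𝓝 0) (𝓝 x) := by
    have := (hl 0).continuousAt
    simpa [ContinuousAt] using this
  have hd : ∀ᶠ y in 𝓝 x, DifferentiableAt ℝ w y := by
    have := hw.eventually (by simp)
    filter_upwards [this] with y hy using hy.differentiableAt (by norm_num)
  have hd2 : DifferentiableAt ℝ (fderiv ℝ w) x :=
    (hw.fderiv_right (m := 1) (by norm_num)).differentiableAt (by norm_num)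
  refine ⟨fun t => fderiv ℝ w (x + t • ξ) ξ, ?_, by simp, ?_⟩
  · filter_upwards [hl0.eventually hd] with t ht
    exact ht.hasFDerivAt.comp_hasDerivAt t (hl t)
  · have h0 : HasFDerivAt (fderiv ℝ w) (fderiv ℝ (fderiv ℝ w) x) (x + (0 : ℝ) • ξ) := by
      simpa using hd2.hasFDerivAt
    have := h0.comp_hasDerivAt (0 : ℝ) (hl 0)
    simpa using this.clm_apply (hasDerivAt_const (0 : ℝ) ξ)

lemma HasD2.normSq {E : Type*} [NormedAddCommGroup E] [InnerProductSpace ℝ E] (z ξ : E) :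
    HasD2 (fun t : ℝ => ‖z + t • ξ‖ ^ 2) (2 * inner ℝ z ξ) (2 * ‖ξ‖ ^ 2) := by
  have : (fun t : ℝ => ‖z + t • ξ‖ ^ 2)
      = fun t => (‖z‖ ^ 2 + (2 * inner ℝ z ξ) * t) + ‖ξ‖ ^ 2 * (t * t) := by
    ext t
    rw [norm_add_sq_real, inner_smul_right, norm_smul, Real.norm_eq_abs, mul_pow, sq_abs]
    ring
  rw [this]
  exact (((HasD2.const _).add (HasD2.id.const_mul _)).add
    ((HasD2.id.mul HasD2.id).const_mul _)).congr (by ring) (by ring)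

/-- Necessary first and second order conditions at a local maximum. -/
lemma HasD2.max {g : ℝ → ℝ} {a b : ℝ} (h : HasD2 g a b) (hm : IsLocalMax g 0) :
    a = 0 ∧ b ≤ 0 := by
  obtain ⟨g', h1, h2, h3⟩ := h
  have ha : a = 0 := by
    rw [← h2]; exact hm.hasDerivAt_eq_zero h1.self_of_nhds
  refine ⟨ha, ?_⟩
  by_contra hb
  push Not at hb
  have hdd : deriv g =ᶠ[𝓝 0] g' := h1.mono fun t ht => ht.deriv
  have e1 : deriv (deriv g) 0 = b := by rw [hdd.deriv_eq]; exact h3.deriv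
  have hmin := isLocalMin_of_deriv_deriv_pos (f := g) (x₀ := 0) (by rw [e1]; exact hb)
    (by rw [hdd.self_of_nhds, h2, ha]) h1.self_of_nhds.continuousAt
  have hconst : g =ᶠ[𝓝 0] fun _ => g 0 := by
    filter_upwards [hm, hmin] with t u v using le_antisymm u v
  have : deriv (deriv g) 0 = 0 := by
    have h5 : deriv g =ᶠ[𝓝 0] fun _ => 0 := by
      have := hconst.deriv
      filter_upwards [this] with t ht
      rw [ht]; simp
    rw [h5.deriv_eq]; simp
  linarith

/-- The standard basis vectors of `ℝ^I`. -/
abbrev e (i : Fin I) : Euc I := EuclideanSpace.single i 1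

lemma pd2_eq {w : Euc I → ℝ} {x : Euc I} (hw : ContDiffAt ℝ 2 w x) (i : Fin I) :
    pd2 w i x = fderiv ℝ (fderiv ℝ w) x (e i) (e i) := by
  have hd2 : DifferentiableAt ℝ (fderiv ℝ w) x :=
    (hw.fderiv_right (m := 1) (by norm_num)).differentiableAt (by norm_num)
  have h := (hd2.hasFDerivAt.clm_apply (hasFDerivAt_const (e i) x)).fderiv
  unfold pd2 pd1
  rw [h]; simp

lemma HasD2.pd {w : Euc I → ℝ} {x : Euc I} (hw : ContDiffAt ℝ 2 w x) (i : Fin I) :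
    HasD2 (fun t : ℝ => w (x + t • e i)) (pd1 w i x) (pd2 w i x) := by
  rw [pd2_eq hw]; exact HasD2.line hw _

lemma IsLocalMax.line {E : Type*} [NormedAddCommGroup E] [NormedSpace ℝ E] {w : E → ℝ} {x : E}
    (hw : IsLocalMax w x) (ξ : E) : IsLocalMax (fun t : ℝ => w (x + t • ξ)) 0 := by
  have hl0 : Tendsto (fun t : ℝ => x + t • ξ) (𝓝 0) (𝓝 x) := by
    have : Continuous (fun t : ℝ => x + t • ξ) := by fun_prop
    simpa using this.tendsto 0
  have := hl0.eventually hw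
  simpa [IsLocalMax, IsMaxFilter] using this

lemma norm_e (i : Fin I) : ‖(e i : Euc I)‖ = 1 := by simp [e]

lemma inner_e (x : Euc I) (i : Fin I) : inner ℝ x (e i) = x i := by
  simp [e, EuclideanSpace.inner_single_right]

/-! ### Maximum principle -/

lemma abs_coord_le (x : Euc I) (i : Fin I) : |x i| ≤ ‖x‖ := by
  simpa using PiLp.norm_apply_le x i

/-- Maximum principle for the class `|Δv| ≤ ε (H + ∑|∂ᵢv| + ∑|∂ᵢᵢv|)`: the perturbation
`v + κ|x|²` with `κ > εH` has no interior maximum. -/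
lemma max_principle (hI : 0 < I) {ρ : ℝ} (hρ : 0 < ρ) (hρ1 : ρ ≤ 1) {v : Euc I → ℝ}
    (hc : ContinuousOn v (closedBall 0 ρ)) (hv : ∀ x ∈ ball (0 : Euc I) ρ, ContDiffAt ℝ 2 v x)
    {ε H m : ℝ} (hε : 0 ≤ ε) (hε1 : ε ≤ 1 / 8) (hH : 0 ≤ H)
    (heq : ∀ x ∈ ball (0 : Euc I) ρ,
      |∑ i, pd2 v i x| ≤ ε * (H + ∑ i, |pd1 v i x| + ∑ i, |pd2 v i x|))
    (hb : ∀ x, ‖x‖ = ρ → v x ≤ m) :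
    ∀ x ∈ closedBall (0 : Euc I) ρ, v x ≤ m + ε * H := by
  intro x hx
  refine le_of_forall_gt_imp_ge_of_dense fun k hk => ?_
  obtain ⟨κ, rfl⟩ : ∃ κ, k = m + κ := ⟨k - m, by ring⟩
  have hκ : ε * H < κ := by linarith
  have hκ0 : 0 < κ := lt_of_le_of_lt (mul_nonneg hε hH) hκ
  have hfc : ContinuousOn (fun x : Euc I => v x + κ * ‖x‖ ^ 2) (closedBall 0 ρ) :=
    hc.add (by fun_prop)
  obtain ⟨x0, hx0, hmax⟩ := (isCompact_closedBall (0 : Euc I) ρ).exists_isMaxOn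
    ⟨0, by simp [hρ.le]⟩ hfc
  have hx0' : ‖x0‖ ≤ ρ := by simpa using hx0
  have h1 : v x ≤ v x0 + κ * ‖x0‖ ^ 2 := by
    have h2 := hmax hx
    have h3 : 0 ≤ κ * ‖x‖ ^ 2 := by positivity
    simp only [Set.mem_ofPred_eq] at h2
    linarith
  rcases hx0'.eq_or_lt with hx1 | hx1
  · have h2 := hb x0 hx1
    have : κ * ‖x0‖ ^ 2 ≤ κ := by
      have : ‖x0‖ ^ 2 ≤ 1 := by rw [hx1]; nlinarith
      nlinarith
    linarith
  · exfalso
    have hxb : x0 ∈ ball (0 : Euc I) ρ := by simpa using hx1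
    have hloc : IsLocalMax (fun x : Euc I => v x + κ * ‖x‖ ^ 2) x0 :=
      hmax.isLocalMax (Filter.mem_of_superset (isOpen_ball.mem_nhds hxb) ball_subset_closedBall)
    have key : ∀ i, pd1 v i x0 = -(2 * κ * x0 i) ∧ pd2 v i x0 ≤ -(2 * κ) := by
      intro i
      have hd := (HasD2.pd (hv x0 hxb) i).add ((HasD2.normSq x0 (e i)).const_mul κ)
      obtain ⟨h2, h3⟩ := hd.max (IsLocalMax.line hloc (e i))
      rw [inner_e] at h2
      rw [norm_e] at h3
      constructor <;> linarith
    have hneg : ∀ i, |pd2 v i x0| = - pd2 v i x0 := fun i =>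
      abs_of_nonpos (by linarith [(key i).2])
    have hS : |∑ i, pd2 v i x0| = ∑ i, |pd2 v i x0| := by
      simp_rw [hneg, Finset.sum_neg_distrib]
      exact abs_of_nonpos (Finset.sum_nonpos fun i _ => by linarith [(key i).2])
    have hSge : 2 * κ * I ≤ ∑ i, |pd2 v i x0| := by
      calc 2 * κ * I = ∑ _i : Fin I, 2 * κ := by simp; ring
        _ ≤ _ := Finset.sum_le_sum fun i _ => by rw [hneg]; linarith [(key i).2]
    have hG : ∑ i, |pd1 v i x0| ≤ 2 * κ * I := by
      calc ∑ i, |pd1 v i x0| ≤ ∑ _i : Fin I, 2 * κ := Finset.sum_le_sum fun i _ => by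
            rw [(key i).1, abs_neg, abs_mul, abs_of_pos (by positivity : 0 < 2 * κ)]
            have := abs_coord_le x0 i
            nlinarith
        _ = _ := by simp; ring
    have h4 := heq x0 hxb
    rw [hS] at h4
    set S := ∑ i, |pd2 v i x0|
    have hI1 : (1 : ℝ) ≤ I := by exact_mod_cast hI
    have h5 : ε * (H + ∑ i, |pd1 v i x0| + S) ≤ ε * H + 1 / 8 * (S + S) := by
      have : ε * (∑ i, |pd1 v i x0| + S) ≤ ε * (S + S) :=
        mul_le_mul_of_nonneg_left (by linarith) hε
      have h6 : 0 ≤ S + S := by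
        have : 0 ≤ 2 * κ * I := by positivity
        linarith
      nlinarith
    nlinarith

/-! ### Interior Hölder estimate -/

/-- The class of functions with `|Δw| ≤ ε (1 + ∑|∂ᵢw| + ∑|∂ᵢᵢw|)` on `ball 0 2`, the
normalized form of an equation whose operator is within `ε` of the Laplacian. -/
def Near (ε : ℝ) (w : Euc I → ℝ) : Prop :=
  ∀ x ∈ ball (0 : Euc I) 2, |∑ i, pd2 w i x| ≤ ε * (1 + ∑ i, |pd1 w i x| + ∑ i, |pd2 w i x|)

/-- The trace of a bilinear form is invariant under the reflection `I - 2 p pᵀ`. -/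
lemma trace_reflect (B : Euc I →L[ℝ] Euc I →L[ℝ] ℝ) (p : Euc I) (hp : ‖p‖ = 1) :
    ∑ i, B (e i - (2 * p i) • p) (e i - (2 * p i) • p) = ∑ i, B (e i) (e i) := by
  have hexp : ∀ i, B (e i - (2 * p i) • p) (e i - (2 * p i) • p)
      = B (e i) (e i) - 2 * (B (p i • e i) p + B p (p i • e i))
        + 4 * (p i ^ 2) * B p p := by
    intro i
    simp only [map_sub, map_smul, _root_.sub_apply, _root_.smul_apply,
      smul_eq_mul]
    ring
  have hpsum : ∑ i, p i • (e i : Euc I) = p := by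
    ext j
    simp [e, Finset.sum_apply, Pi.single_apply]
  have hp2 : ∑ i, p i ^ 2 = 1 := by
    have := EuclideanSpace.real_norm_sq_eq p
    rw [hp] at this; linarith
  simp_rw [hexp, Finset.sum_add_distrib, Finset.sum_sub_distrib, ← Finset.mul_sum,
    Finset.sum_add_distrib, ← Finset.sum_mul]
  have h1 : ∑ i, B (p i • e i) p = B p p := by
    have h : (B (∑ i, p i • e i)) p = ∑ i, B (p i • e i) p := by
      rw [map_sum, _root_.sum_apply]
    rw [← h, hpsum]
  have h2 : ∑ i, B p (p i • e i) = B p p := by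
    rw [← map_sum, hpsum]
  rw [h1, h2, ← Finset.mul_sum, hp2]; ring

/-- The diagonal map `diag(s)` on `ℝ^I`. -/
def dg (s : Fin I → ℝ) : Euc I →L[ℝ] Euc I :=
  LinearMap.toContinuousLinearMap
    { toFun := fun x => WithLp.toLp 2 (fun i => s i * x i)
      map_add' := fun x y => by ext i; simp; ring
      map_smul' := fun c x => by ext i; simp; ring }

@[simp] lemma dg_apply (s : Fin I → ℝ) (x : Euc I) (i : Fin I) : dg s x i = s i * x i := rfl

lemma dg_e (s : Fin I → ℝ) (i : Fin I) : dg s (e i) = s i • (e i : Euc I) := by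
  ext j
  by_cases h : j = i
  · subst h; simp [e]
  · simp [e, h]

/-- First and second order conditions, along an arbitrary direction `(ξ, η)`, at a maximum of
`w x - w y - L |x - y|^{1/2} - K |x - x₀|²`. -/
lemma doubling {w : Euc I → ℝ} {x y x0 : Euc I} (hx : ContDiffAt ℝ 2 w x)
    (hy : ContDiffAt ℝ 2 w y) (hxy : x ≠ y) {L K A : ℝ}
    (hA : A = (‖x - y‖ ^ 2) ^ (-(3 / 4 : ℝ)))
    (hmax : IsLocalMax (fun q : Euc I × Euc I => w q.1 - w q.2
      - L * (‖q.1 - q.2‖ ^ 2) ^ (1 / 4 : ℝ) - K * ‖q.1 - x0‖ ^ 2) (x, y)) (ξ η : Euc I) :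
    fderiv ℝ w x ξ - fderiv ℝ w y η - L * (1 / 4 * A * (2 * inner ℝ (x - y) (ξ - η)))
      - K * (2 * inner ℝ (x - x0) ξ) = 0 ∧
    fderiv ℝ (fderiv ℝ w) x ξ ξ - fderiv ℝ (fderiv ℝ w) y η η
      - L * (-(3 / 16) * (A / ‖x - y‖ ^ 2) * (2 * inner ℝ (x - y) (ξ - η)) ^ 2
        + 1 / 4 * A * (2 * ‖ξ - η‖ ^ 2)) - K * (2 * ‖ξ‖ ^ 2) ≤ 0 := by
  have hr : 0 < ‖x - y‖ ^ 2 := by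
    have := norm_pos_iff.2 (sub_ne_zero.2 hxy); positivity
  have hN := HasD2.normSq (x - y) (ξ - η)
  have hf0 : ‖(x - y) + (0 : ℝ) • (ξ - η)‖ ^ 2 = ‖x - y‖ ^ 2 := by simp
  have hP := HasD2.comp (F := fun s => s ^ (1 / 4 : ℝ))
    (F' := fun s => 1 / 4 * s ^ (-(3 / 4 : ℝ))) (F1 := 1 / 4 * A)
    (F2 := -(3 / 16) * (A / ‖x - y‖ ^ 2)) hN
    (by
      rw [hf0]
      filter_upwards [lt_mem_nhds hr] with s hs
      have := Real.hasDerivAt_rpow_const (x := s) (p := 1 / 4) (Or.inl hs.ne')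
      refine this.congr_deriv ?_
      norm_num)
    (by rw [hf0, hA])
    (by
      rw [hf0]
      have := (Real.hasDerivAt_rpow_const (x := ‖x - y‖ ^ 2) (p := -(3 / 4))
        (Or.inl hr.ne')).const_mul (1 / 4 : ℝ)
      refine this.congr_deriv ?_
      rw [hA, Real.rpow_sub_one hr.ne']; ring)
  have hT := (((HasD2.line hx ξ).sub (HasD2.line hy η)).sub (hP.const_mul L)).sub
    ((HasD2.normSq (x - x0) ξ).const_mul K)
  have hm := IsLocalMax.line hmax (ξ, η)
  have hm' : IsLocalMax (fun t : ℝ => w (x + t • ξ) - w (y + t • η)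
      - L * (‖(x - y) + t • (ξ - η)‖ ^ 2) ^ (1 / 4 : ℝ) - K * ‖(x - x0) + t • ξ‖ ^ 2) 0 := by
    have heq : (fun t : ℝ => w (x + t • ξ) - w (y + t • η)
      - L * (‖(x - y) + t • (ξ - η)‖ ^ 2) ^ (1 / 4 : ℝ) - K * ‖(x - x0) + t • ξ‖ ^ 2)
      = fun t : ℝ => (fun q : Euc I × Euc I => w q.1 - w q.2
      - L * (‖q.1 - q.2‖ ^ 2) ^ (1 / 4 : ℝ) - K * ‖q.1 - x0‖ ^ 2) ((x, y) + t • (ξ, η)) := by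
      funext t
      have e1 : (x - y) + t • (ξ - η) = (x + t • ξ) - (y + t • η) := by rw [smul_sub]; abel
      have e2 : (x - x0) + t • ξ = (x + t • ξ) - x0 := by abel
      rw [e1, e2]; rfl
    rw [heq]; exact hm
  obtain ⟨h1, h2⟩ := hT.max hm'
  refine ⟨h1, ?_⟩
  refine le_trans (le_of_eq ?_) h2
  ring

lemma exists_sqrt_near {τ : ℝ} (h : |τ| ≤ 1 / 2) : ∃ s : ℝ, |s - 1| ≤ |τ| ∧ s ^ 2 = 1 + τ := by
  have h0 : 0 ≤ 1 + τ := by have := neg_abs_le τ; linarith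
  have hs := Real.sq_sqrt h0
  have hn := Real.sqrt_nonneg (1 + τ)
  refine ⟨√(1 + τ), ?_, hs⟩
  have : |√(1 + τ) - 1| * (√(1 + τ) + 1) = |τ| := by
    rw [← abs_of_nonneg (by linarith : 0 ≤ √(1 + τ) + 1), ← abs_mul]
    congr 1; nlinarith
  nlinarith [abs_nonneg (√(1 + τ) - 1)]

lemma exists_sqrt_pos {ε : ℝ} (hε : 0 ≤ ε) (h : ε ≤ 1 / 2) (q : ℝ) :
    ∃ s : ℝ, |s - 1| ≤ ε ∧ s ^ 2 * q = q + ε * |q| := by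
  rcases le_total 0 q with hq | hq
  · obtain ⟨s, h1, h2⟩ := exists_sqrt_near (τ := ε) (by rwa [abs_of_nonneg hε])
    rw [abs_of_nonneg hε] at h1
    exact ⟨s, h1, by rw [h2, abs_of_nonneg hq]; ring⟩
  · obtain ⟨s, h1, h2⟩ := exists_sqrt_near (τ := -ε) (by rwa [abs_neg, abs_of_nonneg hε])
    rw [abs_neg, abs_of_nonneg hε] at h1
    exact ⟨s, h1, by rw [h2, abs_of_nonpos hq]; ring⟩

/-- With the second point moved by the reflected increments, the directions `ξᵢ - ηᵢ`
concentrate on the line through the two points, where `|z|^{1/2}` is strictly concave. -/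
lemma coupling_estimate (hI : 0 < I) {ε : ℝ} (hε : 0 ≤ ε) (hεI : ε * I ≤ 1 / 100)
    {s t : Fin I → ℝ} (hs : ∀ i, |s i - 1| ≤ ε) (ht : ∀ i, |t i - 1| ≤ ε) {p : Euc I}
    (hp : ‖p‖ = 1) :
    ∑ i, ‖s i • (e i : Euc I) - dg t (e i - (2 * p i) • p)‖ ^ 2
      - 3 / 2 * ∑ i, (inner ℝ p (s i • (e i : Euc I) - dg t (e i - (2 * p i) • p))) ^ 2 ≤ -1 := by
  have hI1 : (1 : ℝ) ≤ I := by exact_mod_cast hI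
  have hε1 : ε ≤ 1 / 100 := by nlinarith
  have hp2 : ∑ i, p i ^ 2 = 1 := by
    have := EuclideanSpace.real_norm_sq_eq p
    rw [hp] at this; linarith
  have hδ : ∀ i, s i • (e i : Euc I) - dg t (e i - (2 * p i) • p)
      = (s i - t i) • (e i : Euc I) + (2 * p i) • dg t p := by
    intro i
    rw [map_sub, dg_e, map_smul, sub_smul]; abel
  have hst : ∀ i, |s i - t i| ≤ 2 * ε := fun i => by
    have h1 := abs_le.1 (hs i); have h2 := abs_le.1 (ht i)
    rw [abs_le]; constructor <;> linarith
  have ht1 : ∀ i, 1 - ε ≤ t i ∧ t i ≤ 1 + ε := fun i => by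
    have h2 := abs_le.1 (ht i); constructor <;> linarith
  have hTp : ‖dg t p‖ ^ 2 ≤ (1 + ε) ^ 2 := by
    rw [EuclideanSpace.real_norm_sq_eq]
    calc ∑ i, (dg t p i) ^ 2 ≤ ∑ i, (1 + ε) ^ 2 * p i ^ 2 := Finset.sum_le_sum fun i _ => by
          rw [dg_apply, mul_pow]
          have := ht1 i
          exact mul_le_mul_of_nonneg_right (by nlinarith) (sq_nonneg _)
      _ = (1 + ε) ^ 2 := by rw [← Finset.mul_sum, hp2, mul_one]
  have hpT : 1 - ε ≤ inner ℝ p (dg t p) := by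
    have : inner ℝ p (dg t p) = ∑ i, t i * p i ^ 2 := by
      rw [PiLp.inner_apply]; exact Finset.sum_congr rfl fun i _ => by simp; ring
    rw [this]
    calc 1 - ε = ∑ i, (1 - ε) * p i ^ 2 := by rw [← Finset.mul_sum, hp2, mul_one]
      _ ≤ _ := Finset.sum_le_sum fun i _ =>
        mul_le_mul_of_nonneg_right (ht1 i).1 (sq_nonneg _)
  have h1 : ∀ i, ‖s i • (e i : Euc I) - dg t (e i - (2 * p i) • p)‖ ^ 2
      ≤ 4 * ε ^ 2 + (8 * ε * (1 + ε) + 4 * (1 + ε) ^ 2) * p i ^ 2 := by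
    intro i
    rw [hδ, norm_add_sq_real, norm_smul, norm_smul, norm_e, mul_one, inner_smul_left,
      inner_smul_right, real_inner_comm, inner_e, dg_apply]
    simp only [Real.norm_eq_abs, mul_pow, sq_abs, conj_trivial]
    have a1 : (s i - t i) ^ 2 ≤ 4 * ε ^ 2 := by
      rw [← sq_abs]; nlinarith [hst i, abs_nonneg (s i - t i)]
    have a2 : (s i - t i) * t i ≤ 2 * ε * (1 + ε) := by
      have := ht1 i
      calc (s i - t i) * t i ≤ |s i - t i| * t i :=
            mul_le_mul_of_nonneg_right (le_abs_self _) (by linarith)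
        _ ≤ _ := mul_le_mul (hst i) this.2 (by linarith) (by linarith)
    have a3 : 0 ≤ p i ^ 2 := sq_nonneg _
    nlinarith [mul_le_mul_of_nonneg_right a2 a3, mul_le_mul_of_nonneg_right hTp a3]
  have h2 : ∀ i, (2 - 4 * ε) ^ 2 * p i ^ 2
      ≤ (inner ℝ p (s i • (e i : Euc I) - dg t (e i - (2 * p i) • p))) ^ 2 := by
    intro i
    have : inner ℝ p (s i • (e i : Euc I) - dg t (e i - (2 * p i) • p))
        = (s i - t i + 2 * inner ℝ p (dg t p)) * p i := by
      rw [hδ, inner_add_right, inner_smul_right, inner_smul_right, inner_e]; ring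
    rw [this, mul_pow]
    refine mul_le_mul_of_nonneg_right ?_ (sq_nonneg _)
    have := (abs_le.1 (hst i)).1
    nlinarith
  have h3 : ∑ i, ‖s i • (e i : Euc I) - dg t (e i - (2 * p i) • p)‖ ^ 2
      ≤ 4 * ε ^ 2 * I + (8 * ε * (1 + ε) + 4 * (1 + ε) ^ 2) := by
    refine (Finset.sum_le_sum fun i _ => h1 i).trans (le_of_eq ?_)
    rw [Finset.sum_add_distrib, Finset.sum_const, ← Finset.mul_sum, hp2]; simp; ring
  have h4 : (2 - 4 * ε) ^ 2
      ≤ ∑ i, (inner ℝ p (s i • (e i : Euc I) - dg t (e i - (2 * p i) • p))) ^ 2 := by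
    refine le_trans (le_of_eq ?_) (Finset.sum_le_sum fun i _ => h2 i)
    rw [← Finset.mul_sum, hp2, mul_one]
  nlinarith

set_option maxHeartbeats 1000000 in
/-- Interior Hölder estimate with exponent `1/2`, by doubling of variables. -/
lemma holder_estimate (hI : 0 < I) {ε : ℝ} (hε : 0 ≤ ε) (hεI : ε * I ≤ 1 / 100)
    {w : Euc I → ℝ} (hw : ContDiffOn ℝ 2 w (ball 0 2)) (hw1 : ∀ x ∈ ball (0 : Euc I) 2, |w x| ≤ 1)
    (hn : Near ε w) {x0 y0 : Euc I} (hx0 : ‖x0‖ ≤ 1) (hy0 : ‖y0‖ ≤ 1) :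
    w x0 - w y0 ≤ (100 * I + 8) * (‖x0 - y0‖ ^ 2) ^ (1 / 4 : ℝ) := by
  have hI1 : (1 : ℝ) ≤ I := by exact_mod_cast hI
  have hε1 : ε ≤ 1 / 100 := by nlinarith
  set L : ℝ := 100 * I + 8 with hL
  set Ψ : Euc I × Euc I → ℝ := fun q => w q.1 - w q.2
      - L * (‖q.1 - q.2‖ ^ 2) ^ (1 / 4 : ℝ) - 8 * ‖q.1 - x0‖ ^ 2 with hΨ
  have hcd : ∀ x : Euc I, ‖x‖ < 2 → ContDiffAt ℝ 2 w x := fun x hx =>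
    hw.contDiffAt (isOpen_ball.mem_nhds (by simpa using hx))
  have hsub : closedBall (0 : Euc I) (7 / 4) ⊆ ball 0 2 := closedBall_subset_ball (by norm_num)
  have hcomp : IsCompact (closedBall (0 : Euc I) (7 / 4) ×ˢ closedBall (0 : Euc I) (7 / 4)) :=
    (isCompact_closedBall _ _).prod (isCompact_closedBall _ _)
  have hcont : ContinuousOn Ψ (closedBall (0 : Euc I) (7 / 4) ×ˢ closedBall (0 : Euc I) (7 / 4)) := by
    have hwc := hw.continuousOn.mono hsub
    have c1 : ContinuousOn (fun q : Euc I × Euc I => w q.1)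
        (closedBall (0 : Euc I) (7 / 4) ×ˢ closedBall (0 : Euc I) (7 / 4)) :=
      hwc.comp continuousOn_fst (fun q hq => hq.1)
    have c2 : ContinuousOn (fun q : Euc I × Euc I => w q.2)
        (closedBall (0 : Euc I) (7 / 4) ×ˢ closedBall (0 : Euc I) (7 / 4)) :=
      hwc.comp continuousOn_snd (fun q hq => hq.2)
    have c3 : Continuous (fun q : Euc I × Euc I => (‖q.1 - q.2‖ ^ 2) ^ (1 / 4 : ℝ)) :=
      Continuous.rpow_const (by fun_prop) (fun _ => Or.inr (by norm_num))
    exact ((c1.sub c2).sub (continuous_const.mul c3).continuousOn).sub (by fun_prop)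
  obtain ⟨⟨x, y⟩, hxy, hmax⟩ := hcomp.exists_isMaxOn
    ⟨(0, 0), by simp; norm_num⟩ hcont
  have hx : ‖x‖ ≤ 7 / 4 := by simpa using hxy.1
  have hy : ‖y‖ ≤ 7 / 4 := by simpa using hxy.2
  have hwx := abs_le.1 (hw1 x (hsub hxy.1))
  have hwy := abs_le.1 (hw1 y (hsub hxy.2))
  suffices hneg : Ψ (x, y) ≤ 0 by
    have h1 : Ψ (x0, y0) ≤ Ψ (x, y) := hmax ⟨by simp; linarith, by simp; linarith⟩
    have h2 : Ψ (x0, y0) = w x0 - w y0 - L * (‖x0 - y0‖ ^ 2) ^ (1 / 4 : ℝ) := by simp [hΨ]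
    linarith
  by_contra hpos
  push Not at hpos
  have hpos' : 0 < w x - w y - L * (‖x - y‖ ^ 2) ^ (1 / 4 : ℝ) - 8 * ‖x - x0‖ ^ 2 := hpos
  have hL0 : 0 < L := by positivity
  have hrp : 0 ≤ (‖x - y‖ ^ 2) ^ (1 / 4 : ℝ) := by positivity
  have hne : x ≠ y := by
    rintro rfl
    have : 0 ≤ 8 * ‖x - x0‖ ^ 2 := by positivity
    have := mul_nonneg hL0.le hrp
    linarith
  have hxx0 : ‖x - x0‖ < 1 / 2 := by
    by_contra h
    push Not at h
    have := mul_nonneg hL0.le hrp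
    nlinarith
  have hr : ‖x - y‖ < 1 / 4 := by
    by_contra h
    push Not at h
    have h1 : (1 / 2 : ℝ) ≤ (‖x - y‖ ^ 2) ^ (1 / 4 : ℝ) := by
      have h2 : ((1 / 2 : ℝ) ^ 4) ^ (1 / 4 : ℝ) ≤ (‖x - y‖ ^ 2) ^ (1 / 4 : ℝ) :=
        Real.rpow_le_rpow (by norm_num) (by nlinarith) (by norm_num)
      rw [← Real.rpow_natCast, ← Real.rpow_mul (by norm_num)] at h2
      norm_num at h2 ⊢
      exact h2
    have : 0 ≤ 8 * ‖x - x0‖ ^ 2 := by positivity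
    nlinarith
  have hx' : ‖x‖ < 3 / 2 := by
    have := norm_add_le (x - x0) x0
    rw [sub_add_cancel] at this; linarith
  have hy' : ‖y‖ < 7 / 4 := by
    have := norm_sub_le x (x - y)
    rw [sub_sub_cancel] at this; linarith
  have hloc : IsLocalMax Ψ (x, y) := by
    refine hmax.isLocalMax ?_
    rw [nhds_prod_eq]
    exact Filter.prod_mem_prod
      (Filter.mem_of_superset (isOpen_ball.mem_nhds (by simp; linarith : x ∈ ball (0 : Euc I) (7 / 4)))
        ball_subset_closedBall)
      (Filter.mem_of_superset (isOpen_ball.mem_nhds (by simpa using hy' : y ∈ ball (0 : Euc I) (7 / 4)))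
        ball_subset_closedBall)
  have hcx := hcd x (by linarith)
  have hcy := hcd y (by linarith)
  set r := ‖x - y‖ with hrdef
  have hr0 : 0 < r := norm_pos_iff.2 (sub_ne_zero.2 hne)
  set A : ℝ := (r ^ 2) ^ (-(3 / 4 : ℝ)) with hA
  have hD := fun ξ η => doubling hcx hcy hne (hA : A = (‖x - y‖ ^ 2) ^ (-(3 / 4 : ℝ))) hloc ξ η
  have hA1 : 1 ≤ A := Real.one_le_rpow_of_pos_of_le_one_of_nonpos (by positivity) (by nlinarith)
    (by norm_num)
  set p : Euc I := r⁻¹ • (x - y) with hp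
  have hpn : ‖p‖ = 1 := by
    rw [hp, norm_smul, norm_inv, norm_norm]; exact inv_mul_cancel₀ hr0.ne'
  have hz : x - y = r • p := by rw [hp, smul_smul, mul_inv_cancel₀ hr0.ne', one_smul]
  -- bounds on the gradients at the two points
  have hgx : ∀ i, |pd1 w i x| ≤ L * A / 2 + 8 := by
    intro i
    have h1 := (hD (e i) 0).1
    rw [map_zero, sub_zero, sub_zero, inner_e, inner_e] at h1
    have h2 : pd1 w i x = L * A / 2 * (x - y) i + 16 * (x - x0) i := by
      unfold pd1; linarith
    have h3 := (abs_coord_le (x - y) i).trans (hr.le.trans (by norm_num : (1 / 4 : ℝ) ≤ 1))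
    have h4 := (abs_coord_le (x - x0) i).trans hxx0.le
    rw [h2]
    refine (abs_add_le _ _).trans ?_
    rw [abs_mul, abs_mul, abs_of_nonneg (by positivity : 0 ≤ L * A / 2)]
    have : L * A / 2 * |(x - y) i| ≤ L * A / 2 * 1 :=
      mul_le_mul_of_nonneg_left h3 (by positivity)
    rw [abs_of_pos (by norm_num : (0:ℝ) < 16)]
    linarith
  have hgy : ∀ i, |pd1 w i y| ≤ L * A / 2 + 8 := by
    intro i
    have h1 := (hD 0 (e i)).1
    rw [map_zero, zero_sub, zero_sub, inner_neg_right, inner_e, inner_zero_right] at h1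
    have h2 : pd1 w i y = L * A / 2 * (x - y) i := by
      unfold pd1; linarith
    have h3 := (abs_coord_le (x - y) i).trans (hr.le.trans (by norm_num : (1 / 4 : ℝ) ≤ 1))
    rw [h2, abs_mul, abs_of_nonneg (by positivity : 0 ≤ L * A / 2)]
    have : L * A / 2 * |(x - y) i| ≤ L * A / 2 * 1 :=
      mul_le_mul_of_nonneg_left h3 (by positivity)
    linarith
  -- diagonal matrices whose squares turn the inequality for `Δw` into one-sided inequalities
  choose s hs1 hs2 using fun i => exists_sqrt_pos hε (by linarith) (pd2 w i x)
  choose t ht1 ht2 using fun i => exists_sqrt_pos hε (by linarith) (-pd2 w i y)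
  have hsum : ∑ i, (fderiv ℝ (fderiv ℝ w) x (s i • e i) (s i • e i)
      - fderiv ℝ (fderiv ℝ w) y (dg t (e i - (2 * p i) • p)) (dg t (e i - (2 * p i) • p))
      - L * (-(3 / 16) * (A / r ^ 2) *
            (2 * inner ℝ (x - y) (s i • e i - dg t (e i - (2 * p i) • p))) ^ 2
        + 1 / 4 * A * (2 * ‖s i • e i - dg t (e i - (2 * p i) • p)‖ ^ 2))
      - 8 * (2 * ‖s i • (e i : Euc I)‖ ^ 2)) ≤ 0 :=
    Finset.sum_nonpos fun i _ => (hD (s i • e i) (dg t (e i - (2 * p i) • p))).2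
  have hX : ∑ i, fderiv ℝ (fderiv ℝ w) x (s i • e i) (s i • e i)
      = ∑ i, pd2 w i x + ε * ∑ i, |pd2 w i x| := by
    rw [Finset.mul_sum, ← Finset.sum_add_distrib]
    refine Finset.sum_congr rfl fun i _ => ?_
    rw [← hs2, pd2_eq hcx]
    simp only [map_smul, _root_.smul_apply, smul_eq_mul]; ring
  have hY : ∑ i, fderiv ℝ (fderiv ℝ w) y (dg t (e i - (2 * p i) • p)) (dg t (e i - (2 * p i) • p))
      = ∑ i, pd2 w i y - ε * ∑ i, |pd2 w i y| := by
    have h1 := trace_reflect ((fderiv ℝ (fderiv ℝ w) y).bilinearComp (dg t) (dg t)) p hpn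
    simp only [ContinuousLinearMap.bilinearComp_apply] at h1
    rw [h1, Finset.mul_sum, ← Finset.sum_sub_distrib]
    refine Finset.sum_congr rfl fun i _ => ?_
    have h2 := ht2 i
    rw [abs_neg] at h2
    rw [dg_e, (by linarith : pd2 w i y - ε * |pd2 w i y| = t i ^ 2 * pd2 w i y), pd2_eq hcy]
    simp only [map_smul, _root_.smul_apply, smul_eq_mul]; ring
  have hS : ∑ i, ‖s i • (e i : Euc I)‖ ^ 2 ≤ 2 * I := by
    calc ∑ i, ‖s i • (e i : Euc I)‖ ^ 2 ≤ ∑ _i : Fin I, (2 : ℝ) := Finset.sum_le_sum fun i _ => by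
          rw [norm_smul, norm_e, mul_one, Real.norm_eq_abs, sq_abs]
          have := abs_le.1 (hs1 i)
          nlinarith
      _ = _ := by simp; ring
  have hC := coupling_estimate hI hε hεI hs1 ht1 hpn
  have hmid : ∑ i, (L * (-(3 / 16) * (A / r ^ 2) *
            (2 * inner ℝ (x - y) (s i • e i - dg t (e i - (2 * p i) • p))) ^ 2
        + 1 / 4 * A * (2 * ‖s i • e i - dg t (e i - (2 * p i) • p)‖ ^ 2)))
      = L * A / 2 * (∑ i, ‖s i • (e i : Euc I) - dg t (e i - (2 * p i) • p)‖ ^ 2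
      - 3 / 2 * ∑ i, (inner ℝ p (s i • (e i : Euc I) - dg t (e i - (2 * p i) • p))) ^ 2) := by
    rw [Finset.mul_sum, ← Finset.sum_sub_distrib, Finset.mul_sum]
    refine Finset.sum_congr rfl fun i _ => ?_
    rw [hz, inner_smul_left]
    simp only [conj_trivial]
    field_simp
    ring
  rw [Finset.sum_sub_distrib, Finset.sum_sub_distrib, Finset.sum_sub_distrib, hX, hY, hmid,
    ← Finset.mul_sum, ← Finset.mul_sum] at hsum
  have hnx := (abs_le.1 (hn x (by simp; linarith))).1
  have hny := (abs_le.1 (hn y (by simp; linarith))).2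
  have hgxs : ∑ i, |pd1 w i x| ≤ I * (L * A / 2 + 8) := by
    refine (Finset.sum_le_sum fun i _ => hgx i).trans (le_of_eq ?_); simp [mul_add]
  have hgys : ∑ i, |pd1 w i y| ≤ I * (L * A / 2 + 8) := by
    refine (Finset.sum_le_sum fun i _ => hgy i).trans (le_of_eq ?_); simp [mul_add]
  have hLA : L ≤ L * A := by nlinarith
  have h5 : L * A / 2 * (∑ i, ‖s i • (e i : Euc I) - dg t (e i - (2 * p i) • p)‖ ^ 2
      - 3 / 2 * ∑ i, (inner ℝ p (s i • (e i : Euc I) - dg t (e i - (2 * p i) • p))) ^ 2)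
      ≤ L * A / 2 * (-1) := mul_le_mul_of_nonneg_left hC (by positivity)
  have h6 : ε * (∑ i, |pd1 w i x| + ∑ i, |pd1 w i y|) ≤ ε * (2 * (I * (L * A / 2 + 8))) :=
    mul_le_mul_of_nonneg_left (by linarith) hε
  have h7 : ε * (2 * (I * (L * A / 2 + 8))) ≤ 1 / 100 * (2 * (L * A / 2 + 8)) := by
    have : ε * I * (2 * (L * A / 2 + 8)) ≤ 1 / 100 * (2 * (L * A / 2 + 8)) :=
      mul_le_mul_of_nonneg_right hεI (by positivity)
    linarith
  have hS8 : 0 ≤ L * A := by positivity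
  have hε0 : ε * 2 ≤ 1 := by linarith
  rw [mul_add, mul_add] at hnx hny
  rw [mul_add] at h6
  linarith

/-! ### Harmonic polynomials and the Dirichlet problem -/

open MvPolynomial in
/-- The function on `ℝ^I` defined by a polynomial. -/
def pf (p : MvPolynomial (Fin I) ℝ) (x : Euc I) : ℝ := eval (fun i => x i) p

lemma pf_add (p q : MvPolynomial (Fin I) ℝ) (x : Euc I) : pf (p + q) x = pf p x + pf q x := by
  simp [pf]

lemma pf_sub (p q : MvPolynomial (Fin I) ℝ) (x : Euc I) : pf (p - q) x = pf p x - pf q x := by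
  simp [pf]

lemma pf_mul (p q : MvPolynomial (Fin I) ℝ) (x : Euc I) : pf (p * q) x = pf p x * pf q x := by
  simp [pf]

lemma pf_C (a : ℝ) (x : Euc I) : pf (MvPolynomial.C a) x = a := by simp [pf]

lemma pf_X (i : Fin I) (x : Euc I) : pf (MvPolynomial.X i) x = x i := by simp [pf]

lemma pf_sum {ι : Type*} (s : Finset ι) (p : ι → MvPolynomial (Fin I) ℝ) (x : Euc I) :
    pf (∑ j ∈ s, p j) x = ∑ j ∈ s, pf (p j) x := by simp [pf]

lemma pf_contDiff (p : MvPolynomial (Fin I) ℝ) {n : WithTop ℕ∞} : ContDiff ℝ n (pf p) := by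
  induction p using MvPolynomial.induction_on with
  | C a => rw [show pf (MvPolynomial.C a) = fun _ : Euc I => a from funext (pf_C a)]
           exact contDiff_const
  | add p q hp hq =>
    rw [show pf (p + q) = fun x : Euc I => pf p x + pf q x from funext (pf_add p q)]
    exact hp.add hq
  | mul_X p i hp =>
    rw [show pf (p * MvPolynomial.X i) = fun x : Euc I => pf p x * x i from
      funext fun x => by rw [pf_mul, pf_X]]
    exact hp.mul (EuclideanSpace.proj (𝕜 := ℝ) i : Euc I →L[ℝ] ℝ).contDiff

lemma pf_diff (p : MvPolynomial (Fin I) ℝ) : Differentiable ℝ (pf p) :=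
  (pf_contDiff p (n := 1)).differentiable (by norm_num)

lemma pd1_pf (p : MvPolynomial (Fin I) ℝ) (i : Fin I) :
    pd1 (pf p) i = pf (MvPolynomial.pderiv i p) := by
  funext x
  induction p using MvPolynomial.induction_on with
  | C a =>
    have : pf (MvPolynomial.C a) = fun _ : Euc I => a := funext fun x => pf_C a x
    rw [pd1, this, MvPolynomial.pderiv_C]
    simp [pf]
  | add p q hp hq =>
    have : pf (p + q) = fun x : Euc I => pf p x + pf q x := funext fun x => pf_add p q x
    unfold pd1 at *
    rw [this, fderiv_fun_add (pf_diff p x) (pf_diff q x), map_add, pf_add, ← hp, ← hq]; rfl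
  | mul_X p j hp =>
    have : pf (p * MvPolynomial.X j) = fun x : Euc I => pf p x * x j :=
      funext fun x => by rw [pf_mul, pf_X]
    have hj : HasFDerivAt (fun x : Euc I => x j) (EuclideanSpace.proj (𝕜 := ℝ) j : Euc I →L[ℝ] ℝ) x :=
      (EuclideanSpace.proj (𝕜 := ℝ) j : Euc I →L[ℝ] ℝ).hasFDerivAt
    have h := ((pf_diff p x).hasFDerivAt.fun_mul hj).fderiv
    unfold pd1 at *
    rw [this, h, Derivation.leibniz, MvPolynomial.pderiv_X, pf_add, smul_eq_mul, smul_eq_mul,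
      pf_mul, pf_mul, ← hp, pf_X]
    by_cases hij : i = j
    · subst hij; simp [pf]
    · simp [pf, Ne.symm hij]

lemma pd2_pf (p : MvPolynomial (Fin I) ℝ) (i : Fin I) :
    pd2 (pf p) i = pf (MvPolynomial.pderiv i (MvPolynomial.pderiv i p)) := by
  rw [← pd1_pf, ← pd1_pf]; rfl

/-- The Laplacian on polynomials. -/
def lap : MvPolynomial (Fin I) ℝ →ₗ[ℝ] MvPolynomial (Fin I) ℝ :=
  ∑ i, (MvPolynomial.pderiv i).toLinearMap ∘ₗ (MvPolynomial.pderiv i).toLinearMap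

lemma lap_apply (p : MvPolynomial (Fin I) ℝ) :
    lap p = ∑ i, MvPolynomial.pderiv i (MvPolynomial.pderiv i p) := by
  simp [lap, LinearMap.sum_apply]

lemma sum_pd2_pf (p : MvPolynomial (Fin I) ℝ) (x : Euc I) :
    ∑ i, pd2 (pf p) i x = pf (lap p) x := by
  rw [lap_apply, pf_sum]; exact Finset.sum_congr rfl fun i _ => by rw [pd2_pf]

lemma pderiv_comm' (p : MvPolynomial (Fin I) ℝ) (i j : Fin I) :
    MvPolynomial.pderiv i (MvPolynomial.pderiv j p)
      = MvPolynomial.pderiv j (MvPolynomial.pderiv i p) := by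
  induction p using MvPolynomial.induction_on with
  | C a => simp
  | add p q hp hq => simp [hp, hq]
  | mul_X p k hp =>
    simp only [Derivation.leibniz, MvPolynomial.pderiv_X, map_add, smul_eq_mul, hp]
    have : ∀ a b : Fin I, MvPolynomial.pderiv a
        ((Pi.single b 1 : Fin I → MvPolynomial (Fin I) ℝ) k) = 0 := fun a b => by
      by_cases h : k = b
      · subst h; simp
      · simp [h]
    rw [this, this]; ring

lemma lap_pderiv {p : MvPolynomial (Fin I) ℝ} (hp : lap p = 0) (i : Fin I) :
    lap (MvPolynomial.pderiv i p) = 0 := by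
  have : lap (MvPolynomial.pderiv i p) = MvPolynomial.pderiv i (lap p) := by
    rw [lap_apply, lap_apply, map_sum]
    refine Finset.sum_congr rfl fun j _ => ?_
    rw [pderiv_comm' p j i, pderiv_comm' _ j i]
  rw [this, hp, map_zero]

lemma totalDegree_pderiv {p : MvPolynomial (Fin I) ℝ} {k : ℕ} (hp : p.totalDegree ≤ k + 1)
    (i : Fin I) : (MvPolynomial.pderiv i p).totalDegree ≤ k := by
  rw [← MvPolynomial.mem_restrictTotalDegree, ← MvPolynomial.support_sum_monomial_coeff p, map_sum]
  refine Submodule.sum_mem _ fun s hs => ?_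
  rw [MvPolynomial.pderiv_monomial, MvPolynomial.mem_restrictTotalDegree]
  by_cases hsi : s i = 0
  · simp [hsi]
  · refine (MvPolynomial.totalDegree_monomial_le _ _).trans ?_
    have h1 := (MvPolynomial.le_totalDegree hs).trans hp
    have h2 : s - Finsupp.single i 1 + Finsupp.single i 1 = s :=
      tsub_add_cancel_of_le (by simpa using Nat.one_le_iff_ne_zero.2 hsi)
    have h3 : (s - Finsupp.single i 1 + Finsupp.single i 1).sum (fun _ e => e)
        = (s - Finsupp.single i 1).sum (fun _ e => e) + 1 := by
      rw [Finsupp.sum_add_index' (by simp) (by simp)]; simp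
    rw [h2] at h3
    change (s - Finsupp.single i 1).sum (fun _ e => e) ≤ k
    omega

/-- The polynomial `1 - |x|²`. -/
def bd : MvPolynomial (Fin I) ℝ := 1 - ∑ i, MvPolynomial.X i * MvPolynomial.X i

lemma pf_bd (x : Euc I) : pf bd x = 1 - ‖x‖ ^ 2 := by
  rw [EuclideanSpace.real_norm_sq_eq, bd, pf_sub, pf_sum]
  simp [pf, sq]

lemma totalDegree_bd : (bd : MvPolynomial (Fin I) ℝ).totalDegree ≤ 2 := by
  rw [← MvPolynomial.mem_restrictTotalDegree, bd]
  refine Submodule.sub_mem _ ?_ (Submodule.sum_mem _ fun i _ => ?_)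
  · rw [MvPolynomial.mem_restrictTotalDegree]; simp
  · rw [MvPolynomial.mem_restrictTotalDegree]
    refine (MvPolynomial.totalDegree_mul _ _).trans ?_
    simp

lemma totalDegree_lap_bd {q : MvPolynomial (Fin I) ℝ} {k : ℕ} (hq : q.totalDegree ≤ k) :
    (lap (bd * q)).totalDegree ≤ k := by
  have h : (bd * q).totalDegree ≤ k + 1 + 1 :=
    (MvPolynomial.totalDegree_mul _ _).trans (by have := totalDegree_bd (I := I); omega)
  rw [← MvPolynomial.mem_restrictTotalDegree, lap_apply]
  refine Submodule.sum_mem _ fun i _ => ?_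
  rw [MvPolynomial.mem_restrictTotalDegree]
  exact totalDegree_pderiv (totalDegree_pderiv h i) i

/-- Maximum principle for harmonic polynomials. -/
lemma harmonic_le (hI : 0 < I) {ρ : ℝ} (hρ : 0 < ρ) (hρ1 : ρ ≤ 1) {p : MvPolynomial (Fin I) ℝ}
    (hp : lap p = 0) {m : ℝ} (hb : ∀ x, ‖x‖ = ρ → pf p x ≤ m) :
    ∀ x ∈ closedBall (0 : Euc I) ρ, pf p x ≤ m := by
  have := max_principle hI hρ hρ1 (v := pf p) (ε := 0) (H := 0) (m := m)
    (pf_contDiff p (n := 0)).continuous.continuousOn (fun x _ => (pf_contDiff p).contDiffAt) le_rfl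
    (by norm_num) le_rfl (fun x _ => by rw [sum_pd2_pf, hp]; simp [pf]) hb
  simpa using this

lemma pf_neg (p : MvPolynomial (Fin I) ℝ) (x : Euc I) : pf (-p) x = - pf p x := by
  simp [pf]

lemma lap_bd_injective (hI : 0 < I) {q : MvPolynomial (Fin I) ℝ} (h : lap (bd * q) = 0) :
    q = 0 := by
  have h1 : ∀ x ∈ closedBall (0 : Euc I) 1, pf (bd * q) x ≤ 0 :=
    harmonic_le hI one_pos le_rfl h fun x hx => by rw [pf_mul, pf_bd, hx]; simp
  have h2 : ∀ x ∈ closedBall (0 : Euc I) 1, pf (-(bd * q)) x ≤ 0 :=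
    harmonic_le hI one_pos le_rfl (by rw [map_neg, h, neg_zero])
      fun x hx => by rw [pf_neg, pf_mul, pf_bd, hx]; simp
  have h3 : ∀ x : Euc I, ‖x‖ < 1 → pf q x = 0 := fun x hx => by
    have a1 := h1 x (by simpa using hx.le)
    have a2 := h2 x (by simpa using hx.le)
    rw [pf_neg] at a2
    have a3 : pf bd x * pf q x = 0 := by rw [← pf_mul]; linarith
    rcases mul_eq_zero.1 a3 with a4 | a4
    · rw [pf_bd] at a4; nlinarith [norm_nonneg x]
    · exact a4
  refine MvPolynomial.funext_set (fun _ => Set.Ioo (0 : ℝ) (1 / (I + 1)))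
    (fun i => Set.Ioo_infinite (by positivity)) fun x hx => ?_
  rw [map_zero]
  refine h3 (WithLp.toLp 2 x) ?_
  have hx' : ∀ i, 0 < x i ∧ x i < 1 / (I + 1) := fun i => hx i (Set.mem_univ i)
  have hI1 : (1 : ℝ) ≤ I := by exact_mod_cast hI
  have h4 : ‖(WithLp.toLp 2 x : Euc I)‖ ^ 2 < 1 := by
    rw [EuclideanSpace.real_norm_sq_eq]
    calc ∑ i, x i ^ 2 ≤ ∑ _i : Fin I, (1 / ((I : ℝ) + 1)) := Finset.sum_le_sum fun i _ => by
          have := hx' i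
          have h5 : 1 / ((I : ℝ) + 1) ≤ 1 := by rw [div_le_one (by positivity)]; linarith
          nlinarith
      _ = I / (I + 1) := by simp; ring
      _ < 1 := by rw [div_lt_one (by positivity)]; linarith
  nlinarith [norm_nonneg (WithLp.toLp 2 x : Euc I)]

/-- Every polynomial agrees on the unit sphere with a harmonic polynomial: the map
`q ↦ Δ((1 - |x|²) q)` is injective on the finite-dimensional space of polynomials of degree at
most `k`, hence onto. -/
lemma exists_harmonic (hI : 0 < I) (p : MvPolynomial (Fin I) ℝ) :
    ∃ h : MvPolynomial (Fin I) ℝ, lap h = 0 ∧ ∀ x : Euc I, ‖x‖ = 1 → pf h x = pf p x := by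
  set k := p.totalDegree + 1 with hk
  let V := MvPolynomial.restrictTotalDegree (Fin I) ℝ k
  let T : V →ₗ[ℝ] V := LinearMap.restrict (lap ∘ₗ LinearMap.mulLeft ℝ bd) (fun q hq => by
    rw [MvPolynomial.mem_restrictTotalDegree] at hq ⊢
    exact totalDegree_lap_bd hq)
  have hT : Function.Injective T := by
    rw [← LinearMap.ker_eq_bot, LinearMap.ker_eq_bot']
    intro q hq
    have : lap (bd * q.1) = 0 := congrArg Subtype.val hq
    exact Subtype.ext (lap_bd_injective hI this)
  have hlp : lap p ∈ V := by
    rw [MvPolynomial.mem_restrictTotalDegree, ← MvPolynomial.mem_restrictTotalDegree, lap_apply]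
    refine Submodule.sum_mem _ fun i _ => ?_
    rw [MvPolynomial.mem_restrictTotalDegree]
    exact totalDegree_pderiv (totalDegree_pderiv (by omega) i) i
  obtain ⟨q, hq⟩ := LinearMap.injective_iff_surjective.1 hT ⟨lap p, hlp⟩
  have hq' : lap (bd * q.1) = lap p := congrArg Subtype.val hq
  refine ⟨p - bd * q.1, by rw [map_sub, hq', sub_self], fun x hx => ?_⟩
  rw [pf_sub, pf_mul, pf_bd, hx]; simp

/-- Harmonic polynomials are dense in the continuous functions on the unit sphere. -/
lemma exists_harmonic_near (hI : 0 < I) {w : Euc I → ℝ} (hw : ContinuousOn w (sphere 0 1))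
    {η : ℝ} (hη : 0 < η) :
    ∃ h : MvPolynomial (Fin I) ℝ, lap h = 0 ∧ ∀ x : Euc I, ‖x‖ = 1 → |pf h x - w x| ≤ η := by
  let F : MvPolynomial (Fin I) ℝ →ₐ[ℝ] C(sphere (0 : Euc I) 1, ℝ) :=
    MvPolynomial.aeval fun i => ⟨fun x => (x : Euc I) i, by fun_prop⟩
  have hF : ∀ p x, F p x = pf p (x : Euc I) := fun p x => by
    induction p using MvPolynomial.induction_on with
    | C a => rw [pf_C]; simp [F]
    | add p q hp hq => rw [map_add, pf_add, ContinuousMap.add_apply, hp, hq]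
    | mul_X p i hp => rw [map_mul, pf_mul, ContinuousMap.mul_apply, hp, pf_X]; simp [F]
  have : CompactSpace (sphere (0 : Euc I) 1) := isCompact_iff_compactSpace.1 (isCompact_sphere _ _)
  have hsep : F.range.SeparatesPoints := by
    intro x y hxy
    have : ∃ i, (x : Euc I) i ≠ (y : Euc I) i := by
      by_contra hc
      push Not at hc
      exact hxy (Subtype.ext (by ext i; exact hc i))
    obtain ⟨i, hi⟩ := this
    refine ⟨F (MvPolynomial.X i), ⟨F (MvPolynomial.X i), ⟨MvPolynomial.X i, rfl⟩, rfl⟩, ?_⟩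
    rw [hF, hF, pf_X, pf_X]; exact hi
  have htop := ContinuousMap.subalgebra_topologicalClosure_eq_top_of_separatesPoints _ hsep
  let W : C(sphere (0 : Euc I) 1, ℝ) := ⟨fun x => w x, continuousOn_iff_continuous_domRestrict.1 hw⟩
  have hW : W ∈ F.range.topologicalClosure := by rw [htop]; trivial
  obtain ⟨g, hg, hgd⟩ := Metric.mem_closure_iff.1 hW η hη
  obtain ⟨p, rfl⟩ := hg
  obtain ⟨h, hh, hhp⟩ := exists_harmonic hI p
  refine ⟨h, hh, fun x hx => ?_⟩
  have hxs : x ∈ sphere (0 : Euc I) 1 := by simpa using hx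
  have := (ContinuousMap.dist_apply_le_dist (f := W) (g := F p) ⟨x, hxs⟩).trans hgd.le
  rw [Real.dist_eq] at this
  rw [hhp x hx, abs_sub_comm]
  have h2 := hF p ⟨x, hxs⟩
  rw [show (⟨x, hxs⟩ : sphere (0 : Euc I) 1) = ⟨x, hxs⟩ from rfl] at h2
  change |w x - pf p x| ≤ η
  rw [← h2]; exact this

/-! ### Interior derivative estimates and Taylor expansion of harmonic polynomials -/

/-- Bernstein's gradient estimate: `(ρ² - |x - x₀|²)² (∂ᵢh)² + K ρ² h²` has no interior maximum
where `∂ᵢh ≠ 0`. -/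
lemma bernstein {p : MvPolynomial (Fin I) ℝ} (hp : lap p = 0) {x0 : Euc I} {ρ M : ℝ}
    (hρ : 0 < ρ) (hM : ∀ x, ‖x - x0‖ ≤ ρ → |pf p x| ≤ M) (i : Fin I) :
    |pf (MvPolynomial.pderiv i p) x0| ≤ (5 + 2 * I) * M / ρ := by
  set q := MvPolynomial.pderiv i p with hq
  have hM0 : 0 ≤ M := (abs_nonneg _).trans (hM x0 (by simpa using hρ.le))
  set K : ℝ := 13 + 2 * I with hK
  have hI0 : (0 : ℝ) ≤ I := Nat.cast_nonneg I
  set F : Euc I → ℝ := fun x =>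
    ((ρ ^ 2 - ‖x - x0‖ ^ 2) * (ρ ^ 2 - ‖x - x0‖ ^ 2)) * (pf q x * pf q x)
      + K * ρ ^ 2 * (pf p x * pf p x) with hF
  have hcp : ∀ p : MvPolynomial (Fin I) ℝ, Continuous (pf p) := fun p =>
    (pf_contDiff p (n := 0)).continuous
  have hFc : Continuous F := by
    have := hcp p; have := hcp q; fun_prop
  obtain ⟨z, hz, hmax⟩ := (isCompact_closedBall x0 ρ).exists_isMaxOn ⟨x0, by simp [hρ.le]⟩
    hFc.continuousOn
  have hz' : ‖z - x0‖ ≤ ρ := by simpa [dist_eq_norm] using hz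
  have hsq : ∀ x, ‖x - x0‖ ≤ ρ → pf p x * pf p x ≤ M ^ 2 := fun x hx => by
    have := abs_le.1 (hM x hx); nlinarith
  suffices h : F z ≤ K * ρ ^ 2 * M ^ 2 by
    have h1 : F x0 ≤ F z := hmax (by simp [hρ.le])
    have h2 : F x0 = ρ ^ 4 * pf q x0 ^ 2 + K * ρ ^ 2 * (pf p x0 * pf p x0) := by
      simp only [hF, sub_self, norm_zero]; ring
    have h3 : 0 ≤ K * ρ ^ 2 * (pf p x0 * pf p x0) :=
      mul_nonneg (by positivity) (mul_self_nonneg _)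
    have h4 : ρ ^ 2 * (ρ * pf q x0) ^ 2 ≤ ρ ^ 2 * ((5 + 2 * I) * M) ^ 2 := by
      have : K * M ^ 2 ≤ (5 + 2 * I) ^ 2 * M ^ 2 :=
        mul_le_mul_of_nonneg_right (by nlinarith) (sq_nonneg _)
      have := mul_le_mul_of_nonneg_left this (sq_nonneg ρ)
      nlinarith
    have h5 := abs_le_of_sq_le_sq (le_of_mul_le_mul_left h4 (by positivity)) (by positivity)
    rw [abs_mul, abs_of_pos hρ] at h5
    rw [le_div_iff₀ hρ]
    linarith
  have hKρ : 0 ≤ K * ρ ^ 2 := by positivity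
  by_cases hv : pf q z = 0
  · have : F z = K * ρ ^ 2 * (pf p z * pf p z) := by simp only [hF, hv]; ring
    rw [this]; exact mul_le_mul_of_nonneg_left (hsq z hz') hKρ
  rcases hz'.eq_or_lt with hb | hb
  · have : F z = K * ρ ^ 2 * (pf p z * pf p z) := by simp only [hF, hb]; ring
    rw [this]; exact mul_le_mul_of_nonneg_left (hsq z hz') hKρ
  exfalso
  have hloc : IsLocalMax F z := hmax.isLocalMax (Filter.mem_of_superset
    (isOpen_ball.mem_nhds (by simpa [dist_eq_norm] using hb)) ball_subset_closedBall)
  set η := ρ ^ 2 - ‖z - x0‖ ^ 2 with hη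
  have hj : ∀ j, pf q z ^ 2 * (8 * (z - x0) j ^ 2 - 4 * η - 32 * (z - x0) j ^ 2)
      + 2 * η ^ 2 * (pf q z * pd2 (pf q) j z)
      + K * ρ ^ 2 * (2 * pd1 (pf p) j z ^ 2 + 2 * (pf p z * pd2 (pf p) j z)) ≤ 0 := by
    intro j
    have d1 : HasD2 (fun t : ℝ => ρ ^ 2 - ‖(z - x0) + t • e j‖ ^ 2) (-(2 * (z - x0) j)) (-2) :=
      ((HasD2.const (ρ ^ 2)).sub (HasD2.normSq (z - x0) (e j))).congr
        (by rw [inner_e]; ring) (by rw [norm_e]; ring)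
    have d2 := HasD2.pd ((pf_contDiff q).contDiffAt (x := z)) j
    have d3 := HasD2.pd ((pf_contDiff p).contDiffAt (x := z)) j
    have d4 := ((d1.mul d1).mul (d2.mul d2)).add ((d3.mul d3).const_mul (K * ρ ^ 2))
    have hl := IsLocalMax.line hloc (e j)
    have heq : ∀ t : ℝ, (z - x0) + t • (e j : Euc I) = (z + t • e j) - x0 := fun t => by abel
    simp_rw [heq] at d4
    have h := (d4.max hl).2
    simp only [zero_smul, add_zero] at h
    rw [← hη] at h
    nlinarith [sq_nonneg (η * pd1 (pf q) j z - 4 * (z - x0) j * pf q z)]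
  have hs := Finset.sum_nonpos fun j (_ : j ∈ Finset.univ) => hj j
  have e1 : ∑ j, pf q z * pd2 (pf q) j z = 0 := by
    rw [← Finset.mul_sum, sum_pd2_pf, lap_pderiv hp]; simp [pf]
  have e2 : ∑ j, pf p z * pd2 (pf p) j z = 0 := by
    rw [← Finset.mul_sum, sum_pd2_pf, hp]; simp [pf]
  have e3 : pf q z ^ 2 ≤ ∑ j, pd1 (pf p) j z ^ 2 := by
    rw [hq, ← pd1_pf]
    exact Finset.single_le_sum (f := fun j => pd1 (pf p) j z ^ 2) (fun j _ => sq_nonneg _)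
      (Finset.mem_univ i)
  have e4 : ∑ j, (z - x0) j ^ 2 = ‖z - x0‖ ^ 2 := (EuclideanSpace.real_norm_sq_eq _).symm
  simp only [Finset.sum_add_distrib, ← Finset.mul_sum, e1, e2, Finset.sum_sub_distrib, e4,
    Finset.sum_const, Finset.card_univ, Fintype.card_fin, nsmul_eq_mul, mul_zero, add_zero] at hs
  have hv2 : 0 < pf q z ^ 2 := by positivity
  have h6 : K * ρ ^ 2 * (2 * pf q z ^ 2) ≤ K * ρ ^ 2 * (2 * ∑ j, pd1 (pf p) j z ^ 2) :=
    mul_le_mul_of_nonneg_left (by linarith) hKρ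
  have h7 : ‖z - x0‖ ^ 2 ≤ ρ ^ 2 := by
    have := norm_nonneg (z - x0); nlinarith
  have h8 : (I : ℝ) * (4 * η) ≤ I * (4 * ρ ^ 2) :=
    mul_le_mul_of_nonneg_left (by rw [hη]; nlinarith [sq_nonneg ‖z - x0‖]) hI0
  have h9 : 0 < 8 * ‖z - x0‖ ^ 2 - I * (4 * η) - 32 * ‖z - x0‖ ^ 2 + 2 * (K * ρ ^ 2) := by
    have : 0 < ρ ^ 2 := by positivity
    rw [hK]; nlinarith
  have := mul_pos hv2 h9
  nlinarith

/-- The space of (not necessarily symmetric) quadratic polynomials `c + b·y + ½ yᵀ M y`, with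
the supremum norm on the coefficients. -/
abbrev Quad (I : ℕ) := ℝ × (Fin I → ℝ) × (Fin I → Fin I → ℝ)

/-- The function defined by a quadratic polynomial. -/
def qd (q : Quad I) (y : Euc I) : ℝ :=
  q.1 + ∑ i, q.2.1 i * y i + 1 / 2 * ∑ i, ∑ j, q.2.2 i j * (y i * y j)

lemma clm_eq_sum (L : Euc I →L[ℝ] ℝ) (y : Euc I) : L y = ∑ i, y i * L (e i) := by
  have hpsum : ∑ i, y i • (e i : Euc I) = y := by
    ext j
    simp [e, Finset.sum_apply, Pi.single_apply]
  conv_lhs => rw [← hpsum]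
  simp

lemma pf_line (p : MvPolynomial (Fin I) ℝ) (y : Euc I) (t : ℝ) :
    HasDerivAt (fun t : ℝ => pf p (t • y)) (∑ i, y i * pf (MvPolynomial.pderiv i p) (t • y)) t := by
  have hl : HasDerivAt (fun t : ℝ => t • y) y t := by
    simpa using (hasDerivAt_id t).smul_const y
  have := (pf_diff p (t • y)).hasFDerivAt.comp_hasDerivAt t hl
  refine this.congr_deriv ?_
  rw [clm_eq_sum]
  exact Finset.sum_congr rfl fun i _ => by rw [← pd1_pf]; rfl

lemma abs_le_of_deriv {f f' : ℝ → ℝ} {B : ℝ} (h : ∀ t, HasDerivAt f (f' t) t) (h0 : f 0 = 0)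
    (hB : ∀ t, 0 ≤ t → t ≤ 1 → |f' t| ≤ B) {t : ℝ} (ht0 : 0 ≤ t) (ht1 : t ≤ 1) : |f t| ≤ B := by
  have := Convex.norm_image_sub_le_of_norm_hasDerivWithin_le (f := f) (f' := f') (C := B)
    (s := Set.Icc 0 1) (x := 0) (y := t) (fun x hx => (h x).hasDerivWithinAt)
    (fun x hx => by simpa using hB x hx.1 hx.2) (convex_Icc 0 1) (by simp) ⟨ht0, ht1⟩
  rw [h0, sub_zero, sub_zero, Real.norm_eq_abs, Real.norm_eq_abs, abs_of_nonneg ht0] at this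
  have hB0 : 0 ≤ B := (abs_nonneg _).trans (hB 0 le_rfl zero_le_one)
  nlinarith

/-- The constant in the second order Taylor expansion of harmonic polynomials. -/
def C3 (I : ℕ) : ℝ := 128 * (5 + 2 * I) ^ 3 * (1 + I) ^ 3

lemma abs_sum_mul_le {y : Euc I} {f : Fin I → ℝ} {B : ℝ} (hf : ∀ i, |f i| ≤ B) :
    |∑ i, y i * f i| ≤ I * (‖y‖ * B) := by
  refine (Finset.abs_sum_le_sum_abs _ _).trans ?_
  calc ∑ i, |y i * f i| ≤ ∑ _i : Fin I, ‖y‖ * B := Finset.sum_le_sum fun i _ => by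
        rw [abs_mul]
        exact mul_le_mul (abs_coord_le y i) (hf i) (abs_nonneg _) (norm_nonneg _)
    _ = _ := by simp

lemma harmonic_taylor {p : MvPolynomial (Fin I) ℝ} (hp : lap p = 0)
    (hM : ∀ x : Euc I, ‖x‖ ≤ 1 → |pf p x| ≤ 2) :
    ∃ q : Quad I, ‖q‖ ≤ C3 I ∧ ∑ i, q.2.2 i i = 0 ∧
      ∀ y : Euc I, ‖y‖ ≤ 1 / 4 → |pf p y - qd q y| ≤ C3 I * ‖y‖ ^ 3 := by
  set c : ℝ := 5 + 2 * I with hc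
  have hI0 : (0 : ℝ) ≤ I := Nat.cast_nonneg I
  have hc1 : 1 ≤ c := by rw [hc]; linarith
  have step : ∀ (p : MvPolynomial (Fin I) ℝ), lap p = 0 → ∀ r M : ℝ,
      (∀ x : Euc I, ‖x‖ ≤ r + 1 / 4 → |pf p x| ≤ M) → ∀ i, ∀ x : Euc I, ‖x‖ ≤ r →
      |pf (MvPolynomial.pderiv i p) x| ≤ 4 * c * M := by
    intro p hp r M hM i x hx
    have := bernstein hp (x0 := x) (ρ := 1 / 4) (M := M) (by norm_num) (fun z hz => hM z (by
      have := norm_add_le (z - x) x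
      rw [sub_add_cancel] at this; linarith)) i
    refine this.trans (le_of_eq ?_)
    rw [hc]; ring
  have h1 := step p hp (3 / 4) 2 (fun x hx => hM x (by linarith))
  have h2 := fun i => step _ (lap_pderiv hp i) (1 / 2) _ (fun x hx => h1 i x (by linarith))
  have h3 := fun i j => step _ (lap_pderiv (lap_pderiv hp i) j) (1 / 4) _
    (fun x hx => h2 i j x (by linarith))
  set D := fun i => MvPolynomial.pderiv (R := ℝ) (σ := Fin I) i with hD
  refine ⟨(pf p 0, fun i => pf (D i p) 0, fun i j => pf (D j (D i p)) 0), ?_, ?_, ?_⟩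
  · have hC : (1 : ℝ) ≤ (1 + I) ^ 3 := one_le_pow₀ (by linarith)
    have hcc : c ≤ c ^ 3 := le_self_pow₀ hc1 (by norm_num)
    have hcc2 : c ^ 2 ≤ c ^ 3 := pow_le_pow_right₀ hc1 (by norm_num)
    have hC3 : 128 * c ^ 3 ≤ C3 I := by
      rw [C3, ← hc]
      have : 0 ≤ 128 * c ^ 3 := by positivity
      nlinarith
    have hC30 : 0 ≤ C3 I := le_trans (by positivity) hC3
    rw [norm_prod_le_iff, norm_prod_le_iff, pi_norm_le_iff_of_nonneg hC30,
      pi_norm_le_iff_of_nonneg hC30]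
    refine ⟨?_, fun i => ?_, fun i => ?_⟩
    · have := hM 0 (by simp)
      rw [Real.norm_eq_abs]; linarith
    · have := h1 i 0 (by norm_num)
      rw [Real.norm_eq_abs]; refine this.trans ?_; linarith
    · rw [pi_norm_le_iff_of_nonneg hC30]; intro j
      have := h2 i j 0 (by norm_num)
      rw [Real.norm_eq_abs]; refine this.trans ?_; nlinarith
  · change ∑ i, pf (D i (D i p)) 0 = 0
    rw [← pf_sum, ← lap_apply, hp]; simp [pf]
  · intro y hy
    have hty : ∀ t : ℝ, 0 ≤ t → t ≤ 1 → ‖t • y‖ ≤ 1 / 4 := fun t h0 h1 => by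
      rw [norm_smul, Real.norm_eq_abs, abs_of_nonneg h0]
      nlinarith [norm_nonneg y]
    set g2 : ℝ → ℝ := fun t => ∑ i, y i * ∑ j, y j * pf (D j (D i p)) (t • y) with hg2
    set g1 : ℝ → ℝ := fun t => ∑ i, y i * pf (D i p) (t • y) with hg1
    set B := I * (‖y‖ * (I * (‖y‖ * (I * (‖y‖ * (4 * c * (4 * c * (4 * c * 2)))))))) with hB
    have d2 : ∀ t, HasDerivAt (fun t => g2 t - g2 0)
        (∑ i, y i * ∑ j, y j * ∑ k, y k * pf (D k (D j (D i p))) (t • y)) t := fun t =>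
      (HasDerivAt.fun_sum fun i _ => (HasDerivAt.fun_sum fun j _ =>
        (pf_line (D j (D i p)) y t).const_mul (y j)).const_mul (y i)).sub_const _
    have d1 : ∀ t, HasDerivAt (fun t => g1 t - g1 0 - t * g2 0) (g2 t - g2 0) t := fun t =>
      (((HasDerivAt.fun_sum fun i _ => (pf_line (D i p) y t).const_mul (y i)).sub_const _).sub
        ((hasDerivAt_id t).mul_const (g2 0))).congr_deriv (by simp [hg2, hD])
    have d0 : ∀ t, HasDerivAt (fun t => pf p (t • y) - pf p ((0 : ℝ) • y) - t * g1 0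
        - t ^ 2 / 2 * g2 0) (g1 t - g1 0 - t * g2 0) t := fun t =>
      ((((pf_line p y t).sub_const _).sub ((hasDerivAt_id t).mul_const (g1 0))).sub
        (((hasDerivAt_pow 2 t).div_const 2).mul_const (g2 0))).congr_deriv (by simp [hg1, hD])
    have b2 := fun t h0 h1 => abs_le_of_deriv d2 (by simp) (B := B) (fun t h0 h1 =>
      abs_sum_mul_le fun i => abs_sum_mul_le fun j => abs_sum_mul_le fun k =>
        h3 i j k (t • y) (hty t h0 h1)) (t := t) h0 h1
    have b1 := fun t h0 h1 => abs_le_of_deriv d1 (by simp) (B := B) b2 (t := t) h0 h1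
    have b0 := abs_le_of_deriv d0 (by simp) (B := B) b1 (t := 1) zero_le_one le_rfl
    have hBC : B ≤ C3 I * ‖y‖ ^ 3 := by
      rw [C3, ← hc, hB]
      have : (I : ℝ) ^ 3 ≤ (1 + I) ^ 3 := pow_le_pow_left₀ hI0 (by linarith) 3
      have h4 : 0 ≤ 128 * c ^ 3 * ‖y‖ ^ 3 := by positivity
      nlinarith [mul_le_mul_of_nonneg_left this h4]
    refine le_trans (le_of_eq ?_) (b0.trans hBC)
    congr 1
    simp only [hg1, hg2, qd, zero_smul, one_smul, Finset.mul_sum]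
    have : ∀ i j, 1 / 2 * (pf (D j (D i p)) 0 * (y i * y j))
      = 1 ^ 2 / 2 * (y i * (y j * pf (D j (D i p)) 0)) := fun i j => by ring
    simp only [this, one_mul, mul_comm (pf (D _ p) 0)]
    ring

/-! ### Approximation by harmonic polynomials -/

lemma HasD2.unique {g : ℝ → ℝ} {a b a' b' : ℝ} (h : HasD2 g a b) (h' : HasD2 g a' b') :
    a = a' ∧ b = b' := by
  obtain ⟨g', h1, h2, h3⟩ := h
  obtain ⟨k', k1, k2, k3⟩ := h'
  have he : g' =ᶠ[𝓝 0] k' := by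
    filter_upwards [h1, k1] with t u v using u.unique v
  exact ⟨by rw [← h2, ← k2, he.self_of_nhds], (h3.congr_of_eventuallyEq he.symm).unique k3⟩

lemma pd_sub {f g : Euc I → ℝ} {x : Euc I} (hf : ContDiffAt ℝ 2 f x) (hg : ContDiffAt ℝ 2 g x)
    (i : Fin I) : pd1 (fun x => f x - g x) i x = pd1 f i x - pd1 g i x ∧
      pd2 (fun x => f x - g x) i x = pd2 f i x - pd2 g i x :=
  (HasD2.pd (hf.sub hg) i).unique ((HasD2.pd hf i).sub (HasD2.pd hg i))

/-- Boundary barrier: a harmonic polynomial which is `η`-close on the unit sphere to a function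
with modulus of continuity `L |x - y|^{1/2}` is close to that function just inside the sphere. -/
lemma barrier (hI : 0 < I) {w : Euc I → ℝ} {p : MvPolynomial (Fin I) ℝ} {L η d τ : ℝ}
    (hp : lap p = 0) (hL : 0 < L) (hd : 0 < d) (hτ : 0 ≤ τ) (hτ1 : τ ≤ 1 / 4)
    (hτL : L * (2 * τ) ^ (1 / 2 : ℝ) ≤ d) (hτC : 4 * (L ^ 4 / d ^ 3) * τ ≤ d)
    (hw : ∀ x y : Euc I, ‖x‖ ≤ 1 → ‖y‖ ≤ 1 → w x - w y ≤ L * (‖x - y‖ ^ 2) ^ (1 / 4 : ℝ))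
    (hpw : ∀ x : Euc I, ‖x‖ = 1 → pf p x - w x ≤ η) {x : Euc I} (hx : ‖x‖ = 1 - 2 * τ) :
    pf p x - w x ≤ η + 3 * d := by
  have hx0 : 0 < ‖x‖ := by rw [hx]; linarith
  set b : Euc I := ‖x‖⁻¹ • x with hb
  have hbn : ‖b‖ = 1 := by rw [hb, norm_smul, norm_inv, norm_norm, inv_mul_cancel₀ hx0.ne']
  have hxb : x = ‖x‖ • b := by rw [hb, smul_smul, mul_inv_cancel₀ hx0.ne', one_smul]
  set C : ℝ := L ^ 4 / d ^ 3 with hC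
  have hC0 : 0 < C := by positivity
  -- the modulus of continuity is dominated by a quadratic, which is linear on the sphere
  have hdom : ∀ S : ℝ, 0 ≤ S → L * S ^ (1 / 4 : ℝ) ≤ d + C * S := by
    intro S hS
    set σ := S ^ (1 / 4 : ℝ) with hσ
    have hσ0 : 0 ≤ σ := by positivity
    have hS4 : S = σ ^ 4 := by
      rw [hσ, ← Real.rpow_natCast, ← Real.rpow_mul hS]; norm_num
    rw [hS4]
    rcases le_total (L * σ) d with h | h
    · have : 0 ≤ C * σ ^ 4 := by positivity
      linarith
    · have h3 : d ^ 3 ≤ (L * σ) ^ 3 := pow_le_pow_left₀ hd.le h 3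
      have : L * σ * d ^ 3 ≤ L * σ * (L * σ) ^ 3 :=
        mul_le_mul_of_nonneg_left h3 (by positivity)
      have h4 : L * σ ≤ C * σ ^ 4 := by
        rw [hC, div_mul_eq_mul_div, le_div_iff₀ (by positivity)]
        linarith
      linarith
  set q : MvPolynomial (Fin I) ℝ :=
    p - MvPolynomial.C (2 * C) + ∑ i, MvPolynomial.C (2 * C * b i) * MvPolynomial.X i with hq
  have hqe : ∀ y, pf q y = pf p y - 2 * C * (1 - inner ℝ y b) := by
    intro y
    rw [hq, pf_add, pf_sub, pf_sum, pf_C, PiLp.inner_apply]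
    simp only [pf_mul, pf_C, pf_X]
    have : ∀ i, 2 * C * b i * y i = 2 * C * inner ℝ (y i) (b i) := fun i => by simp; ring
    simp only [this, ← Finset.mul_sum]; ring
  have hlin : ∀ i : Fin I, lap (MvPolynomial.C (2 * C * b i) * MvPolynomial.X i) = 0 := by
    intro i
    rw [lap_apply]
    refine Finset.sum_eq_zero fun j _ => ?_
    rw [MvPolynomial.pderiv_C_mul, MvPolynomial.pderiv_X]
    by_cases h : i = j
    · subst h; simp
    · simp [h]
  have hlq : lap q = 0 := by
    rw [hq, map_add, map_sub, hp, map_sum, Finset.sum_eq_zero fun i _ => hlin i]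
    simp [lap_apply]
  have hbd : ∀ y : Euc I, ‖y‖ = 1 → pf q y ≤ w b + η + d := by
    intro y hy
    have h1 := hpw y hy
    have h2 := hw y b hy.le hbn.le
    have h3 := hdom (‖y - b‖ ^ 2) (by positivity)
    have h4 : ‖y - b‖ ^ 2 = 2 * (1 - inner ℝ y b) := by
      rw [norm_sub_sq_real, hy, hbn]; ring
    rw [hqe]
    rw [h4] at h2 h3
    linarith
  have h1 := harmonic_le hI one_pos le_rfl hlq hbd x (by simp; linarith)
  have hib : inner ℝ x b = 1 - 2 * τ := by
    rw [hxb, inner_smul_left, real_inner_self_eq_norm_sq, hbn, hx]; simp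
  rw [hqe, hib] at h1
  have h2 := hw b x hbn.le (by linarith)
  have h3 : b - x = (2 * τ) • b := by
    conv_lhs => rw [hxb, hx]
    rw [sub_smul, one_smul]; abel
  have h4 : (‖b - x‖ ^ 2) ^ (1 / 4 : ℝ) = (2 * τ) ^ (1 / 2 : ℝ) := by
    rw [h3, norm_smul, hbn, mul_one, Real.norm_eq_abs, abs_of_nonneg (by linarith),
      ← Real.rpow_natCast, ← Real.rpow_mul (by linarith)]
    norm_num
  rw [h4] at h2
  linarith

lemma near_neg {ε : ℝ} {w : Euc I → ℝ} (hn : Near ε w) : Near ε (fun x => - w x) := by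
  have h1 : ∀ i, pd1 (fun x => - w x) i = fun x => - pd1 w i x := fun i => by
    funext x; simp [pd1, fderiv_fun_neg]
  have h2 : ∀ i, pd2 (fun x => - w x) i = fun x => - pd2 w i x := fun i => by
    funext x; unfold pd2; rw [h1]; simp [fderiv_fun_neg]
  intro x hx
  simpa [h1, h2, Finset.sum_neg_distrib] using hn x hx

/-- Solutions of equations close to the Laplace equation are close to harmonic polynomials. -/
lemma approx (hI : 0 < I) {δ : ℝ} (hδ : 0 < δ) (hδ1 : δ ≤ 1) :
    ∃ ε : ℝ, 0 < ε ∧ ∀ w : Euc I → ℝ, ContDiffOn ℝ 2 w (ball 0 2) →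
      (∀ x ∈ ball (0 : Euc I) 2, |w x| ≤ 1) → Near ε w →
      ∃ p : MvPolynomial (Fin I) ℝ, lap p = 0 ∧ (∀ x : Euc I, ‖x‖ ≤ 1 → |pf p x| ≤ 2) ∧
        ∀ x : Euc I, ‖x‖ ≤ 1 / 2 → |w x - pf p x| ≤ δ := by
  have hI1 : (1 : ℝ) ≤ I := by exact_mod_cast hI
  set L : ℝ := 100 * I + 8 with hL
  have hL0 : 0 < L := by positivity
  set d : ℝ := δ / 8 with hd
  have hd0 : 0 < d := by positivity
  obtain ⟨τ, hτ0, hτ1, hτL, hτC⟩ : ∃ τ : ℝ, 0 < τ ∧ τ ≤ 1 / 4 ∧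
      L * (2 * τ) ^ (1 / 2 : ℝ) ≤ d ∧ 4 * (L ^ 4 / d ^ 3) * τ ≤ d := by
    refine ⟨min (1 / 4) (min ((d / L) ^ 2 / 2) (d / (4 * (L ^ 4 / d ^ 3)))), by positivity,
      min_le_left _ _, ?_, ?_⟩
    · set τ := min (1 / 4 : ℝ) (min ((d / L) ^ 2 / 2) (d / (4 * (L ^ 4 / d ^ 3)))) with hτ
      have h1 : τ ≤ (d / L) ^ 2 / 2 := (min_le_right _ _).trans (min_le_left _ _)
      have h0 : 0 ≤ τ := by positivity
      rw [← Real.sqrt_eq_rpow]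
      have h2 : √(2 * τ) ≤ d / L := Real.sqrt_le_iff.2 ⟨by positivity, by linarith⟩
      calc L * √(2 * τ) ≤ L * (d / L) := mul_le_mul_of_nonneg_left h2 hL0.le
        _ = d := by field_simp
    · have h1 : min (1 / 4 : ℝ) (min ((d / L) ^ 2 / 2) (d / (4 * (L ^ 4 / d ^ 3))))
        ≤ d / (4 * (L ^ 4 / d ^ 3)) := (min_le_right _ _).trans (min_le_right _ _)
      rwa [le_div_iff₀ (by positivity), mul_comm] at h1
  set c : ℝ := 5 + 2 * I with hc
  set H : ℝ := 1 + I * (c * 2 / τ) + I * (c * (c * 2 / τ) / τ) with hH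
  have hH0 : 0 < H := by positivity
  set ε : ℝ := min (1 / (100 * I)) (δ / (2 * H)) with hε
  have hε0 : 0 < ε := by positivity
  have hεI : ε * I ≤ 1 / 100 := by
    have : ε ≤ 1 / (100 * I) := min_le_left _ _
    rw [le_div_iff₀ (by positivity)] at this
    linarith
  have hε8 : ε ≤ 1 / 8 := by nlinarith
  have hεH : ε * H ≤ δ / 2 := by
    have : ε ≤ δ / (2 * H) := min_le_right _ _
    rw [le_div_iff₀ (by positivity)] at this
    linarith
  refine ⟨ε, hε0, fun w hw hw1 hn => ?_⟩
  have hcd : ∀ x : Euc I, ‖x‖ < 2 → ContDiffAt ℝ 2 w x := fun x hx =>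
    hw.contDiffAt (isOpen_ball.mem_nhds (by simpa using hx))
  have hwc : ∀ r < (2 : ℝ), ContinuousOn w (closedBall 0 r) := fun r hr =>
    hw.continuousOn.mono (closedBall_subset_ball hr)
  obtain ⟨p, hp, hpw⟩ := exists_harmonic_near hI
    ((hwc 1 (by norm_num)).mono sphere_subset_closedBall) hd0
  have hp2 : ∀ x : Euc I, ‖x‖ ≤ 1 → |pf p x| ≤ 2 := by
    have hb : ∀ x : Euc I, ‖x‖ = 1 → |pf p x| ≤ 2 := fun x hx => by
      have h1 := abs_le.1 (hpw x hx)
      have h2 := abs_le.1 (hw1 x (by simp [hx]))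
      rw [abs_le]; constructor <;> linarith
    intro x hx
    have h1 := harmonic_le hI one_pos le_rfl hp (fun x hx => (abs_le.1 (hb x hx)).2) x (by simpa)
    have h2 := harmonic_le hI one_pos le_rfl (p := -p) (m := 2) (by rw [map_neg, hp, neg_zero])
      (fun x hx => by rw [pf_neg]; linarith [(abs_le.1 (hb x hx)).1]) x (by simpa)
    rw [pf_neg] at h2
    rw [abs_le]; constructor <;> linarith
  refine ⟨p, hp, hp2, fun x hx => ?_⟩
  set ρ : ℝ := 1 - 2 * τ with hρ
  have hup : ∀ x : Euc I, ‖x‖ = ρ → pf p x - w x ≤ δ / 2 := fun x hx => by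
    have := barrier hI hp hL0 hd0 hτ0.le hτ1 hτL hτC
      (fun x y hx hy => holder_estimate hI hε0.le hεI hw hw1 hn hx hy)
      (fun x hx => (abs_le.1 (hpw x hx)).2) hx
    linarith
  have hlo : ∀ x : Euc I, ‖x‖ = ρ → w x - pf p x ≤ δ / 2 := fun x hx => by
    have := barrier hI (w := fun x => - w x) (p := -p) (η := d) (by rw [map_neg, hp, neg_zero])
      hL0 hd0 hτ0.le hτ1 hτL hτC
      (fun x y hx hy => holder_estimate hI hε0.le hεI hw.neg
        (fun x hx => by rw [abs_neg]; exact hw1 x hx) (near_neg hn) hx hy)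
      (fun x hx => by rw [pf_neg]; linarith [(abs_le.1 (hpw x hx)).1]) hx
    rw [pf_neg] at this
    linarith
  have hD1 : ∀ i, ∀ x : Euc I, ‖x‖ ≤ 1 - τ → |pf (MvPolynomial.pderiv i p) x| ≤ c * 2 / τ :=
    fun i x hx => bernstein hp hτ0 (fun z hz => hp2 z (by
      have := norm_add_le (z - x) x
      rw [sub_add_cancel] at this; linarith)) i
  have hD2 : ∀ i, ∀ x : Euc I, ‖x‖ ≤ ρ →
      |pf (MvPolynomial.pderiv i (MvPolynomial.pderiv i p)) x| ≤ c * (c * 2 / τ) / τ :=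
    fun i x hx => bernstein (lap_pderiv hp i) hτ0 (fun z hz => hD1 i z (by
      have := norm_add_le (z - x) x
      rw [sub_add_cancel] at this; linarith)) i
  have hpc : ∀ x : Euc I, ContDiffAt ℝ 2 (pf p) x := fun x => (pf_contDiff p).contDiffAt
  have hcore : ∀ x ∈ ball (0 : Euc I) ρ, ∀ s : ℝ, |s| = 1 → ∀ a b : Fin I → ℝ,
      (∀ i, a i = s * (pd1 w i x - pd1 (pf p) i x)) →
      (∀ i, b i = s * (pd2 w i x - pd2 (pf p) i x)) →
      |∑ i, b i| ≤ ε * (H + ∑ i, |a i| + ∑ i, |b i|) := by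
    intro x hx s hs a b ha hb
    have hx' : ‖x‖ < ρ := by simpa using hx
    have h1 := hn x (by simp; linarith)
    have h2 : ∑ i, b i = s * ∑ i, pd2 w i x := by
      simp_rw [hb, ← Finset.mul_sum, Finset.sum_sub_distrib]
      rw [sum_pd2_pf, hp]; simp [pf]
    rw [h2, abs_mul, hs, one_mul]
    refine h1.trans (mul_le_mul_of_nonneg_left ?_ hε0.le)
    have h3 : ∑ i, |pd1 w i x| ≤ ∑ i, (|a i| + c * 2 / τ) := Finset.sum_le_sum fun i _ => by
      have h4 := hD1 i x (by linarith)
      rw [← pd1_pf] at h4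
      rw [ha, abs_mul, hs, one_mul]
      have := abs_sub_abs_le_abs_sub (pd1 w i x) (pd1 (pf p) i x)
      linarith
    have h5 : ∑ i, |pd2 w i x| ≤ ∑ i, (|b i| + c * (c * 2 / τ) / τ) :=
      Finset.sum_le_sum fun i _ => by
        have h4 := hD2 i x (by linarith)
        rw [← pd2_pf] at h4
        rw [hb, abs_mul, hs, one_mul]
        have := abs_sub_abs_le_abs_sub (pd2 w i x) (pd2 (pf p) i x)
        linarith
    rw [Finset.sum_add_distrib] at h3 h5
    simp only [Finset.sum_const, Finset.card_univ, Fintype.card_fin, nsmul_eq_mul] at h3 h5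
    rw [hH]; linarith
  have hxρ : x ∈ closedBall (0 : Euc I) ρ := by simp; linarith
  have hρ2 : ∀ x ∈ ball (0 : Euc I) ρ, ‖x‖ < 2 := fun x hx => by
    have : ‖x‖ < ρ := by simpa using hx
    linarith
  have m1 := max_principle hI (by linarith : 0 < ρ) (by linarith) (v := fun x => w x - pf p x)
    ((hwc ρ (by linarith)).sub (pf_contDiff p (n := 0)).continuous.continuousOn)
    (fun x hx => (hcd x (hρ2 x hx)).sub (hpc x)) hε0.le hε8 hH0.le
    (fun x hx => hcore x hx 1 (by simp) _ _
      (fun i => by rw [(pd_sub (hcd x (hρ2 x hx)) (hpc x) i).1, one_mul])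
      (fun i => by rw [(pd_sub (hcd x (hρ2 x hx)) (hpc x) i).2, one_mul])) hlo x hxρ
  have m2 := max_principle hI (by linarith : 0 < ρ) (by linarith) (v := fun x => pf p x - w x)
    ((pf_contDiff p (n := 0)).continuous.continuousOn.sub (hwc ρ (by linarith)))
    (fun x hx => (hpc x).sub (hcd x (hρ2 x hx))) hε0.le hε8 hH0.le
    (fun x hx => hcore x hx (-1) (by simp) _ _
      (fun i => by rw [(pd_sub (hpc x) (hcd x (hρ2 x hx)) i).1]; ring)
      (fun i => by rw [(pd_sub (hpc x) (hcd x (hρ2 x hx)) i).2]; ring)) hup x hxρ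
  rw [abs_le]; constructor <;> linarith

/-! ### Quadratic polynomials -/

/-- The `k`-th partial derivative of a quadratic polynomial. -/
def qd1 (q : Quad I) (k : Fin I) (z : Euc I) : ℝ :=
  q.2.1 k + 1 / 2 * ∑ j, (q.2.2 k j + q.2.2 j k) * z j

lemma qd_contDiff (q : Quad I) {n : WithTop ℕ∞} : ContDiff ℝ n (qd q) := by
  have h : ∀ i : Fin I, ContDiff ℝ n (fun y : Euc I => y i) := fun i =>
    (EuclideanSpace.proj (𝕜 := ℝ) i : Euc I →L[ℝ] ℝ).contDiff
  unfold qd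
  exact (contDiff_const.add (ContDiff.sum fun i _ => contDiff_const.mul (h i))).add
    (contDiff_const.mul (ContDiff.sum fun i _ => ContDiff.sum fun j _ =>
      contDiff_const.mul ((h i).mul (h j))))

lemma qd_zero (q : Quad I) : qd q 0 = q.1 := by simp [qd]

lemma qd_add_vec (q : Quad I) (z h : Euc I) : qd q (z + h) = qd q z + ∑ k, h k * qd1 q k z
    + 1 / 2 * ∑ i, ∑ j, q.2.2 i j * (h i * h j) := by
  have e1 : ∑ i, ∑ j, q.2.2 i j * (z i * h j) = ∑ i, ∑ j, q.2.2 j i * (z j * h i) :=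
    Finset.sum_comm
  have e2 : ∀ i j, q.2.2 i j * ((z + h) i * (z + h) j) = q.2.2 i j * (z i * z j)
      + q.2.2 i j * (h i * z j) + q.2.2 i j * (z i * h j) + q.2.2 i j * (h i * h j) :=
    fun i j => by rw [PiLp.add_apply, PiLp.add_apply]; ring
  have e3 : ∑ k, h k * qd1 q k z = ∑ k, q.2.1 k * h k
      + 1 / 2 * (∑ i, ∑ j, q.2.2 i j * (h i * z j) + ∑ i, ∑ j, q.2.2 j i * (z j * h i)) := by
    rw [← Finset.sum_add_distrib, Finset.mul_sum, ← Finset.sum_add_distrib]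
    refine Finset.sum_congr rfl fun k _ => ?_
    rw [qd1, mul_add, mul_comm (h k) (q.2.1 k), ← Finset.sum_add_distrib, mul_left_comm,
      Finset.mul_sum]
    congr 2
    refine Finset.sum_congr rfl fun j _ => by ring
  rw [e3, ← e1]
  unfold qd
  have e4 : ∀ i, q.2.1 i * (z + h) i = q.2.1 i * z i + q.2.1 i * h i := fun i => by
    rw [PiLp.add_apply, mul_add]
  simp only [e2, e4, Finset.sum_add_distrib]
  ring

lemma qd_line (q : Quad I) (z : Euc I) (i : Fin I) (t : ℝ) :
    qd q (z + t • e i) = qd q z + t * qd1 q i z + 1 / 2 * q.2.2 i i * (t * t) := by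
  rw [qd_add_vec]
  simp [e]
  ring

lemma pd_qd (q : Quad I) (z : Euc I) (i : Fin I) :
    pd1 (qd q) i z = qd1 q i z ∧ pd2 (qd q) i z = q.2.2 i i := by
  refine (HasD2.pd (qd_contDiff q).contDiffAt i).unique ?_
  simp_rw [qd_line]
  have h := ((HasD2.const (qd q z)).add (HasD2.id.mul (HasD2.const (qd1 q i z)))).add
    ((HasD2.id.mul HasD2.id).const_mul (1 / 2 * q.2.2 i i))
  exact h.congr (by ring) (by ring)

lemma quad_coef (q : Quad I) : |q.1| ≤ ‖q‖ ∧ (∀ i, |q.2.1 i| ≤ ‖q‖) ∧ ∀ i j, |q.2.2 i j| ≤ ‖q‖ := by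
  have h2 : ‖q.2‖ ≤ ‖q‖ := norm_snd_le q
  refine ⟨norm_fst_le q, fun i => ?_, fun i j => ?_⟩
  · exact (norm_le_pi_norm q.2.1 i).trans ((norm_fst_le q.2).trans h2)
  · exact (norm_le_pi_norm (q.2.2 i) j).trans
      ((norm_le_pi_norm q.2.2 i).trans ((norm_snd_le q.2).trans h2))

lemma quad_norm_le {q : Quad I} {B : ℝ} (hB : 0 ≤ B) (h0 : |q.1| ≤ B) (h1 : ∀ i, |q.2.1 i| ≤ B)
    (h2 : ∀ i j, |q.2.2 i j| ≤ B) : ‖q‖ ≤ B := by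
  rw [norm_prod_le_iff, norm_prod_le_iff, pi_norm_le_iff_of_nonneg hB,
    pi_norm_le_iff_of_nonneg hB]
  refine ⟨h0, h1, fun i => ?_⟩
  rw [pi_norm_le_iff_of_nonneg hB]; exact h2 i

/-- Size of a quadratic polynomial in terms of separate bounds for its coefficients. -/
lemma abs_qd_le {q : Quad I} {B0 B1 B2 : ℝ} (h0 : |q.1| ≤ B0) (h1 : ∀ i, |q.2.1 i| ≤ B1)
    (h2 : ∀ i j, |q.2.2 i j| ≤ B2) (z : Euc I) :
    |qd q z| ≤ B0 + I * (B1 * ‖z‖) + 1 / 2 * (I * (I * (B2 * ‖z‖ ^ 2))) := by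
  have hz := fun i => abs_coord_le z i
  have s1 : |∑ i, q.2.1 i * z i| ≤ I * (B1 * ‖z‖) := by
    refine (Finset.abs_sum_le_sum_abs _ _).trans ?_
    calc ∑ i, |q.2.1 i * z i| ≤ ∑ _i : Fin I, B1 * ‖z‖ := Finset.sum_le_sum fun i _ => by
          rw [abs_mul]
          exact mul_le_mul (h1 i) (hz i) (abs_nonneg _) ((abs_nonneg _).trans (h1 i))
      _ = _ := by simp
  have s2 : |∑ i, ∑ j, q.2.2 i j * (z i * z j)| ≤ I * (I * (B2 * ‖z‖ ^ 2)) := by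
    refine (Finset.abs_sum_le_sum_abs _ _).trans ?_
    calc ∑ i, |∑ j, q.2.2 i j * (z i * z j)| ≤ ∑ _i : Fin I, (I * (B2 * ‖z‖ ^ 2) : ℝ) :=
          Finset.sum_le_sum fun i _ => by
            refine (Finset.abs_sum_le_sum_abs _ _).trans ?_
            calc ∑ j, |q.2.2 i j * (z i * z j)| ≤ ∑ _j : Fin I, B2 * ‖z‖ ^ 2 :=
                  Finset.sum_le_sum fun j _ => by
                    rw [abs_mul, abs_mul, sq]
                    exact mul_le_mul (h2 i j)
                      (mul_le_mul (hz i) (hz j) (abs_nonneg _) (norm_nonneg _))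
                      (by positivity) ((abs_nonneg _).trans (h2 i j))
              _ = _ := by simp
      _ = _ := by simp
  unfold qd
  refine (abs_add_le _ _).trans (add_le_add ((abs_add_le _ _).trans (add_le_add h0 s1)) ?_)
  rw [abs_mul, abs_of_pos (by norm_num : (0 : ℝ) < 1 / 2)]
  exact mul_le_mul_of_nonneg_left s2 (by norm_num)

lemma qd_sub (p q : Quad I) (z : Euc I) : qd (p - q) z = qd p z - qd q z := by
  simp only [qd, Prod.fst_sub, Prod.snd_sub, Pi.sub_apply, sub_mul, Finset.sum_sub_distrib, mul_sub]
  ring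

lemma abs_qd1_sub_le {q : Quad I} {B : ℝ} (h : ∀ i j, |q.2.2 i j| ≤ B) (k : Fin I) (z : Euc I) :
    |qd1 q k z - q.2.1 k| ≤ I * (B * ‖z‖) := by
  have : qd1 q k z - q.2.1 k = 1 / 2 * ∑ j, z j * (q.2.2 k j + q.2.2 j k) := by
    rw [qd1, add_sub_cancel_left]
    congr 1; exact Finset.sum_congr rfl fun j _ => mul_comm _ _
  rw [this, abs_mul, abs_of_pos (by norm_num : (0 : ℝ) < 1 / 2)]
  have := abs_sum_mul_le (y := z) (f := fun j => q.2.2 k j + q.2.2 j k) (B := 2 * B) (fun j =>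
    (abs_add_le _ _).trans (by linarith [h k j, h j k]))
  linarith

lemma contDiffAt_scale {f : Euc I → ℝ} {x0 : Euc I} (s : Fin I → ℝ) (A : ℝ) {y : Euc I}
    (hf : ContDiffAt ℝ 2 f (x0 + dg s y)) : ContDiffAt ℝ 2 (fun y => A * f (x0 + dg s y)) y := by
  refine contDiffAt_const.mul (ContDiffAt.comp y hf ?_)
  exact contDiffAt_const.add (dg s).contDiff.contDiffAt

lemma pd_scale {f : Euc I → ℝ} {x0 : Euc I} (s : Fin I → ℝ) (A : ℝ) {y : Euc I}
    (hf : ContDiffAt ℝ 2 f (x0 + dg s y)) (i : Fin I) :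
    pd1 (fun y => A * f (x0 + dg s y)) i y = A * (s i * pd1 f i (x0 + dg s y)) ∧
    pd2 (fun y => A * f (x0 + dg s y)) i y = A * (s i ^ 2 * pd2 f i (x0 + dg s y)) := by
  refine (HasD2.pd (contDiffAt_scale s A hf) i).unique ?_
  have h := (HasD2.line hf (s i • e i)).const_mul A
  have e1 : ∀ t : ℝ, x0 + dg s y + t • s i • e i = x0 + dg s (y + t • e i) := fun t => by
    rw [map_add, map_smul, dg_e]; abel
  simp_rw [e1] at h
  refine h.congr ?_ ?_
  · rw [map_smul, smul_eq_mul]; rfl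
  · rw [pd2_eq hf]
    simp only [map_smul, _root_.smul_apply, smul_eq_mul]; ring

/-! ### Pointwise second order expansion for operators close to the Laplacian -/

/-- `E z s p q` is an operator in the variables (point, value, gradient, diagonal of the Hessian)
which is within `ε` of the Laplacian, and depends on the point in an `ε`-Lipschitz way. -/
structure EllOp (ε : ℝ) (E : Euc I → ℝ → (Fin I → ℝ) → (Fin I → ℝ) → ℝ) : Prop where
  lip : ∀ z ∈ ball (0 : Euc I) 2, ∀ s s' p p' q q',
    |E z (s + s') (p + p') (q + q') - E z s p q - ∑ i, q' i|
      ≤ ε * (|s'| + ∑ i, |p' i| + ∑ i, |q' i|)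
  pt : ∀ z ∈ ball (0 : Euc I) 2, ∀ s p q,
    |E z s p q - E 0 s p q| ≤ ε * ‖z‖ * (1 + |s| + ∑ i, |p i| + ∑ i, |q i|)
  zero : |E 0 0 0 0| ≤ ε

lemma EllOp.exists_root (hI : 0 < I) {ε : ℝ} {E : Euc I → ℝ → (Fin I → ℝ) → (Fin I → ℝ) → ℝ}
    (hE : EllOp ε E) (hε : ε ≤ 1 / 8) {s : ℝ} {p q : Fin I → ℝ} {A σ T : ℝ}
    (hA : |E 0 s p q| ≤ A) (hσ : 0 ≤ σ) (hT : 0 ≤ T) (hAT : A ≤ σ * T / 2) :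
    ∃ t, |t| ≤ T ∧ E 0 s p (q + fun _ => σ * t) = 0 := by
  have hI1 : (1 : ℝ) ≤ I := by exact_mod_cast hI
  have h0 : (0 : Euc I) ∈ ball (0 : Euc I) 2 := by simp
  have key : ∀ t t' : ℝ, |E 0 s p (q + fun _ => σ * t) - E 0 s p (q + fun _ => σ * t')
      - I * (σ * (t - t'))| ≤ 1 / 8 * (I * (σ * |t - t'|)) := by
    intro t t'
    have h := hE.lip 0 h0 s 0 p 0 (q + fun _ => σ * t') (fun _ => σ * (t - t'))
    have e1 : (q + fun _ => σ * t') + (fun _ => σ * (t - t')) = q + fun _ => σ * t := by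
      funext i; simp only [Pi.add_apply]; ring
    rw [e1] at h
    simp only [add_zero, abs_zero, Pi.zero_apply, Finset.sum_const, Finset.card_univ,
      Fintype.card_fin, nsmul_eq_mul, zero_add, mul_zero, abs_mul, abs_of_nonneg hσ] at h
    exact h.trans (mul_le_mul_of_nonneg_right hε (by positivity))
  have hcont : Continuous fun t => E 0 s p (q + fun _ => σ * t) := by
    have : LipschitzWith (Real.toNNReal (2 * I * σ)) fun t => E 0 s p (q + fun _ => σ * t) := by
      refine LipschitzWith.of_dist_le_mul fun t t' => ?_
      rw [Real.dist_eq, Real.dist_eq, Real.coe_toNNReal _ (by positivity)]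
      have h1 := key t t'
      have h2 := abs_sub_abs_le_abs_sub (E 0 s p (q + fun _ => σ * t) - E 0 s p (q + fun _ => σ * t'))
        (I * (σ * (t - t')))
      rw [abs_mul, abs_mul, abs_of_nonneg hσ, Nat.abs_cast] at h2
      have : 0 ≤ I * (σ * |t - t'|) := by positivity
      linarith
    exact this.continuous
  have hz : (q + fun _ => σ * (0 : ℝ)) = q := by funext i; simp
  have k1 := abs_le.1 (key T 0)
  have k2 := abs_le.1 (key (-T) 0)
  rw [hz] at k1 k2
  rw [sub_zero, abs_of_nonneg hT] at k1
  rw [sub_zero, abs_neg, abs_of_nonneg hT] at k2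
  have hA' := abs_le.1 hA
  have hσT : σ * T ≤ I * (σ * T) := le_mul_of_one_le_left (by positivity) hI1
  have := intermediate_value_Icc (by linarith : -T ≤ T) hcont.continuousOn
  obtain ⟨t, ht, ht0⟩ := this (show (0 : ℝ) ∈ _ from ⟨by nlinarith, by nlinarith⟩)
  exact ⟨t, abs_le.2 ht, ht0⟩

lemma abs_qd_sub_le {P : Quad I} {B : ℝ} (hB : ‖P‖ ≤ B) (z : Euc I) :
    |qd P z - P.1| ≤ I * (B * ‖z‖) + 1 / 2 * (I * (I * (B * ‖z‖ ^ 2))) := by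
  obtain ⟨-, h1, h2⟩ := quad_coef P
  have e1 : qd ((P.1, 0) : Quad I) z = P.1 := by simp [qd]
  have := abs_qd_le (q := P - (P.1, 0)) (B0 := 0) (B1 := B) (B2 := B) (by simp)
    (fun i => by simpa using (h1 i).trans hB) (fun i j => by simpa using (h2 i j).trans hB) z
  rwa [qd_sub, e1, zero_add] at this

/-- Subtracting from a solution a quadratic polynomial which solves the equation at the origin,
and zooming in by the factor `σ ^ 2`, produces a nearly harmonic function. -/
lemma near_rescaled (hI : 0 < I) {ε : ℝ} {E : Euc I → ℝ → (Fin I → ℝ) → (Fin I → ℝ) → ℝ}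
    (hε : 0 ≤ ε) (hE : EllOp ε E) {u : Euc I → ℝ} (hu : ContDiffOn ℝ 2 u (ball 0 2))
    (heq : ∀ z ∈ ball (0 : Euc I) 2, E z (u z) (fun i => pd1 u i z) (fun i => pd2 u i z) = 0)
    {P : Quad I} {B : ℝ} (hB : ‖P‖ ≤ B) (hP : E 0 P.1 P.2.1 (fun i => P.2.2 i i) = 0)
    {σ : ℝ} (hσ : 0 < σ) (hσ1 : σ ≤ 1)
    (hPu : ∀ z ∈ ball (0 : Euc I) (2 * σ ^ 2), |u z - qd P z| ≤ σ ^ 5)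
    {w : Euc I → ℝ}
    (hw : w = fun y => (σ ^ 5)⁻¹ * (u (0 + dg (fun _ => σ ^ 2) y)
      - qd P (0 + dg (fun _ => σ ^ 2) y))) :
    ContDiffOn ℝ 2 w (ball 0 2) ∧ (∀ x ∈ ball (0 : Euc I) 2, |w x| ≤ 1) ∧
      Near (ε * (3 + 4 * B * (1 + 2 * I) ^ 2)) w := by
  have hI1 : (1 : ℝ) ≤ I := by exact_mod_cast hI
  have hB0 : 0 ≤ B := (norm_nonneg _).trans hB
  have hdg : ∀ y : Euc I, (0 : Euc I) + dg (fun _ => σ ^ 2) y = σ ^ 2 • y := fun y => by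
    ext i; simp
  have hnz : ∀ y : Euc I, ‖(0 : Euc I) + dg (fun _ => σ ^ 2) y‖ = σ ^ 2 * ‖y‖ := fun y => by
    rw [hdg, norm_smul, Real.norm_of_nonneg (by positivity)]
  have hσ2 : σ ^ 2 ≤ 1 := pow_le_one₀ hσ.le hσ1
  have hσ4 : σ ^ 4 ≤ 1 := pow_le_one₀ hσ.le hσ1
  have hmem : ∀ y ∈ ball (0 : Euc I) 2, (0 : Euc I) + dg (fun _ => σ ^ 2) y ∈ ball (0 : Euc I) 2 ∧
      (0 : Euc I) + dg (fun _ => σ ^ 2) y ∈ ball (0 : Euc I) (2 * σ ^ 2) := fun y hy => by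
    rw [mem_ball_zero_iff] at hy
    rw [mem_ball_zero_iff, mem_ball_zero_iff, hnz]
    have : 0 < σ ^ 2 := by positivity
    constructor <;> nlinarith [norm_nonneg y]
  have hca : ∀ z ∈ ball (0 : Euc I) 2, ContDiffAt ℝ 2 u z := fun z hz =>
    hu.contDiffAt (isOpen_ball.mem_nhds hz)
  have hcd : ∀ z ∈ ball (0 : Euc I) 2, ContDiffAt ℝ 2 (fun z => u z - qd P z) z := fun z hz =>
    (hca z hz).sub (qd_contDiff P).contDiffAt
  have hw1 : ∀ x ∈ ball (0 : Euc I) 2, |w x| ≤ 1 := fun y hy => by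
    have h5 : 0 < σ ^ 5 := by positivity
    rw [hw]
    simp only
    rw [abs_mul, abs_of_pos (inv_pos.2 h5), inv_mul_le_iff₀ h5, mul_one]
    exact hPu _ (hmem y hy).2
  refine ⟨fun y hy => ?_, hw1, fun y hy => ?_⟩
  · rw [hw]
    exact (contDiffAt_scale (f := fun z => u z - qd P z) (fun _ => σ ^ 2) (σ ^ 5)⁻¹
      (hcd _ (hmem y hy).1)).contDiffWithinAt
  · have hpd := fun i => pd_scale (f := fun z => u z - qd P z) (x0 := 0) (fun _ => σ ^ 2) (σ ^ 5)⁻¹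
      (y := y) (hcd _ (hmem y hy).1) i
    rw [← hw] at hpd
    have hz := (hmem y hy).1
    have hwy : σ ^ 5 * w y = u (0 + dg (fun _ => σ ^ 2) y)
        - qd P (0 + dg (fun _ => σ ^ 2) y) := by
      rw [hw]; simp only; field_simp
    have hnz' : ‖(0 : Euc I) + dg (fun _ => σ ^ 2) y‖ ≤ 2 * σ ^ 2 := by
      have := (hmem y hy).2; rw [mem_ball_zero_iff] at this; exact this.le
    generalize (0 : Euc I) + dg (fun _ => σ ^ 2) y = z at hpd hz hwy hnz'
    have hz2 : ‖z‖ ≤ 2 := by rw [mem_ball_zero_iff] at hz; exact hz.le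
    have hs := fun i => pd_sub (hca z hz) (qd_contDiff P).contDiffAt i
    have h1 : ∀ i, pd1 u i z = qd1 P i z + σ ^ 3 * pd1 w i y := fun i => by
      rw [(hpd i).1, (hs i).1, (pd_qd P z i).1]; field_simp; ring
    have h2 : ∀ i, pd2 u i z = P.2.2 i i + σ * pd2 w i y := fun i => by
      rw [(hpd i).2, (hs i).2, (pd_qd P z i).2]; field_simp; ring
    have h0 : u z = qd P z + σ ^ 5 * w y := by linarith
    have l1 := hE.lip z hz (qd P z) (σ ^ 5 * w y) (fun i => qd1 P i z) (fun i => σ ^ 3 * pd1 w i y)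
      (fun i => P.2.2 i i) (fun i => σ * pd2 w i y)
    have e1 : E z (qd P z + σ ^ 5 * w y) ((fun i => qd1 P i z) + fun i => σ ^ 3 * pd1 w i y)
        ((fun i => P.2.2 i i) + fun i => σ * pd2 w i y) = 0 := by
      rw [← heq z hz, ← h0]
      congr 1 <;> funext i
      · exact (h1 i).symm
      · exact (h2 i).symm
    rw [e1] at l1
    have l2 := hE.lip z hz P.1 (qd P z - P.1) P.2.1 (fun i => qd1 P i z - P.2.1 i)
      (fun i => P.2.2 i i) 0
    have e2 : P.2.1 + (fun i => qd1 P i z - P.2.1 i) = fun i => qd1 P i z := by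
      funext i; simp
    rw [e2, add_sub_cancel, add_zero] at l2
    simp only [Pi.zero_apply, Finset.sum_const_zero, sub_zero, abs_zero, add_zero] at l2
    have l3 := hE.pt z hz P.1 P.2.1 (fun i => P.2.2 i i)
    rw [hP, sub_zero] at l3
    obtain ⟨c0, c1, c2⟩ := quad_coef P
    have b1 := abs_qd_sub_le hB z
    have b2 : ∑ i, |qd1 P i z - P.2.1 i| ≤ I * (I * (B * ‖z‖)) := by
      calc _ ≤ ∑ _i : Fin I, (I * (B * ‖z‖) : ℝ) := Finset.sum_le_sum fun i _ =>
            abs_qd1_sub_le (fun i j => (c2 i j).trans hB) i z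
        _ = _ := by simp
    have b3 : ∑ i, |P.2.1 i| ≤ I * B := by
      calc _ ≤ ∑ _i : Fin I, B := Finset.sum_le_sum fun i _ => (c1 i).trans hB
        _ = _ := by simp
    have b4 : ∑ i, |P.2.2 i i| ≤ I * B := by
      calc _ ≤ ∑ _i : Fin I, B := Finset.sum_le_sum fun i _ => (c2 i i).trans hB
        _ = _ := by simp
    have b0 : |P.1| ≤ B := c0.trans hB
    set K : ℝ := (1 + 2 * I) ^ 2 with hK
    have hzn := norm_nonneg z
    have l2' : |E z (qd P z) (fun i => qd1 P i z) (fun i => P.2.2 i i)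
        - E z P.1 P.2.1 (fun i => P.2.2 i i)| ≤ ε * (B * K * ‖z‖) := by
      refine l2.trans (mul_le_mul_of_nonneg_left ?_ hε)
      have hBz : 0 ≤ B * ‖z‖ := by positivity
      have : B * ‖z‖ ^ 2 ≤ B * ‖z‖ * 2 := by rw [sq, ← mul_assoc]; gcongr
      have h3 : (I : ℝ) * (I * (B * ‖z‖ ^ 2)) ≤ I * (I * (B * ‖z‖ * 2)) := by gcongr
      have h4 : 0 ≤ (I : ℝ) * (B * ‖z‖) := by positivity
      have h5 : 0 ≤ (I : ℝ) * (I * (B * ‖z‖)) := by positivity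
      have h6 : B * K * ‖z‖ = B * ‖z‖ + 4 * (I * (B * ‖z‖)) + 4 * (I * (I * (B * ‖z‖))) := by
        rw [hK]; ring
      rw [h6]; linarith
    have l3' : |E z P.1 P.2.1 (fun i => P.2.2 i i)| ≤ ε * (‖z‖ * (1 + B * K)) := by
      rw [mul_assoc] at l3
      refine l3.trans (mul_le_mul_of_nonneg_left (mul_le_mul_of_nonneg_left ?_ hzn) hε)
      have h6 : B * K = B + 4 * (I * B) + 4 * (I * (I * B)) := by rw [hK]; ring
      have h4 : 0 ≤ (I : ℝ) * B := by positivity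
      have h5 : 0 ≤ (I : ℝ) * (I * B) := by positivity
      rw [h6]; linarith
    have l4 : |E z (qd P z) (fun i => qd1 P i z) (fun i => P.2.2 i i)|
        ≤ ε * (2 * σ ^ 2 * (1 + 2 * (B * K))) := by
      have h7 : |E z (qd P z) (fun i => qd1 P i z) (fun i => P.2.2 i i)|
          ≤ ε * (‖z‖ * (1 + 2 * (B * K))) := by
        have := abs_sub_abs_le_abs_sub (E z (qd P z) (fun i => qd1 P i z) (fun i => P.2.2 i i))
          (E z P.1 P.2.1 (fun i => P.2.2 i i))
        have h8 : ε * (‖z‖ * (1 + 2 * (B * K))) = ε * (B * K * ‖z‖) + ε * (‖z‖ * (1 + B * K)) := by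
          ring
        linarith
      refine h7.trans (mul_le_mul_of_nonneg_left (mul_le_mul_of_nonneg_right hnz' ?_) hε)
      positivity
    simp only [← Finset.mul_sum, abs_mul, abs_of_pos hσ, abs_of_pos (pow_pos hσ _)] at l1
    have hw1y := hw1 y hy
    set S1 := ∑ i, |pd1 w i y| with hS1
    set S2 := ∑ i, |pd2 w i y| with hS2
    have hS1' : 0 ≤ S1 := Finset.sum_nonneg fun i _ => abs_nonneg _
    have hS2' : 0 ≤ S2 := Finset.sum_nonneg fun i _ => abs_nonneg _
    have hBK : 0 ≤ B * K := by positivity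
    have l5 : σ * |∑ i, pd2 w i y| ≤ σ * (ε * (3 + 4 * B * K) * (1 + S1 + S2)) := by
      have t1 : |σ * ∑ i, pd2 w i y| ≤ ε * (σ ^ 5 * |w y| + σ ^ 3 * S1 + σ * S2)
          + ε * (2 * σ ^ 2 * (1 + 2 * (B * K))) := by
        have := abs_sub_abs_le_abs_sub (σ * ∑ i, pd2 w i y)
          (-E z (qd P z) (fun i => qd1 P i z) (fun i => P.2.2 i i))
        rw [abs_neg] at this
        have t2 : |σ * ∑ i, pd2 w i y - -E z (qd P z) (fun i => qd1 P i z) (fun i => P.2.2 i i)|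
          = |0 - E z (qd P z) (fun i => qd1 P i z) (fun i => P.2.2 i i)
            - σ * ∑ i, pd2 w i y| := by rw [← abs_neg]; congr 1; ring
        rw [t2] at this
        linarith
      rw [abs_mul, abs_of_pos hσ] at t1
      refine t1.trans ?_
      rw [← mul_add, show σ * (ε * (3 + 4 * B * K) * (1 + S1 + S2))
        = ε * (σ * ((3 + 4 * B * K) * (1 + S1 + S2))) by ring]
      refine mul_le_mul_of_nonneg_left ?_ hε
      have u1 : σ ^ 5 * |w y| ≤ σ := by
        calc σ ^ 5 * |w y| = σ * (σ ^ 4 * |w y|) := by ring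
          _ ≤ σ * (1 * 1) := by gcongr
          _ = σ := by ring
      have u2 : σ ^ 3 * S1 ≤ σ * S1 := by
        calc σ ^ 3 * S1 = σ * (σ ^ 2 * S1) := by ring
          _ ≤ σ * (1 * S1) := by gcongr
          _ = _ := by ring
      have u3 : 2 * σ ^ 2 * (1 + 2 * (B * K)) ≤ σ * (2 * (1 + 2 * (B * K))) := by
        calc 2 * σ ^ 2 * (1 + 2 * (B * K)) = σ * (σ * (2 * (1 + 2 * (B * K)))) := by ring
          _ ≤ σ * (1 * (2 * (1 + 2 * (B * K)))) := by gcongr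
          _ = _ := by ring
      have u4 : 0 ≤ σ * (2 + 4 * (B * K)) * (S1 + S2) := by positivity
      have u5 : σ * ((3 + 4 * B * K) * (1 + S1 + S2)) = σ + σ * S1 + σ * S2
        + σ * (2 * (1 + 2 * (B * K))) + σ * (2 + 4 * (B * K)) * (S1 + S2) := by ring
      linarith
    exact le_of_mul_le_mul_left l5 hσ

lemma C3_pos : 0 < C3 I := by unfold C3; positivity

/-- Perturbing the quadratic polynomial `P` by a rescaled copy of `Q` and a multiple of
`‖z‖ ^ 2`. -/
def nextQuad (P Q : Quad I) (σ t : ℝ) : Quad I :=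
  (P.1 + σ ^ 5 * Q.1, fun i => P.2.1 i + σ ^ 3 * Q.2.1 i,
    fun i j => P.2.2 i j + σ * (Q.2.2 i j + if i = j then t else 0))

lemma qd_nextQuad (P Q : Quad I) (σ t : ℝ) (y : Euc I) :
    qd (nextQuad P Q σ t) (σ ^ 2 • y) = qd P (σ ^ 2 • y)
      + σ ^ 5 * (qd Q y + 1 / 2 * (t * ‖y‖ ^ 2)) := by
  have h1 : ∑ i, (P.2.1 i + σ ^ 3 * Q.2.1 i) * (σ ^ 2 * y i)
      = ∑ i, P.2.1 i * (σ ^ 2 * y i) + σ ^ 5 * ∑ i, Q.2.1 i * y i := by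
    rw [Finset.mul_sum, ← Finset.sum_add_distrib]
    exact Finset.sum_congr rfl fun i _ => by ring
  have h2 : ∑ i, ∑ j, (P.2.2 i j + σ * (Q.2.2 i j + if i = j then t else 0))
      * ((σ ^ 2 * y i) * (σ ^ 2 * y j))
      = ∑ i, ∑ j, P.2.2 i j * ((σ ^ 2 * y i) * (σ ^ 2 * y j))
        + σ ^ 5 * (∑ i, ∑ j, Q.2.2 i j * (y i * y j) + t * ‖y‖ ^ 2) := by
    have h3 : t * ‖y‖ ^ 2 = ∑ i, ∑ j, (if i = j then t else 0) * (y i * y j) := by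
      rw [EuclideanSpace.norm_sq_eq, Finset.mul_sum]
      refine Finset.sum_congr rfl fun i _ => ?_
      simp [ite_mul, sq]
    rw [h3, ← Finset.sum_add_distrib, Finset.mul_sum, ← Finset.sum_add_distrib]
    refine Finset.sum_congr rfl fun i _ => ?_
    rw [← Finset.sum_add_distrib, Finset.mul_sum, ← Finset.sum_add_distrib]
    exact Finset.sum_congr rfl fun j _ => by ring
  simp only [qd, nextQuad, PiLp.smul_apply, smul_eq_mul, h1, h2]
  ring

/-- One step of the approximation by quadratic polynomials: from accuracy `σ ^ 5` on the ball of
radius `2 σ ^ 2` to accuracy `(s σ) ^ 5` on the ball of radius `2 (s σ) ^ 2`. -/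
lemma quad_step (hI : 0 < I) {s ε ε1 B : ℝ} (hs : 0 < s) (hs4 : s ≤ 1 / 4)
    (hs3 : 32 * C3 I * s ≤ 1)
    (happ : ∀ w : Euc I → ℝ, ContDiffOn ℝ 2 w (ball 0 2) →
      (∀ x ∈ ball (0 : Euc I) 2, |w x| ≤ 1) → Near ε1 w →
      ∃ p : MvPolynomial (Fin I) ℝ, lap p = 0 ∧ (∀ x : Euc I, ‖x‖ ≤ 1 → |pf p x| ≤ 2) ∧
        ∀ x : Euc I, ‖x‖ ≤ 1 / 2 → |w x - pf p x| ≤ s ^ 5 / 4)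
    (hε : 0 ≤ ε) (hε8 : ε ≤ 1 / 8) (hε1 : ε * (3 + 4 * B * (1 + 2 * I) ^ 2) ≤ ε1)
    (hεs : ε * (8 * ((1 + 2 * I) * C3 I)) ≤ s)
    {E : Euc I → ℝ → (Fin I → ℝ) → (Fin I → ℝ) → ℝ} (hE : EllOp ε E) {u : Euc I → ℝ}
    (hu : ContDiffOn ℝ 2 u (ball 0 2))
    (heq : ∀ z ∈ ball (0 : Euc I) 2, E z (u z) (fun i => pd1 u i z) (fun i => pd2 u i z) = 0)
    {P : Quad I} (hB : ‖P‖ ≤ B) (hP : E 0 P.1 P.2.1 (fun i => P.2.2 i i) = 0)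
    {σ : ℝ} (hσ : 0 < σ) (hσ1 : σ ≤ 1)
    (hPu : ∀ z ∈ ball (0 : Euc I) (2 * σ ^ 2), |u z - qd P z| ≤ σ ^ 5) :
    ∃ P' : Quad I, E 0 P'.1 P'.2.1 (fun i => P'.2.2 i i) = 0 ∧
      (∀ z ∈ ball (0 : Euc I) (2 * (s * σ) ^ 2), |u z - qd P' z| ≤ (s * σ) ^ 5) ∧
      |P'.1 - P.1| ≤ (C3 I + 1) * σ ^ 5 ∧ (∀ i, |P'.2.1 i - P.2.1 i| ≤ (C3 I + 1) * σ ^ 3) ∧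
      ∀ i j, |P'.2.2 i j - P.2.2 i j| ≤ (C3 I + 1) * σ := by
  obtain ⟨w, hw⟩ : ∃ w : Euc I → ℝ, w = fun y => (σ ^ 5)⁻¹ * (u (0 + dg (fun _ => σ ^ 2) y)
      - qd P (0 + dg (fun _ => σ ^ 2) y)) := ⟨_, rfl⟩
  obtain ⟨hw2, hw1, hwN⟩ := near_rescaled hI hε hE hu heq hB hP hσ hσ1 hPu hw
  have hwN' : Near ε1 w := fun x hx => (hwN x hx).trans
    (mul_le_mul_of_nonneg_right hε1 (by positivity))
  obtain ⟨p, hp, hp2, hpw⟩ := happ w hw2 hw1 hwN'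
  obtain ⟨Q, hQ, hQt, hQp⟩ := harmonic_taylor hp hp2
  obtain ⟨c0, c1, c2⟩ := quad_coef Q
  have hC := C3_pos (I := I)
  have hσ2 : σ ^ 2 ≤ 1 := pow_le_one₀ hσ.le hσ1
  have hσ4 : σ ^ 4 ≤ 1 := pow_le_one₀ hσ.le hσ1
  -- size of the equation at the origin after adding the harmonic jet `Q`
  have hA : |E 0 (P.1 + σ ^ 5 * Q.1) (P.2.1 + fun i => σ ^ 3 * Q.2.1 i)
      ((fun i => P.2.2 i i) + fun i => σ * Q.2.2 i i)| ≤ ε * (σ * ((1 + 2 * I) * C3 I)) := by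
    have h := hE.lip 0 (by simp) P.1 (σ ^ 5 * Q.1) P.2.1 (fun i => σ ^ 3 * Q.2.1 i)
      (fun i => P.2.2 i i) (fun i => σ * Q.2.2 i i)
    rw [hP] at h
    simp only [← Finset.mul_sum, hQt, abs_mul, abs_of_pos hσ, abs_of_pos (pow_pos hσ _),
      mul_zero, sub_zero] at h
    refine h.trans (mul_le_mul_of_nonneg_left ?_ hε)
    have b1 : ∑ i, |Q.2.1 i| ≤ I * C3 I := by
      calc _ ≤ ∑ _i : Fin I, C3 I := Finset.sum_le_sum fun i _ => (c1 i).trans hQ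
        _ = _ := by simp
    have b2 : ∑ i, |Q.2.2 i i| ≤ I * C3 I := by
      calc _ ≤ ∑ _i : Fin I, C3 I := Finset.sum_le_sum fun i _ => (c2 i i).trans hQ
        _ = _ := by simp
    calc σ ^ 5 * |Q.1| + σ ^ 3 * ∑ i, |Q.2.1 i| + σ * ∑ i, |Q.2.2 i i|
        ≤ σ ^ 5 * C3 I + σ ^ 3 * (I * C3 I) + σ * (I * C3 I) := by
          gcongr; exact c0.trans hQ
      _ = σ * (σ ^ 4 * C3 I + σ ^ 2 * (I * C3 I) + I * C3 I) := by ring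
      _ ≤ σ * (1 * C3 I + 1 * (I * C3 I) + I * C3 I) := by gcongr
      _ = _ := by ring
  obtain ⟨t, ht, ht0⟩ := hE.exists_root hI hε8 hA hσ.le (by positivity : 0 ≤ s / 4) (by
    calc ε * (σ * ((1 + 2 * I) * C3 I)) = σ * (ε * (8 * ((1 + 2 * I) * C3 I))) / 8 := by ring
      _ ≤ σ * s / 8 := by gcongr
      _ = _ := by ring)
  have ht1 : |t| ≤ 1 := by linarith
  refine ⟨nextQuad P Q σ t, ?_, fun z hz => ?_, ?_, fun i => ?_, fun i j => ?_⟩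
  · rw [← ht0]
    congr 1
    funext i
    simp [nextQuad]
    ring
  · rw [mem_ball_zero_iff] at hz
    obtain ⟨y, rfl⟩ : ∃ y : Euc I, z = σ ^ 2 • y := ⟨(σ ^ 2)⁻¹ • z, by
      rw [smul_smul, mul_inv_cancel₀ (by positivity), one_smul]⟩
    rw [norm_smul, Real.norm_of_nonneg (by positivity), mul_pow, mul_comm (s ^ 2),
      mul_left_comm] at hz
    have hy : ‖y‖ ≤ 2 * s ^ 2 := (lt_of_mul_lt_mul_left hz (by positivity)).le
    have hs2 : s ^ 2 ≤ 1 / 16 := by nlinarith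
    have hwy : u (σ ^ 2 • y) - qd P (σ ^ 2 • y) = σ ^ 5 * w y := by
      have hdg : (0 : Euc I) + dg (fun _ => σ ^ 2) y = σ ^ 2 • y := by ext i; simp
      rw [hw]; simp only [hdg]; field_simp
    have h1 := hpw y (by linarith)
    have h2 := hQp y (by linarith)
    rw [qd_nextQuad, ← sub_sub, hwy, ← mul_sub, abs_mul, abs_of_pos (pow_pos hσ _), mul_pow,
      mul_comm]
    refine mul_le_mul_of_nonneg_right ?_ (by positivity)
    have e1 : w y - (qd Q y + 1 / 2 * (t * ‖y‖ ^ 2)) = (w y - pf p y) + (pf p y - qd Q y)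
        + -(1 / 2 * (t * ‖y‖ ^ 2)) := by ring
    have h3 : |-(1 / 2 * (t * ‖y‖ ^ 2))| ≤ s ^ 5 / 2 := by
      rw [abs_neg, abs_mul, abs_mul, abs_of_pos (by norm_num : (0 : ℝ) < 1 / 2),
        abs_of_nonneg (by positivity : 0 ≤ ‖y‖ ^ 2)]
      calc 1 / 2 * (|t| * ‖y‖ ^ 2) ≤ 1 / 2 * (s / 4 * (2 * s ^ 2) ^ 2) := by gcongr
        _ = s ^ 5 / 2 := by ring
    have h4 : C3 I * ‖y‖ ^ 3 ≤ s ^ 5 / 4 := by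
      calc C3 I * ‖y‖ ^ 3 ≤ C3 I * (2 * s ^ 2) ^ 3 := by gcongr
        _ = s ^ 5 / 4 * (32 * C3 I * s) := by ring
        _ ≤ s ^ 5 / 4 * 1 := by gcongr
        _ = _ := by ring
    rw [e1]
    refine (abs_add_le _ _).trans ?_
    have := abs_add_le (w y - pf p y) (pf p y - qd Q y)
    linarith
  · simp only [nextQuad, add_sub_cancel_left, abs_mul, abs_of_pos (pow_pos hσ _)]
    rw [mul_comm]; gcongr; linarith
  · simp only [nextQuad, add_sub_cancel_left, abs_mul, abs_of_pos (pow_pos hσ _)]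
    rw [mul_comm]; gcongr; linarith [c1 i]
  · simp only [nextQuad, add_sub_cancel_left, abs_mul, abs_of_pos hσ]
    rw [mul_comm]; gcongr
    refine (abs_add_le _ _).trans (add_le_add ((c2 i j).trans hQ) ?_)
    split_ifs
    · exact ht1
    · simp

lemma exists_lim_geometric {x : ℕ → ℝ} {D r : ℝ} (hr0 : 0 ≤ r) (hr : r ≤ 1 / 2) (hD : 0 ≤ D)
    (h : ∀ k, |x (k + 1) - x k| ≤ D * r ^ k) : ∃ l, ∀ k, |x k - l| ≤ 2 * D * r ^ k := by
  have h' : ∀ k, dist (x k) (x (k + 1)) ≤ D * r ^ k := fun k => by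
    rw [dist_comm, Real.dist_eq]; exact h k
  have hr1 : r < 1 := by linarith
  obtain ⟨l, hl⟩ := cauchySeq_tendsto_of_complete (cauchySeq_of_le_geometric r D hr1 h')
  refine ⟨l, fun k => ?_⟩
  have := dist_le_of_le_geometric_of_tendsto r D hr1 h' hl k
  rw [Real.dist_eq] at this
  refine this.trans ?_
  rw [div_le_iff₀ (by linarith)]
  have : 0 ≤ D * r ^ k := by positivity
  nlinarith

/-- Pointwise second order Taylor expansion with remainder of order `5 / 2`, at the origin, for
bounded solutions of equations close to the Laplace equation. -/
theorem pointwise_C2 (hI : 0 < I) : ∃ ε C : ℝ, 0 < ε ∧ 0 < C ∧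
    ∀ (E : Euc I → ℝ → (Fin I → ℝ) → (Fin I → ℝ) → ℝ) (u : Euc I → ℝ), EllOp ε E →
      ContDiffOn ℝ 2 u (ball 0 2) → (∀ z ∈ ball (0 : Euc I) 2, |u z| ≤ 1 / 2) →
      (∀ z ∈ ball (0 : Euc I) 2, E z (u z) (fun i => pd1 u i z) (fun i => pd2 u i z) = 0) →
      ∃ q : Quad I, ‖q‖ ≤ C ∧ ∀ z : Euc I, ‖z‖ ≤ 1 → |u z - qd q z| ≤ C * √‖z‖ ^ 5 := by
  have hI1 : (1 : ℝ) ≤ I := by exact_mod_cast hI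
  have hC := C3_pos (I := I)
  set C4 : ℝ := C3 I + 1 with hC4
  set B : ℝ := 1 + 2 * C4 with hB
  obtain ⟨s, hs, hs4, hs3⟩ : ∃ s : ℝ, 0 < s ∧ s ≤ 1 / 4 ∧ 32 * C3 I * s ≤ 1 := by
    refine ⟨1 / (32 * C3 I + 4), by positivity, ?_, ?_⟩
    · rw [div_le_div_iff_of_pos_left] <;> linarith
    · rw [mul_one_div, div_le_one (by positivity)]; linarith
  obtain ⟨ε1, hε1, happ⟩ := approx hI (δ := s ^ 5 / 4) (by positivity) (by
    have : s ^ 5 ≤ 1 := pow_le_one₀ hs.le (by linarith)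
    linarith)
  have hK : 0 < 3 + 4 * B * (1 + 2 * (I : ℝ)) ^ 2 := by positivity
  have hK2 : 0 < 8 * ((1 + 2 * (I : ℝ)) * C3 I) := by positivity
  obtain ⟨ε, hε, hε8, hεK, hεK2⟩ : ∃ ε : ℝ, 0 < ε ∧ ε ≤ 1 / 8 ∧
      ε * (3 + 4 * B * (1 + 2 * I) ^ 2) ≤ ε1 ∧ ε * (8 * ((1 + 2 * I) * C3 I)) ≤ s := by
    refine ⟨min (1 / 8) (min (ε1 / (3 + 4 * B * (1 + 2 * I) ^ 2)) (s / (8 * ((1 + 2 * I) * C3 I)))),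
      by positivity, min_le_left _ _, ?_, ?_⟩
    · rw [← le_div_iff₀ hK]; exact (min_le_right _ _).trans (min_le_left _ _)
    · rw [← le_div_iff₀ hK2]; exact (min_le_right _ _).trans (min_le_right _ _)
  set D : ℝ := 1 + 2 * C4 * (1 + 2 * I + 2 * I ^ 2) with hD
  have hD0 : 0 < D := by positivity
  refine ⟨ε, D / s ^ 5 + (B + 2 * C4), hε, by positivity, fun E u hE hu hu1 heq => ?_⟩
  let Inv : ℕ → Quad I → Prop := fun k P => E 0 P.1 P.2.1 (fun i => P.2.2 i i) = 0 ∧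
    (∀ z ∈ ball (0 : Euc I) (2 * (s ^ k) ^ 2), |u z - qd P z| ≤ (s ^ k) ^ 5) ∧
    ‖P‖ ≤ 1 + 2 * C4 * (1 - s ^ k)
  let Diff : ℕ → Quad I → Quad I → Prop := fun k P P' =>
    |P'.1 - P.1| ≤ C4 * (s ^ k) ^ 5 ∧ (∀ i, |P'.2.1 i - P.2.1 i| ≤ C4 * (s ^ k) ^ 3) ∧
      ∀ i j, |P'.2.2 i j - P.2.2 i j| ≤ C4 * s ^ k
  have hsk : ∀ k : ℕ, 0 < s ^ k ∧ s ^ k ≤ 1 := fun k =>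
    ⟨pow_pos hs k, pow_le_one₀ hs.le (by linarith)⟩
  have hstep : ∀ k P, Inv k P → ∃ P', Inv (k + 1) P' ∧ Diff k P P' := by
    rintro k P ⟨p1, p2, p3⟩
    obtain ⟨k0, k1⟩ := hsk k
    have hPB : ‖P‖ ≤ B := by
      have : 0 ≤ 2 * C4 * s ^ k := by positivity
      rw [hB]; linarith
    obtain ⟨P', q1, q2, q3, q4, q5⟩ := quad_step hI hs hs4 hs3 happ hε.le hε8 hεK hεK2 hE hu heq
      hPB p1 k0 k1 p2
    refine ⟨P', ⟨q1, ?_, ?_⟩, q3, q4, q5⟩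
    · rw [pow_succ s k, mul_comm (s ^ k)]; exact q2
    · have hd : ‖P' - P‖ ≤ C4 * s ^ k := by
        have h5 : (s ^ k) ^ 5 ≤ s ^ k := pow_le_of_le_one k0.le k1 (by norm_num)
        have h3 : (s ^ k) ^ 3 ≤ s ^ k := pow_le_of_le_one k0.le k1 (by norm_num)
        refine quad_norm_le (by positivity) (q3.trans ?_) (fun i => (q4 i).trans ?_) q5 <;> gcongr
      have hn : ‖P'‖ ≤ ‖P‖ + ‖P' - P‖ := by
        simpa using norm_add_le P (P' - P)
      have : C4 * s ^ k * s ≤ C4 * s ^ k * (1 / 4) := by gcongr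
      have h6 : 0 < C4 * s ^ k := by positivity
      rw [pow_succ s k]
      linarith
  obtain ⟨P0, hP0⟩ : ∃ P, Inv 0 P := by
    obtain ⟨t, ht, ht0⟩ := hE.exists_root hI hε8 (s := 0) (p := 0) (q := 0) (σ := 1) (T := 1 / 4)
      (hE.zero.trans hε8) zero_le_one (by norm_num) (by norm_num)
    refine ⟨(0, 0, fun i j => if i = j then t else 0), ?_, fun z hz => ?_, ?_⟩
    · rw [← ht0]; congr 1; funext i; simp
    · rw [pow_zero, one_pow, mul_one, mem_ball_zero_iff] at hz
      have h1 := hu1 z (by rw [mem_ball_zero_iff]; exact hz)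
      have h2 : qd ((0, 0, fun i j => if i = j then t else 0) : Quad I) z = 1 / 2 * (t * ‖z‖ ^ 2) := by
        rw [EuclideanSpace.norm_sq_eq, Finset.mul_sum]
        simp [qd, ite_mul, sq]
      rw [h2]
      have h3 : |1 / 2 * (t * ‖z‖ ^ 2)| ≤ 1 / 2 := by
        rw [abs_mul, abs_mul, abs_of_pos (by norm_num : (0 : ℝ) < 1 / 2),
          abs_of_nonneg (by positivity : 0 ≤ ‖z‖ ^ 2)]
        calc 1 / 2 * (|t| * ‖z‖ ^ 2) ≤ 1 / 2 * (1 / 4 * 2 ^ 2) := by gcongr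
          _ = _ := by norm_num
      simp only [pow_zero, one_pow]
      exact (abs_sub _ _).trans (by linarith)
    · refine quad_norm_le (by simp) (by simp) (by simp) fun i j => ?_
      simp only
      split_ifs
      · simp; linarith
      · simp
  choose F hF using hstep
  let seq : (k : ℕ) → {P // Inv k P} := fun k => Nat.rec ⟨P0, hP0⟩
    (fun k P => ⟨F k P.1 P.2, (hF k P.1 P.2).1⟩) k
  let f : ℕ → Quad I := fun k => (seq k).1
  have hInv : ∀ k, Inv k (f k) := fun k => (seq k).2
  have hDiff : ∀ k, Diff k (f k) (f (k + 1)) := fun k => (hF k (seq k).1 (seq k).2).2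
  have hC40 : 0 < C4 := by positivity
  have hcomm : ∀ k j : ℕ, (s ^ k) ^ j = (s ^ j) ^ k := fun k j => by
    rw [← pow_mul, ← pow_mul, mul_comm]
  have hsj : ∀ j : ℕ, j ≠ 0 → s ^ j ≤ 1 / 2 := fun j hj =>
    (pow_le_of_le_one hs.le (by linarith) hj).trans (by linarith)
  obtain ⟨l0, hl0⟩ := exists_lim_geometric (x := fun k => (f k).1) (r := s ^ 5) (by positivity)
    (hsj 5 (by norm_num)) hC40.le (fun k => by rw [← hcomm]; exact (hDiff k).1)
  choose l1 hl1 using fun i => exists_lim_geometric (x := fun k => (f k).2.1 i) (r := s ^ 3)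
    (by positivity) (hsj 3 (by norm_num)) hC40.le (fun k => by rw [← hcomm]; exact (hDiff k).2.1 i)
  choose l2 hl2 using fun i j => exists_lim_geometric (x := fun k => (f k).2.2 i j) (r := s)
    hs.le (by linarith) hC40.le (fun k => (hDiff k).2.2 i j)
  let q : Quad I := (l0, l1, l2)
  have hkey : ∀ k (z : Euc I), ‖z‖ ≤ (s ^ k) ^ 2 → |u z - qd q z| ≤ D * (s ^ k) ^ 5 := by
    intro k z hz
    obtain ⟨k0, k1⟩ := hsk k
    have h1 := (hInv k).2.1 z (by
      rw [mem_ball_zero_iff]; have : 0 < (s ^ k) ^ 2 := by positivity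
      linarith)
    have h2 := abs_qd_le (q := f k - q) (B0 := 2 * C4 * (s ^ k) ^ 5) (B1 := 2 * C4 * (s ^ k) ^ 3)
      (B2 := 2 * C4 * s ^ k) (by rw [hcomm]; exact hl0 k)
      (fun i => by rw [hcomm]; exact hl1 i k) (fun i j => hl2 i j k) z
    rw [qd_sub] at h2
    have h3 : 2 * C4 * (s ^ k) ^ 5 + I * (2 * C4 * (s ^ k) ^ 3 * ‖z‖)
        + 1 / 2 * (I * (I * (2 * C4 * s ^ k * ‖z‖ ^ 2))) ≤ (D - 1) * (s ^ k) ^ 5 := by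
      calc _ ≤ 2 * C4 * (s ^ k) ^ 5 + I * (2 * C4 * (s ^ k) ^ 3 * (s ^ k) ^ 2)
            + 1 / 2 * (I * (I * (2 * C4 * s ^ k * ((s ^ k) ^ 2) ^ 2))) := by gcongr
        _ = 2 * C4 * (s ^ k) ^ 5 * (1 + I + 1 / 2 * I ^ 2) := by ring
        _ ≤ 2 * C4 * (s ^ k) ^ 5 * (1 + 2 * I + 2 * I ^ 2) := by gcongr <;> linarith
        _ = _ := by rw [hD]; ring
    have h4 : u z - qd q z = (u z - qd (f k) z) + (qd (f k) z - qd q z) := by ring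
    rw [h4]
    refine (abs_add_le _ _).trans ?_
    linarith
  refine ⟨q, ?_, fun z hz => ?_⟩
  · have hf0 : ‖f 0‖ ≤ 1 := by simpa using (hInv 0).2.2
    have hd : ‖f 0 - q‖ ≤ 2 * C4 := by
      refine quad_norm_le (by positivity) ?_ (fun i => ?_) (fun i j => ?_)
      · simpa using hl0 0
      · simpa using hl1 i 0
      · simpa using hl2 i j 0
    have hn : ‖q‖ ≤ ‖f 0‖ + ‖f 0 - q‖ := by
      simpa using norm_sub_le (f 0) (f 0 - q)
    have : 0 < D / s ^ 5 := by positivity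
    rw [hB]; linarith
  · rcases eq_or_ne z 0 with rfl | hz0
    · have ht : Tendsto (fun k : ℕ => D * (s ^ k) ^ 5) atTop (𝓝 (D * 0 ^ 5)) :=
        ((tendsto_pow_atTop_nhds_zero_of_lt_one hs.le (by linarith)).pow 5).const_mul D
      have := ge_of_tendsto' ht fun k => hkey k 0 (by simp; positivity)
      simpa using this
    · have hzp : 0 < ‖z‖ := norm_pos_iff.2 hz0
      obtain ⟨k, hk1, hk2⟩ := exists_nat_pow_near_of_lt_one (Real.sqrt_pos.2 hzp)
        (Real.sqrt_le_one.2 hz) hs (by linarith)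
      have h1 := hkey k z (by
        calc ‖z‖ = √‖z‖ ^ 2 := (Real.sq_sqrt hzp.le).symm
          _ ≤ _ := by gcongr)
      have h2 : (s ^ k) ^ 5 ≤ √‖z‖ ^ 5 / s ^ 5 := by
        rw [le_div_iff₀ (by positivity), ← mul_pow, ← pow_succ]; gcongr
      calc |u z - qd q z| ≤ D * (s ^ k) ^ 5 := h1
        _ ≤ D * (√‖z‖ ^ 5 / s ^ 5) := by gcongr
        _ = D / s ^ 5 * √‖z‖ ^ 5 := by ring
        _ ≤ _ := by gcongr; linarith

/-! ### Application to the HJB equation -/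

lemma abs_iInf_sub_le (hI : 0 < I) (f g : Fin I → ℝ) :
    |(⨅ i, f i) - ⨅ i, g i| ≤ ∑ i, |f i - g i| := by
  have : Nonempty (Fin I) := ⟨⟨0, hI⟩⟩
  have key : ∀ f g : Fin I → ℝ, (⨅ i, f i) - ∑ i, |f i - g i| ≤ ⨅ i, g i := fun f g => by
    refine le_ciInf fun i => ?_
    have h1 : (⨅ i, f i) ≤ f i := ciInf_le (Finite.bddBelow_range f) i
    have h2 : |f i - g i| ≤ ∑ i, |f i - g i| :=
      Finset.single_le_sum (f := fun i => |f i - g i|) (fun _ _ => abs_nonneg _)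
        (Finset.mem_univ i)
    have := le_abs_self (f i - g i)
    linarith
  have h1 := key f g
  have h2 := key g f
  simp_rw [abs_sub_comm (g _) (f _)] at h2
  rw [abs_le]; constructor <;> linarith

/-- Operators of the type occurring in the HJB equation are close to the Laplacian as soon as their
coefficients are. -/
lemma ellOp_mk (hI : 0 < I) {ε α : ℝ} {G : Euc I → ℝ} {k0 k1 k2 : Fin I → ℝ}
    {b θ : Fin I → Euc I → ℝ} (hα : |α| ≤ ε)
    (h1 : ∀ z ∈ ball (0 : Euc I) 2, ∀ i, |G z| * |k1 i| + |b i z| ≤ ε)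
    (h2 : ∀ z ∈ ball (0 : Euc I) 2, ∀ i, |G z| * |k2 i| + |θ i z| ≤ ε)
    (h3 : ∀ z ∈ ball (0 : Euc I) 2, |G z - G 0| * ∑ i, |k0 i| ≤ ε * ‖z‖)
    (h4 : ∀ z ∈ ball (0 : Euc I) 2, ∀ i, |G z - G 0| * |k1 i| + |b i z - b i 0| ≤ ε * ‖z‖)
    (h5 : ∀ z ∈ ball (0 : Euc I) 2, ∀ i, |G z - G 0| * |k2 i| + |θ i z - θ i 0| ≤ ε * ‖z‖)
    (h6 : |G 0| * ∑ i, |k0 i| ≤ ε) :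
    EllOp ε (fun z s p q => -α * s + G z * (⨅ i, (k0 i + k1 i * p i - k2 i * q i))
      + ∑ i, b i z * p i + ∑ i, (1 + θ i z) * q i) := by
  have hsum : ∀ (A : ℝ) (f g : Fin I → ℝ), A * ∑ i, |f i| + ∑ i, |g i|
      = ∑ i, (A * |f i| + |g i|) := fun A f g => by
    rw [Finset.sum_add_distrib, Finset.mul_sum]
  have hcore : ∀ (g : ℝ) (f b' p θ' q : Fin I → ℝ) (B : ℝ), (∀ i, |g| * |k1 i| + |b' i| ≤ B) →
      (∀ i, |g| * |k2 i| + |θ' i| ≤ B) → (∀ i, |f i| ≤ |k1 i * p i| + |k2 i * q i|) →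
      |g| * ∑ i, |f i| + (|∑ i, b' i * p i| + |∑ i, θ' i * q i|)
        ≤ B * (∑ i, |p i| + ∑ i, |q i|) := by
    intro g f b' p θ' q B hb hθ hf
    have s1 := Finset.abs_sum_le_sum_abs (fun i => b' i * p i) Finset.univ
    have s2 := Finset.abs_sum_le_sum_abs (fun i => θ' i * q i) Finset.univ
    have s3 : |g| * ∑ i, |f i| + (∑ i, |b' i * p i| + ∑ i, |θ' i * q i|)
        ≤ B * (∑ i, |p i| + ∑ i, |q i|) := by
      rw [Finset.mul_sum, ← Finset.sum_add_distrib, ← Finset.sum_add_distrib,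
        ← Finset.sum_add_distrib, Finset.mul_sum]
      refine Finset.sum_le_sum fun i _ => ?_
      have u1 := mul_le_mul_of_nonneg_right (hb i) (abs_nonneg (p i))
      have u2 := mul_le_mul_of_nonneg_right (hθ i) (abs_nonneg (q i))
      have u3 := mul_le_mul_of_nonneg_left (hf i) (abs_nonneg g)
      simp only [abs_mul] at u3 ⊢
      linarith
    linarith
  have hz0 : (0 : Euc I) ∈ ball (0 : Euc I) 2 := by simp
  have hε : 0 ≤ ε := (abs_nonneg _).trans hα
  refine ⟨fun z hz s s' p p' q q' => ?_, fun z hz s p q => ?_, ?_⟩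
  · have hi := abs_iInf_sub_le hI (fun i => k0 i + k1 i * (p + p') i - k2 i * (q + q') i)
      (fun i => k0 i + k1 i * p i - k2 i * q i)
    have hc := hcore (G z) (fun i => (k0 i + k1 i * (p + p') i - k2 i * (q + q') i)
      - (k0 i + k1 i * p i - k2 i * q i)) (fun i => b i z) p' (fun i => θ i z) q' ε (h1 z hz)
      (h2 z hz) (fun i => by
        have : (k0 i + k1 i * (p + p') i - k2 i * (q + q') i) - (k0 i + k1 i * p i - k2 i * q i)
          = k1 i * p' i - k2 i * q' i := by simp only [Pi.add_apply]; ring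
        rw [this]; exact abs_sub _ _)
    set i1 := ⨅ i, (k0 i + k1 i * (p + p') i - k2 i * (q + q') i)
    set i2 := ⨅ i, (k0 i + k1 i * p i - k2 i * q i)
    have e1 : -α * (s + s') + G z * i1 + ∑ i, b i z * (p + p') i + ∑ i, (1 + θ i z) * (q + q') i
        - (-α * s + G z * i2 + ∑ i, b i z * p i + ∑ i, (1 + θ i z) * q i) - ∑ i, q' i
        = -α * s' + G z * (i1 - i2) + (∑ i, b i z * p' i + ∑ i, θ i z * q' i) := by
      simp only [Pi.add_apply, mul_add, Finset.sum_add_distrib, add_mul, one_mul]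
      ring
    rw [e1]
    refine (abs_add_le _ _).trans ?_
    have t1 := abs_add_le (-α * s') (G z * (i1 - i2))
    have t2 := abs_add_le (∑ i, b i z * p' i) (∑ i, θ i z * q' i)
    rw [abs_mul, abs_mul, abs_neg] at t1
    have t3 := mul_le_mul_of_nonneg_right hα (abs_nonneg s')
    have t4 := mul_le_mul_of_nonneg_left hi (abs_nonneg (G z))
    rw [add_assoc |s'|, mul_add]
    linarith
  · have hc := hcore (G z - G 0) (fun i => k1 i * p i - k2 i * q i) (fun i => b i z - b i 0) p
      (fun i => θ i z - θ i 0) q (ε * ‖z‖) (h4 z hz) (h5 z hz) (fun i => abs_sub _ _)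
    have hi := abs_iInf_sub_le hI (fun i => k0 i + k1 i * p i - k2 i * q i) (fun _ => 0)
    have : Nonempty (Fin I) := ⟨⟨0, hI⟩⟩
    simp only [ciInf_const, sub_zero] at hi
    set i2 := ⨅ i, (k0 i + k1 i * p i - k2 i * q i)
    have hi' : |i2| ≤ ∑ i, |k0 i| + ∑ i, |k1 i * p i - k2 i * q i| := by
      refine hi.trans ?_
      rw [← Finset.sum_add_distrib]
      refine Finset.sum_le_sum fun i _ => ?_
      rw [add_sub_assoc]; exact abs_add_le _ _
    have e1 : -α * s + G z * i2 + ∑ i, b i z * p i + ∑ i, (1 + θ i z) * q i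
        - (-α * s + G 0 * i2 + ∑ i, b i 0 * p i + ∑ i, (1 + θ i 0) * q i)
        = (G z - G 0) * i2 + (∑ i, (b i z - b i 0) * p i + ∑ i, (θ i z - θ i 0) * q i) := by
      simp only [sub_mul, Finset.sum_sub_distrib, add_mul, one_mul, Finset.sum_add_distrib]
      ring
    rw [e1]
    refine (abs_add_le _ _).trans ?_
    have t2 := abs_add_le (∑ i, (b i z - b i 0) * p i) (∑ i, (θ i z - θ i 0) * q i)
    have t3 := mul_le_mul_of_nonneg_left hi' (abs_nonneg (G z - G 0))
    rw [abs_mul]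
    have t4 := h3 z hz
    have t5 : 0 ≤ ε * ‖z‖ * |s| := by positivity
    rw [mul_add] at t3
    have t6 : ε * ‖z‖ * (1 + |s| + ∑ i, |p i| + ∑ i, |q i|) = ε * ‖z‖ + ε * ‖z‖ * |s|
      + ε * ‖z‖ * (∑ i, |p i| + ∑ i, |q i|) := by ring
    rw [t6]
    linarith
  · have : Nonempty (Fin I) := ⟨⟨0, hI⟩⟩
    have hi := abs_iInf_sub_le hI k0 (fun _ => 0)
    simp only [ciInf_const, sub_zero] at hi
    simp only [Pi.zero_apply, mul_zero, add_zero, sub_zero, Finset.sum_const_zero, zero_add,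
      abs_mul]
    exact (mul_le_mul_of_nonneg_left hi (abs_nonneg _)).trans h6

lemma abs_sum_coord_le (x : Euc I) : |∑ j, x j| ≤ I * ‖x‖ := by
  simpa using abs_sum_mul_le (y := x) (f := fun _ => 1) (B := 1) (fun _ => by simp)

/-- Sup bound for solutions, from the maximum principle: where the control term does not destroy
ellipticity, a solution is nonnegative and at most a multiple of the radius. -/
lemma sol_bound (hI : 0 < I) {μ a c : Fin I → ℝ} {γ lam : ℝ} {n : ℕ} {R : ℝ} {φ : Euc I → ℝ}
    (hμ : ∀ i, 0 < μ i) (hc : ∀ i, 0 < c i) (hγ : 0 < γ) (hR : 0 < R)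
    (hφ : IsSolGen μ a c γ lam n R (fun y => max y 0) φ)
    (hb : ∀ x ∈ ball (0 : Euc I) R, ∀ i,
      μ i * max (∑ j, x j) 0 ≤ a i * lam + μ i * (nu μ a i * n + x i)) :
    ∀ x ∈ ball (0 : Euc I) R, |φ x| ≤ I * R * (∑ i, c i) / γ := by
  obtain ⟨⟨K, hK⟩, hφ2, hφ0, heq⟩ := hφ
  have hne : Nonempty (Fin I) := ⟨⟨0, hI⟩⟩
  have hca : ∀ x ∈ ball (0 : Euc I) R, ContDiffAt ℝ 2 φ x := fun x hx =>
    hφ2.contDiffAt (isOpen_ball.mem_nhds hx)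
  have hcomp := isCompact_closedBall (0 : Euc I) R
  have h0mem : (0 : Euc I) ∈ closedBall (0 : Euc I) R := by simp [hR.le]
  have hCs : 0 ≤ ∑ i, c i := Finset.sum_nonneg fun i _ => (hc i).le
  have hup : ∀ x ∈ closedBall (0 : Euc I) R, φ x ≤ I * R * (∑ i, c i) / γ := by
    obtain ⟨x0, hx0, hmax⟩ := hcomp.exists_isMaxOn ⟨0, h0mem⟩ hK.continuousOn
    intro x hx
    refine (show φ x ≤ φ x0 from hmax hx).trans ?_
    have hx0' : ‖x0‖ ≤ R := by simpa using hx0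
    rcases hx0'.eq_or_lt with h | h
    · rw [hφ0 x0 h]; positivity
    · have hxb : x0 ∈ ball (0 : Euc I) R := by simpa using h
      have hloc : IsLocalMax φ x0 :=
        hmax.isLocalMax (Filter.mem_of_superset (isOpen_ball.mem_nhds hxb) ball_subset_closedBall)
      have key := fun i => (HasD2.pd (hca x0 hxb) i).max (IsLocalMax.line hloc (e i))
      have h1 := heq x0 hxb
      rw [HJBgen] at h1
      have hb0 := hb x0 hxb
      simp only [(key _).1, mul_zero, add_zero, Finset.sum_const_zero] at h1
      set g : ℝ := max (∑ j, x0 j) 0 with hg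
      have hg0 : 0 ≤ g := le_max_right _ _
      have hgR : g ≤ I * R := by
        refine max_le ?_ (by positivity)
        refine (le_abs_self _).trans ((abs_sum_coord_le x0).trans ?_)
        gcongr
      -- bound the infimum by its value at one index
      have hinf : (⨅ i, (c i - 1 / 2 * μ i * pd2 φ i x0))
          ≤ ∑ i, (c i - 1 / 2 * μ i * pd2 φ i x0) := by
        refine (ciInf_le (Finite.bddBelow_range _) hne.some).trans ?_
        refine Finset.single_le_sum (f := fun i => c i - 1 / 2 * μ i * pd2 φ i x0)
          (fun i _ => ?_) (Finset.mem_univ _)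
        have := mul_nonneg (hμ i).le (neg_nonneg.2 (key i).2)
        have := (hc i).le
        linarith
      have h2 := mul_le_mul_of_nonneg_left hinf hg0
      have h3 : g * ∑ i, (c i - 1 / 2 * μ i * pd2 φ i x0)
          + 1 / 2 * ∑ i, (a i * lam + μ i * (nu μ a i * n + x0 i)) * pd2 φ i x0
          ≤ g * ∑ i, c i := by
        rw [Finset.mul_sum, Finset.mul_sum, Finset.mul_sum, ← Finset.sum_add_distrib]
        refine Finset.sum_le_sum fun i _ => ?_
        have := mul_nonneg (sub_nonneg.2 (hb0 i)) (neg_nonneg.2 (key i).2)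
        linarith
      have h4 := mul_le_mul_of_nonneg_right hgR hCs
      rw [le_div_iff₀ hγ]
      linarith
  have hlo : ∀ x ∈ closedBall (0 : Euc I) R, 0 ≤ φ x := by
    obtain ⟨x0, hx0, hmin⟩ := hcomp.exists_isMinOn ⟨0, h0mem⟩ hK.continuousOn
    intro x hx
    refine le_trans ?_ (show φ x0 ≤ φ x from hmin hx)
    have hx0' : ‖x0‖ ≤ R := by simpa using hx0
    rcases hx0'.eq_or_lt with h | h
    · rw [hφ0 x0 h]
    · have hxb : x0 ∈ ball (0 : Euc I) R := by simpa using h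
      have hloc : IsLocalMin φ x0 :=
        hmin.isLocalMin (Filter.mem_of_superset (isOpen_ball.mem_nhds hxb) ball_subset_closedBall)
      have key := fun i => ((HasD2.pd (hca x0 hxb) i).const_mul (-1)).max (by
        have := IsLocalMax.line hloc.neg (e i)
        simpa using this)
      have h1 := heq x0 hxb
      rw [HJBgen] at h1
      have hb0 := hb x0 hxb
      have hk1 : ∀ i, pd1 φ i x0 = 0 := fun i => by linarith [(key i).1]
      have hk2 : ∀ i, 0 ≤ pd2 φ i x0 := fun i => by linarith [(key i).2]
      simp only [hk1, mul_zero, add_zero, Finset.sum_const_zero] at h1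
      set g : ℝ := max (∑ j, x0 j) 0 with hg
      have hg0 : 0 ≤ g := le_max_right _ _
      have hinf : -∑ i, (1 / 2 * μ i * pd2 φ i x0)
          ≤ (⨅ i, (c i - 1 / 2 * μ i * pd2 φ i x0)) := by
        refine le_ciInf fun i => ?_
        have := Finset.single_le_sum (f := fun i => 1 / 2 * μ i * pd2 φ i x0)
          (fun i _ => mul_nonneg (by linarith [hμ i]) (hk2 i)) (Finset.mem_univ i)
        linarith [hc i]
      have h2 := mul_le_mul_of_nonneg_left hinf hg0
      have h3 : 0 ≤ g * -∑ i, (1 / 2 * μ i * pd2 φ i x0)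
          + 1 / 2 * ∑ i, (a i * lam + μ i * (nu μ a i * n + x0 i)) * pd2 φ i x0 := by
        rw [mul_neg, Finset.mul_sum, Finset.mul_sum, ← sub_eq_neg_add, ← Finset.sum_sub_distrib]
        refine Finset.sum_nonneg fun i _ => ?_
        have := mul_nonneg (sub_nonneg.2 (hb0 i)) (hk2 i)
        linarith
      have h4 : 0 ≤ γ * φ x0 := by linarith
      exact nonneg_of_mul_nonneg_right h4 hγ
  intro x hx
  rw [abs_of_nonneg (hlo x (ball_subset_closedBall hx))]
  exact hup x (ball_subset_closedBall hx)

/-- The HJB operator near `x0`, divided by `n` and written in the variables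
`z = (ρ D)⁻¹ (x - x0)`, `u = φ / M`, where `D = diag d`. -/
def hjbOp (μ a c : Fin I → ℝ) (γ lam n ρ M : ℝ) (d : Fin I → ℝ) (x0 : Euc I) :
    Euc I → ℝ → (Fin I → ℝ) → (Fin I → ℝ) → ℝ := fun z s p q =>
  -(γ * ρ ^ 2 / n) * s
    + max (∑ j, (x0 + dg (fun i => ρ * d i) z) j) 0 / n
      * (⨅ i, (ρ ^ 2 * c i / M + ρ * μ i / d i * p i - 1 / 2 * μ i / d i ^ 2 * q i))
    + ∑ i, (ρ * ((a i * lam - μ i * nu μ a i * n) - μ i * (x0 + dg (fun i => ρ * d i) z) i)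
        / (n * d i)) * p i
    + ∑ i, (1 + ((1 / 2 * (a i * lam + μ i * (nu μ a i * n + (x0 + dg (fun i => ρ * d i) z) i)))
        / (n * d i ^ 2) - 1)) * q i

lemma hjb_scaled {μ a c : Fin I → ℝ} {γ lam : ℝ} {n : ℕ} {φ : Euc I → ℝ} {ρ M : ℝ}
    {d : Fin I → ℝ} {x0 z : Euc I} (hn : 0 < n) (hρ : 0 < ρ) (hM : 0 < M) (hd : ∀ i, 0 < d i)
    (hφ : ContDiffAt ℝ 2 φ (x0 + dg (fun i => ρ * d i) z))
    (heq : HJBgen μ a c γ lam n (fun y => max y 0) φ (x0 + dg (fun i => ρ * d i) z)) :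
    hjbOp μ a c γ lam n ρ M d x0 z (M⁻¹ * φ (x0 + dg (fun i => ρ * d i) z))
      (fun i => pd1 (fun y => M⁻¹ * φ (x0 + dg (fun i => ρ * d i) y)) i z)
      (fun i => pd2 (fun y => M⁻¹ * φ (x0 + dg (fun i => ρ * d i) y)) i z) = 0 := by
  have hn' : (0 : ℝ) < n := by exact_mod_cast hn
  have hpd := fun i => pd_scale (fun i => ρ * d i) M⁻¹ hφ i
  simp only [(hpd _).1, (hpd _).2]
  unfold hjbOp
  rw [HJBgen] at heq
  generalize x0 + dg (fun i => ρ * d i) z = x at heq hφ hpd ⊢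
  have h1 : (⨅ i, (ρ ^ 2 * c i / M + ρ * μ i / d i * (M⁻¹ * (ρ * d i * pd1 φ i x))
      - 1 / 2 * μ i / d i ^ 2 * (M⁻¹ * ((ρ * d i) ^ 2 * pd2 φ i x))))
      = ρ ^ 2 / M * ⨅ i, (c i + μ i * pd1 φ i x - 1 / 2 * μ i * pd2 φ i x) := by
    rw [Real.mul_iInf_of_nonneg (by positivity)]
    congr 1; funext i
    have := (hd i).ne'
    field_simp
  have h2 : ∑ i, (ρ * ((a i * lam - μ i * nu μ a i * n) - μ i * x i) / (n * d i))
      * (M⁻¹ * (ρ * d i * pd1 φ i x))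
      = ρ ^ 2 / (n * M) * ∑ i, ((a i * lam - μ i * nu μ a i * n) - μ i * x i) * pd1 φ i x := by
    rw [Finset.mul_sum]
    refine Finset.sum_congr rfl fun i _ => ?_
    have := (hd i).ne'
    field_simp
  have h3 : ∑ i, (1 + ((1 / 2 * (a i * lam + μ i * (nu μ a i * n + x i)))
      / (n * d i ^ 2) - 1)) * (M⁻¹ * ((ρ * d i) ^ 2 * pd2 φ i x))
      = ρ ^ 2 / (n * M) * (1 / 2 * ∑ i, (a i * lam + μ i * (nu μ a i * n + x i)) * pd2 φ i x) := by
    rw [Finset.mul_sum, Finset.mul_sum]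
    refine Finset.sum_congr rfl fun i _ => ?_
    have := (hd i).ne'
    field_simp
    ring
  rw [h1, h2, h3]
  have h4 : -(γ * ρ ^ 2 / n) * (M⁻¹ * φ x) + max (∑ j, x j) 0 / n * (ρ ^ 2 / M *
      ⨅ i, (c i + μ i * pd1 φ i x - 1 / 2 * μ i * pd2 φ i x))
      = ρ ^ 2 / (n * M) * (-γ * φ x + max (∑ j, x j) 0 *
        ⨅ i, (c i + μ i * pd1 φ i x - 1 / 2 * μ i * pd2 φ i x)) := by
    generalize (⨅ i, (c i + μ i * pd1 φ i x - 1 / 2 * μ i * pd2 φ i x)) = J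
    field_simp
  rw [h4, ← mul_add, ← mul_add, ← heq, mul_zero]

/-- The rescaled HJB operator is close to the Laplacian when the small quantities in `e1`–`e6`,
which govern its coefficients, are; `Γ` bounds the data of the problem. -/
lemma hjb_ellOp (hI : 0 < I) {μ a c : Fin I → ℝ} {γ lam n ρ M R η Γ : ℝ}
    {d : Fin I → ℝ} {x0 : Euc I} (hn : 0 < n) (hρ : 0 < ρ) (hM : 0 < M) (hd : ∀ i, 0 < d i)
    (hμ : ∀ i, 0 < μ i) (hc : ∀ i, 0 < c i) (hγ : 0 < γ) (hΓ1 : 1 ≤ Γ)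
    (hball : ∀ z ∈ ball (0 : Euc I) 2, x0 + dg (fun i => ρ * d i) z ∈ ball (0 : Euc I) R)
    (hIΓ : (I : ℝ) ≤ Γ) (hγΓ : γ ≤ Γ) (hμΓ : ∀ i, μ i ≤ Γ) (hcΓ : ∑ i, c i ≤ Γ)
    (hdΓ : ∀ i, d i ≤ Γ) (hdΓ' : ∀ i, 1 / d i ≤ Γ)
    (hρR : ρ ≤ R) (hMR : R ≤ Γ * M)
    (hl : ∀ i, |a i * lam - μ i * nu μ a i * n| ≤ Γ * √n)
    (hdn : ∀ i, μ i * nu μ a i = d i ^ 2)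
    (e1 : ρ ^ 2 / n ≤ η) (e2 : ρ * R / n ≤ η) (e3 : R / n ≤ η) (e4 : ρ * √n / n ≤ η)
    (e5 : ρ / n ≤ η) (e6 : √n / n ≤ η) (hR : 0 < R) :
    EllOp (10 * Γ ^ 8 * η) (hjbOp μ a c γ lam n ρ M d x0) := by
  have hΓ0 : 0 < Γ := by linarith
  have hη : 0 ≤ η := le_trans (by positivity) e5
  have hpow : ∀ {j k : ℕ}, j ≤ k → Γ ^ j ≤ Γ ^ k := fun h => pow_le_pow_right₀ hΓ1 h
  set X : Euc I → Euc I := fun z => x0 + dg (fun i => ρ * d i) z with hX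
  have hX0 : X 0 = x0 := by simp [hX]
  have hXR : ∀ z ∈ ball (0 : Euc I) 2, ‖X z‖ ≤ R := fun z hz => by
    have := hball z hz; rw [mem_ball_zero_iff] at this; exact this.le
  have hz0 : (0 : Euc I) ∈ ball (0 : Euc I) 2 := by simp
  have hXi : ∀ z i, |X z i - X 0 i| ≤ ρ * Γ * ‖z‖ := fun z i => by
    have : X z i - X 0 i = ρ * d i * z i := by simp [hX]
    rw [this, abs_mul, abs_of_pos (mul_pos hρ (hd i))]
    have := abs_coord_le z i
    have := hdΓ i
    gcongr
  set G : Euc I → ℝ := fun z => max (∑ j, X z j) 0 / n with hG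
  have hGb : ∀ z ∈ ball (0 : Euc I) 2, |G z| ≤ Γ * (R / n) := fun z hz => by
    rw [hG]; simp only
    rw [abs_of_nonneg (by positivity), ← mul_div_assoc]
    gcongr
    refine max_le ((le_abs_self _).trans ((abs_sum_coord_le _).trans ?_)) (by positivity)
    have := hXR z hz
    gcongr
  have hGd : ∀ z ∈ ball (0 : Euc I) 2, |G z - G 0| ≤ Γ ^ 2 * (ρ / n) * ‖z‖ := fun z hz => by
    rw [hG]; simp only
    rw [← sub_div, abs_div, abs_of_pos hn, div_le_iff₀ hn]
    refine (abs_max_sub_max_le_abs _ _ _).trans ?_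
    rw [← Finset.sum_sub_distrib]
    calc |∑ j, (X z j - X 0 j)| ≤ ∑ j, |X z j - X 0 j| := Finset.abs_sum_le_sum_abs _ _
      _ ≤ ∑ _j : Fin I, ρ * Γ * ‖z‖ := Finset.sum_le_sum fun j _ => hXi z j
      _ = I * (ρ * Γ * ‖z‖) := by simp
      _ ≤ Γ * (ρ * Γ * ‖z‖) := by gcongr
      _ = _ := by field_simp
  have hk1 : ∀ i, |ρ * μ i / d i| ≤ ρ * Γ ^ 2 := fun i => by
    have h1 := hμΓ i
    have h2 := hdΓ' i
    have h3 := hμ i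
    have h4 := hd i
    rw [abs_of_pos (by positivity), mul_div_assoc, div_eq_mul_one_div, sq]
    gcongr
  have hk2 : ∀ i, |1 / 2 * μ i / d i ^ 2| ≤ Γ ^ 3 := fun i => by
    have h1 := hμΓ i
    have h2 := hdΓ' i
    have h3 := hμ i
    have h4 := hd i
    rw [abs_of_pos (by positivity)]
    calc 1 / 2 * μ i / d i ^ 2 = 1 / 2 * (μ i * (1 / d i) ^ 2) := by field_simp
      _ ≤ 1 / 2 * (Γ * Γ ^ 2) := by gcongr
      _ ≤ Γ ^ 3 := by have : 0 < Γ ^ 3 := by positivity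
                      nlinarith
  have hk0 : ∑ i, |ρ ^ 2 * c i / M| ≤ ρ ^ 2 * Γ / M := by
    calc ∑ i, |ρ ^ 2 * c i / M| = ρ ^ 2 * (∑ i, c i) / M := by
          rw [Finset.mul_sum, Finset.sum_div]
          refine Finset.sum_congr rfl fun i _ => ?_
          have := hc i
          exact abs_of_pos (by positivity)
      _ ≤ _ := by gcongr
  have hb1 : ∀ z ∈ ball (0 : Euc I) 2, ∀ i,
      |ρ * ((a i * lam - μ i * nu μ a i * n) - μ i * X z i) / (n * d i)| ≤ 2 * Γ ^ 2 * η := by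
    intro z hz i
    have h1 : |(a i * lam - μ i * nu μ a i * n) - μ i * X z i| ≤ Γ * √n + Γ * R := by
      refine (abs_sub _ _).trans (add_le_add (hl i) ?_)
      rw [abs_mul, abs_of_pos (hμ i)]
      exact mul_le_mul (hμΓ i) ((abs_coord_le _ i).trans (hXR z hz)) (abs_nonneg _) hΓ0.le
    have h4 := hd i
    have h2 := hdΓ' i
    rw [abs_div, abs_mul, abs_of_pos hρ, abs_of_pos (mul_pos hn h4)]
    calc ρ * |(a i * lam - μ i * nu μ a i * n) - μ i * X z i| / (n * d i)
        ≤ ρ * (Γ * √n + Γ * R) / (n * d i) := by gcongr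
      _ = Γ * (1 / d i) * (ρ * √n / n + ρ * R / n) := by field_simp
      _ ≤ Γ * Γ * (η + η) := by gcongr
      _ = _ := by ring
  have hb2 : ∀ z ∈ ball (0 : Euc I) 2, ∀ i,
      |ρ * ((a i * lam - μ i * nu μ a i * n) - μ i * X z i) / (n * d i)
        - ρ * ((a i * lam - μ i * nu μ a i * n) - μ i * X 0 i) / (n * d i)| ≤ Γ ^ 3 * η * ‖z‖ := by
    intro z hz i
    have h4 := hd i
    have h2 := hdΓ' i
    have h3 := hXi z i
    have h5 := hμ i
    have h6 := hμΓ i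
    have : ρ * ((a i * lam - μ i * nu μ a i * n) - μ i * X z i) / (n * d i)
        - ρ * ((a i * lam - μ i * nu μ a i * n) - μ i * X 0 i) / (n * d i)
        = -(ρ * μ i * (1 / d i) / n * (X z i - X 0 i)) := by field_simp; ring
    rw [this, abs_neg, abs_mul, abs_of_pos (by positivity)]
    calc ρ * μ i * (1 / d i) / n * |X z i - X 0 i| ≤ ρ * Γ * Γ / n * (ρ * Γ * ‖z‖) := by gcongr
      _ = Γ ^ 3 * (ρ ^ 2 / n) * ‖z‖ := by ring
      _ ≤ _ := by gcongr
  have hθe : ∀ z i, (1 / 2 * (a i * lam + μ i * (nu μ a i * n + X z i))) / (n * d i ^ 2) - 1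
      = 1 / 2 * (1 / d i) ^ 2 * (((a i * lam - μ i * nu μ a i * n) + μ i * X z i) / n) := by
    intro z i
    have h4 := hd i
    have : a i * lam + μ i * (nu μ a i * n + X z i)
      = (a i * lam - μ i * nu μ a i * n) + μ i * X z i + 2 * d i ^ 2 * n := by
      rw [mul_assoc 2, ← hdn i]; ring
    rw [this]
    field_simp
    ring
  have hθ1 : ∀ z ∈ ball (0 : Euc I) 2, ∀ i,
      |(1 / 2 * (a i * lam + μ i * (nu μ a i * n + X z i))) / (n * d i ^ 2) - 1|
        ≤ Γ ^ 3 * η := by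
    intro z hz i
    have h1 : |(a i * lam - μ i * nu μ a i * n) + μ i * X z i| ≤ Γ * √n + Γ * R := by
      refine (abs_add_le _ _).trans (add_le_add (hl i) ?_)
      rw [abs_mul, abs_of_pos (hμ i)]
      exact mul_le_mul (hμΓ i) ((abs_coord_le _ i).trans (hXR z hz)) (abs_nonneg _) hΓ0.le
    have h4 := hd i
    have h2 := hdΓ' i
    rw [hθe, abs_mul, abs_div, abs_of_pos (by positivity), abs_of_pos hn]
    calc 1 / 2 * (1 / d i) ^ 2 * (|(a i * lam - μ i * nu μ a i * n) + μ i * X z i| / n)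
        ≤ 1 / 2 * Γ ^ 2 * ((Γ * √n + Γ * R) / n) := by gcongr
      _ = 1 / 2 * Γ ^ 3 * (√n / n + R / n) := by ring
      _ ≤ 1 / 2 * Γ ^ 3 * (η + η) := by gcongr
      _ = _ := by ring
  have hθ2 : ∀ z ∈ ball (0 : Euc I) 2, ∀ i,
      |(1 / 2 * (a i * lam + μ i * (nu μ a i * n + X z i))) / (n * d i ^ 2) - 1
        - ((1 / 2 * (a i * lam + μ i * (nu μ a i * n + X 0 i))) / (n * d i ^ 2) - 1)|
        ≤ Γ ^ 4 * η * ‖z‖ := by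
    intro z hz i
    have h4 := hd i
    have h2 := hdΓ' i
    have h3 := hXi z i
    have h5 := hμ i
    have h6 := hμΓ i
    have : 1 / 2 * (1 / d i) ^ 2 * (((a i * lam - μ i * nu μ a i * n) + μ i * X z i) / n)
        - 1 / 2 * (1 / d i) ^ 2 * (((a i * lam - μ i * nu μ a i * n) + μ i * X 0 i) / n)
        = 1 / 2 * (1 / d i) ^ 2 * (μ i / n) * (X z i - X 0 i) := by field_simp; ring
    rw [hθe, hθe, this, abs_mul, abs_of_pos (by positivity)]
    calc 1 / 2 * (1 / d i) ^ 2 * (μ i / n) * |X z i - X 0 i|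
        ≤ 1 / 2 * Γ ^ 2 * (Γ / n) * (ρ * Γ * ‖z‖) := by gcongr
      _ = 1 / 2 * (Γ ^ 4 * (ρ / n) * ‖z‖) := by ring
      _ ≤ Γ ^ 4 * (ρ / n) * ‖z‖ := by
          have : 0 ≤ Γ ^ 4 * (ρ / n) * ‖z‖ := by positivity
          linarith
      _ ≤ _ := by gcongr
  have p1 : 1 ≤ Γ ^ 8 := one_le_pow₀ hΓ1
  have p2 : Γ ≤ Γ ^ 8 := by simpa using hpow (j := 1) (k := 8) (by norm_num)
  have hη8 : ∀ j ≤ 8, Γ ^ j * η ≤ Γ ^ 8 * η := fun j hj =>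
    mul_le_mul_of_nonneg_right (hpow hj) hη
  have hη8z : ∀ (z : Euc I), ∀ j ≤ 8, Γ ^ j * η * ‖z‖ ≤ Γ ^ 8 * η * ‖z‖ := fun z j hj =>
    mul_le_mul_of_nonneg_right (hη8 j hj) (norm_nonneg z)
  have hpos : 0 ≤ Γ ^ 8 * η := by positivity
  have hposz : ∀ z : Euc I, 0 ≤ Γ ^ 8 * η * ‖z‖ := fun z => by positivity
  refine ellOp_mk (G := G) hI ?_ (fun z hz i => ?_) (fun z hz i => ?_) (fun z hz => ?_)
    (fun z hz i => ?_) (fun z hz i => ?_) ?_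
  · rw [abs_of_nonneg (by positivity)]
    calc γ * ρ ^ 2 / n = γ * (ρ ^ 2 / n) := by ring
      _ ≤ Γ ^ 8 * η := by gcongr; exact hγΓ.trans p2
      _ ≤ _ := by linarith
  · have h1 : |G z| * |ρ * μ i / d i| ≤ Γ ^ 3 * η := by
      calc _ ≤ Γ * (R / n) * (ρ * Γ ^ 2) := by
            have := hGb z hz
            have := hk1 i
            gcongr
        _ = Γ ^ 3 * (ρ * R / n) := by ring
        _ ≤ _ := by gcongr
    have := hb1 z hz i
    have := hη8 3 (by norm_num)
    have := hη8 2 (by norm_num)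
    linarith
  · have h1 : |G z| * |1 / 2 * μ i / d i ^ 2| ≤ Γ ^ 4 * η := by
      calc _ ≤ Γ * (R / n) * Γ ^ 3 := by
            have := hGb z hz
            have := hk2 i
            gcongr
        _ = Γ ^ 4 * (R / n) := by ring
        _ ≤ _ := by gcongr
    have := hθ1 z hz i
    have := hη8 3 (by norm_num)
    have := hη8 4 (by norm_num)
    linarith
  · have h1 : |G z - G 0| * ∑ i, |ρ ^ 2 * c i / M| ≤ Γ ^ 4 * η * ‖z‖ := by
      calc _ ≤ Γ ^ 2 * (ρ / n) * ‖z‖ * (ρ ^ 2 * Γ / M) := by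
            have := hGd z hz
            gcongr
        _ = Γ ^ 3 * (ρ ^ 2 / n) * ‖z‖ * (ρ / M) := by ring
        _ ≤ Γ ^ 3 * η * ‖z‖ * Γ := by
            gcongr
            rw [div_le_iff₀ hM]; exact hρR.trans hMR
        _ = _ := by ring
    have := hη8z z 4 (by norm_num)
    have := hposz z
    linarith
  · have h1 : |G z - G 0| * |ρ * μ i / d i| ≤ Γ ^ 4 * η * ‖z‖ := by
      calc _ ≤ Γ ^ 2 * (ρ / n) * ‖z‖ * (ρ * Γ ^ 2) := by
            have := hGd z hz
            have := hk1 i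
            gcongr
        _ = Γ ^ 4 * (ρ ^ 2 / n) * ‖z‖ := by ring
        _ ≤ _ := by gcongr
    have := hb2 z hz i
    have := hη8z z 3 (by norm_num)
    have := hη8z z 4 (by norm_num)
    have := hposz z
    linarith
  · have h1 : |G z - G 0| * |1 / 2 * μ i / d i ^ 2| ≤ Γ ^ 5 * η * ‖z‖ := by
      calc _ ≤ Γ ^ 2 * (ρ / n) * ‖z‖ * Γ ^ 3 := by
            have := hGd z hz
            have := hk2 i
            gcongr
        _ = Γ ^ 5 * (ρ / n) * ‖z‖ := by ring
        _ ≤ _ := by gcongr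
    have := hθ2 z hz i
    have := hη8z z 5 (by norm_num)
    have := hη8z z 4 (by norm_num)
    have := hposz z
    linarith
  · have h1 : |G 0| * ∑ i, |ρ ^ 2 * c i / M| ≤ Γ ^ 3 * η := by
      calc _ ≤ Γ * (R / n) * (ρ ^ 2 * Γ / M) := by
            have := hGb 0 hz0
            gcongr
        _ ≤ Γ * (Γ * M / n) * (ρ ^ 2 * Γ / M) := by gcongr
        _ = Γ ^ 3 * (ρ ^ 2 / n) := by field_simp
        _ ≤ _ := by gcongr
    have := hη8 3 (by norm_num)
    linarith

/-! ### From the HJB equation to quadratic expansions -/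

lemma norm_dg_le {s : Fin I → ℝ} {S : ℝ} (hS : 0 ≤ S) (hs : ∀ i, |s i| ≤ S) (x : Euc I) :
    ‖dg s x‖ ≤ S * ‖x‖ := by
  refine abs_le_of_sq_le_sq' ?_ (by positivity) |>.2
  rw [mul_pow, EuclideanSpace.norm_sq_eq, EuclideanSpace.norm_sq_eq, Finset.mul_sum]
  refine Finset.sum_le_sum fun i _ => ?_
  rw [dg_apply, norm_mul, mul_pow, Real.norm_eq_abs]
  have := hs i
  gcongr

/-- `φ` agrees near `x0` with a quadratic polynomial up to an error of order `5/2`.  The length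
scale is `ρ`, the amplitude is `A`, and the estimate holds on the ball of radius `r * ρ`. -/
def Expands (A r ρ : ℝ) (φ : Euc I → ℝ) (x0 : Euc I) : Prop :=
  ∃ q : Quad I, (∀ i, |q.2.1 i| ≤ A / ρ) ∧ (∀ i j, |q.2.2 i j| ≤ A / ρ ^ 2) ∧
    ∀ h : Euc I, ‖h‖ ≤ r * ρ → |φ (x0 + h) - qd q h| ≤ A * √(‖h‖ / ρ) ^ 5

/-- Undoes the change of variables `x = x0 + ρ D z`, `φ = M u`, where `D = diag d`. -/
lemma expands_of_scaled {φ : Euc I → ℝ} {ρ M C Γ : ℝ} {d : Fin I → ℝ} {x0 : Euc I}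
    (hρ : 0 < ρ) (hM : 0 < M) (hC : 0 < C) (hΓ1 : 1 ≤ Γ) (hd : ∀ i, 0 < d i)
    (hdΓ : ∀ i, 1 / d i ≤ Γ) {q : Quad I} (hqC : ‖q‖ ≤ C)
    (hq : ∀ z : Euc I, ‖z‖ ≤ 1 →
      |M⁻¹ * φ (x0 + dg (fun i => ρ * d i) z) - qd q z| ≤ C * √‖z‖ ^ 5) :
    Expands (C * Γ ^ 3 * M) Γ⁻¹ ρ φ x0 := by
  have hΓ0 : 0 < Γ := by linarith
  have hdi : ∀ i, (d i)⁻¹ ≤ Γ := fun i => by simpa using hdΓ i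
  obtain ⟨-, k1, k2⟩ := quad_coef q
  refine ⟨(M * q.1, fun i => M * q.2.1 i / (ρ * d i),
    fun i j => M * q.2.2 i j / (ρ ^ 2 * d i * d j)), fun i => ?_, fun i j => ?_, fun h hh => ?_⟩
  · have e1 : M * q.2.1 i / (ρ * d i) = q.2.1 i * (d i)⁻¹ * M / ρ := by
      have := (hd i).ne'; field_simp
    have hi := inv_pos.2 (hd i)
    simp only
    rw [e1, abs_div, abs_mul, abs_mul, abs_of_pos hi, abs_of_pos hM, abs_of_pos hρ]
    have h1 := (k1 i).trans hqC
    have h2 := hdi i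
    have h3 : Γ ≤ Γ ^ 3 := le_self_pow₀ hΓ1 (by norm_num)
    gcongr
    exact h2.trans h3
  · have e1 : M * q.2.2 i j / (ρ ^ 2 * d i * d j)
        = q.2.2 i j * ((d i)⁻¹ * (d j)⁻¹) * M / ρ ^ 2 := by
      have := (hd i).ne'; have := (hd j).ne'; field_simp
    have hi := inv_pos.2 (hd i)
    have hj := inv_pos.2 (hd j)
    simp only
    rw [e1, abs_div, abs_mul, abs_mul, abs_of_pos (mul_pos hi hj), abs_of_pos hM,
      abs_of_pos (by positivity : 0 < ρ ^ 2)]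
    have h1 := (k2 i j).trans hqC
    have h2 : (d i)⁻¹ * (d j)⁻¹ ≤ Γ * Γ := mul_le_mul (hdi i) (hdi j) hj.le hΓ0.le
    have h3 : Γ * Γ ≤ Γ ^ 3 := by
      rw [← sq]; exact pow_le_pow_right₀ hΓ1 (by norm_num)
    gcongr
    exact h2.trans h3
  · set z : Euc I := dg (fun i => (ρ * d i)⁻¹) h with hz
    have hzi : ∀ i, h i = ρ * d i * z i := fun i => by
      have := (hd i).ne'
      rw [hz, dg_apply]; field_simp
    have hzh : dg (fun i => ρ * d i) z = h := by
      ext i; rw [dg_apply, hzi]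
    have hzn : ‖z‖ ≤ Γ * (‖h‖ / ρ) := by
      have := norm_dg_le (s := fun i => (ρ * d i)⁻¹) (S := Γ / ρ) (by positivity)
        (fun i => by
          rw [abs_of_pos (inv_pos.2 (mul_pos hρ (hd i))), mul_inv, div_eq_mul_inv, mul_comm]
          exact mul_le_mul_of_nonneg_right (hdi i) (inv_pos.2 hρ).le) h
      refine this.trans (le_of_eq (by ring))
    have hz1 : ‖z‖ ≤ 1 := by
      refine hzn.trans ?_
      rw [← mul_div_assoc, div_le_one hρ]
      calc Γ * ‖h‖ ≤ Γ * (Γ⁻¹ * ρ) := by gcongr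
        _ = ρ := by field_simp
    have e1 : qd (M * q.1, fun i => M * q.2.1 i / (ρ * d i),
        fun i j => M * q.2.2 i j / (ρ ^ 2 * d i * d j)) h = M * qd q z := by
      simp only [qd, hzi]
      rw [mul_add, mul_add, mul_left_comm M (1 / 2)]
      simp only [Finset.mul_sum]
      refine congrArg₂ (· + ·) (congrArg₂ (· + ·) rfl (Finset.sum_congr rfl fun i _ => ?_))
        (Finset.sum_congr rfl fun i _ => Finset.sum_congr rfl fun j _ => ?_)
      · have := (hd i).ne'; field_simp
      · have := (hd i).ne'; have := (hd j).ne'; field_simp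
    have h1 := hq z hz1
    rw [hzh] at h1
    have e2 : φ (x0 + h) - M * qd q z = M * (M⁻¹ * φ (x0 + h) - qd q z) := by
      field_simp
    rw [e1, e2, abs_mul, abs_of_pos hM]
    have h2 : √‖z‖ ^ 5 ≤ Γ ^ 3 * √(‖h‖ / ρ) ^ 5 := by
      have h3 : √‖z‖ ≤ √Γ * √(‖h‖ / ρ) := by
        rw [← Real.sqrt_mul hΓ0.le]; exact Real.sqrt_le_sqrt hzn
      have h4 : √Γ ^ 5 ≤ Γ ^ 3 := by
        have h5 : 1 ≤ √Γ := by rw [Real.one_le_sqrt]; exact hΓ1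
        calc √Γ ^ 5 ≤ √Γ ^ 6 := pow_le_pow_right₀ h5 (by norm_num)
          _ = (√Γ ^ 2) ^ 3 := by ring
          _ = Γ ^ 3 := by rw [Real.sq_sqrt hΓ0.le]
      calc √‖z‖ ^ 5 ≤ (√Γ * √(‖h‖ / ρ)) ^ 5 := by gcongr
        _ = √Γ ^ 5 * √(‖h‖ / ρ) ^ 5 := mul_pow _ _ _
        _ ≤ _ := by gcongr
    calc M * |M⁻¹ * φ (x0 + h) - qd q z| ≤ M * (C * (Γ ^ 3 * √(‖h‖ / ρ) ^ 5)) := by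
          gcongr
          exact h1.trans (by gcongr)
      _ = _ := by ring

lemma rad_div_tendsto (κ : ℝ) (m : ℕ) : Tendsto (fun n : ℕ => Rad κ m n / n) atTop (𝓝 0) := by
  have h1 := (isLittleO_log_rpow_rpow_atTop (m : ℝ) (by norm_num : (0 : ℝ) < 1 / 2)
    ).tendsto_div_nhds_zero.comp tendsto_natCast_atTop_atTop
  have h2 := h1.const_mul κ
  rw [mul_zero] at h2
  refine h2.congr' ?_
  filter_upwards [eventually_gt_atTop 0] with n hn
  have hn' : (0 : ℝ) < n := by exact_mod_cast hn
  have hs : 0 < √(n : ℝ) := Real.sqrt_pos.2 hn'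
  simp only [Function.comp_apply, Rad, Real.rpow_natCast, ← Real.sqrt_eq_rpow]
  rw [← mul_div_assoc, div_eq_div_iff hs.ne' hn'.ne']
  linear_combination (-(κ * Real.log n ^ m)) * Real.mul_self_sqrt hn'.le

/-- Heavy traffic makes the fluid drift `l_i^n` of order `√n`. -/
lemma heavy_traffic {X β n : ℝ} (hX : 0 < X) (h : n = X + β * √X) (hn : β ^ 2 ≤ n) :
    |X - n| ≤ 2 * |β| * √n := by
  have hs := Real.sq_sqrt hX.le
  have h3 : X ≤ 2 ^ 2 * n := by nlinarith [sq_nonneg (√X + β)]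
  have h4 : √X ≤ 2 * √n := by
    have := Real.sqrt_le_sqrt h3
    rwa [Real.sqrt_mul (by norm_num), Real.sqrt_sq (by norm_num)] at this
  have e : X - n = -(β * √X) := by linarith
  rw [e, abs_neg, abs_mul, abs_of_nonneg (Real.sqrt_nonneg X)]
  nlinarith [abs_nonneg β]

set_option maxHeartbeats 1000000 in
/-- At scale `ρ = dist (x0, ∂B) / (K (log n) ^ (2 * m))` the HJB equation is, after rescaling, an
`ε`-perturbation of the Laplace equation, so every solution has a quadratic expansion at `x0`. -/
theorem local_expansion (hI : 0 < I)
    (μ a c : Fin I → ℝ) (γ β : ℝ)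
    (hμ : ∀ i, 0 < μ i) (ha : ∀ i, 0 < a i) (hc : ∀ i, 0 < c i) (hγ : 0 < γ)
    (lam : ℕ → ℝ)
    (hlam : ∀ n : ℕ, 1 ≤ n → 0 < lam n ∧
      (n : ℝ) = lam n * (∑ i, a i / μ i)
        + β * Real.sqrt (lam n * (∑ i, a i / μ i)))
    (κ : ℝ) (hκ : 0 < κ) (m : ℕ) :
    ∃ K r C : ℝ, 1 ≤ K ∧ 0 < r ∧ r ≤ 1 ∧ 0 < C ∧ ∃ N : ℕ, ∀ n : ℕ, N ≤ n →
      1 ≤ Real.log n ∧ ∀ φ : Euc I → ℝ,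
        IsSolGen μ a c γ (lam n) n (Rad κ m n) (fun y => max y 0) φ →
        ∀ x0 : Euc I, ‖x0‖ < Rad κ m n → |φ x0| ≤ C * Rad κ m n ∧
          Expands (C * Rad κ m n) r ((Rad κ m n - ‖x0‖) / (K * (Real.log n ^ m) ^ 2)) φ x0 := by
  obtain ⟨ε, C0, hε, hC0, main⟩ := pointwise_C2 (I := I) hI
  have hne : Nonempty (Fin I) := ⟨⟨0, hI⟩⟩
  have hI1 : (1 : ℝ) ≤ I := by exact_mod_cast hI
  have hI0 : (0 : ℝ) < I := by linarith
  set S : ℝ := ∑ i, a i / μ i with hS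
  have hSpos : 0 < S := Finset.sum_pos (fun i _ => div_pos (ha i) (hμ i)) Finset.univ_nonempty
  set Sc : ℝ := ∑ i, c i with hSc
  have hScpos : 0 < Sc := Finset.sum_pos (fun i _ => hc i) Finset.univ_nonempty
  set d : Fin I → ℝ := fun i => √(a i * S⁻¹) with hd
  have haS : ∀ i, 0 < a i * S⁻¹ := fun i => mul_pos (ha i) (inv_pos.2 hSpos)
  have hdp : ∀ i, 0 < d i := fun i => Real.sqrt_pos.2 (haS i)
  have hd2 : ∀ i, d i ^ 2 = a i * S⁻¹ := fun i => Real.sq_sqrt (haS i).le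
  have hdn : ∀ i, μ i * nu μ a i = d i ^ 2 := fun i => by
    rw [hd2, nu]
    have := (hμ i).ne'
    rw [← hS]
    field_simp
  -- `Γ` dominates all the fixed data of the problem
  obtain ⟨Γ, hΓ1, hIΓ, hγΓ, hμΓ, hcΓ, hdΓ, hdΓ', hlΓ, hMΓ⟩ : ∃ Γ : ℝ, 1 ≤ Γ ∧ (I : ℝ) ≤ Γ ∧ γ ≤ Γ ∧
      (∀ i, μ i ≤ Γ) ∧ Sc ≤ Γ ∧ (∀ i, d i ≤ Γ) ∧ (∀ i, 1 / d i ≤ Γ) ∧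
      (∀ i, 2 * d i ^ 2 * |β| ≤ Γ) ∧ γ / (2 * I * Sc) ≤ Γ := by
    have ev : ∀ x : ℝ, ∀ᶠ G : ℝ in atTop, x ≤ G := fun x => eventually_ge_atTop x
    exact ((ev 1).and <| (ev I).and <| (ev γ).and <| (eventually_all.2 fun i => ev (μ i)).and <|
      (ev Sc).and <| (eventually_all.2 fun i => ev (d i)).and <|
      (eventually_all.2 fun i => ev (1 / d i)).and <|
      (eventually_all.2 fun i => ev (2 * d i ^ 2 * |β|)).and <| ev _).exists
  have hΓ0 : 0 < Γ := by linarith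
  obtain ⟨η, hη, hηε⟩ : ∃ η : ℝ, 0 < η ∧ 10 * Γ ^ 8 * η = ε :=
    ⟨ε / (10 * Γ ^ 8), by positivity, by field_simp⟩
  obtain ⟨K, hK1, hKΓ, hK2, hK3⟩ : ∃ K : ℝ, 1 ≤ K ∧ 2 * Γ ≤ K ∧ κ ^ 2 / η ≤ K ∧ κ / η ≤ K := by
    have ev : ∀ x : ℝ, ∀ᶠ G : ℝ in atTop, x ≤ G := fun x => eventually_ge_atTop x
    exact ((ev 1).and <| (ev _).and <| (ev _).and <| ev _).exists
  have hK0 : 0 < K := by linarith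
  obtain ⟨η', hη', hη1, hη2, hη3⟩ : ∃ η' : ℝ, 0 < η' ∧ η' ≤ η ∧ η' ≤ κ * η ∧
      (Γ * (Γ + 1) + Γ / κ) * η' ≤ 2 * (Γ ^ 2)⁻¹ := by
    refine ⟨min (min η (κ * η)) (2 * (Γ ^ 2)⁻¹ / (Γ * (Γ + 1) + Γ / κ)),
      lt_min (lt_min hη (by positivity)) (by positivity),
      (min_le_left _ _).trans (min_le_left _ _), (min_le_left _ _).trans (min_le_right _ _), ?_⟩
    have := min_le_right (min η (κ * η)) (2 * (Γ ^ 2)⁻¹ / (Γ * (Γ + 1) + Γ / κ))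
    rwa [le_div_iff₀ (by positivity), mul_comm] at this
  have evn : ∀ᶠ n : ℕ in atTop, 1 ≤ n ∧ β ^ 2 ≤ (n : ℝ) ∧ 1 ≤ Real.log n ∧
      Rad κ m n / n ≤ η' := by
    refine (eventually_ge_atTop 1).and ((tendsto_natCast_atTop_atTop.eventually_ge_atTop _).and
      (((Real.tendsto_log_atTop.comp tendsto_natCast_atTop_atTop).eventually_ge_atTop 1).and
      ((rad_div_tendsto κ m).eventually_le_const hη')))
  obtain ⟨N, hN⟩ := eventually_atTop.1 evn
  set B : ℝ := 2 * I * Sc / γ with hB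
  have hB0 : 0 < B := by positivity
  refine ⟨K, Γ⁻¹, C0 * Γ ^ 3 * B + B, hK1, inv_pos.2 hΓ0, inv_le_one_of_one_le₀ hΓ1, by positivity,
    N, fun n hn => ?_⟩
  obtain ⟨hn1, hnβ, hL, hRn⟩ := hN n hn
  refine ⟨hL, fun φ hφ x0 hx0 => ?_⟩
  set R := Rad κ m n with hR
  set T := Real.log n ^ m with hT
  have hT1 : 1 ≤ T := one_le_pow₀ hL
  have hn0 : (0 : ℝ) < n := by exact_mod_cast hn1
  have hsn : 0 < √(n : ℝ) := Real.sqrt_pos.2 hn0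
  have hss : √(n : ℝ) * √(n : ℝ) = n := Real.mul_self_sqrt hn0.le
  have hReq : R = κ * √n * T := rfl
  have hR0 : 0 < R := by rw [hReq]; positivity
  have hRη : R ≤ η' * n := by rwa [div_le_iff₀ hn0] at hRn
  have hsR : κ * √n ≤ R := by
    rw [hReq]; exact le_mul_of_one_le_right (by positivity) hT1
  obtain ⟨hlp, hln⟩ := hlam n hn1
  have hl' : ∀ i, |a i * lam n - μ i * nu μ a i * n| ≤ Γ * √n := fun i => by
    have h1 := heavy_traffic (mul_pos hlp hSpos) hln hnβ
    have e : a i * lam n - μ i * nu μ a i * n = d i ^ 2 * (lam n * S - n) := by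
      rw [hdn, hd2]; field_simp
    rw [e, abs_mul, abs_of_nonneg (sq_nonneg _)]
    calc d i ^ 2 * |lam n * S - n| ≤ d i ^ 2 * (2 * |β| * √n) := by gcongr
      _ = (2 * d i ^ 2 * |β|) * √n := by ring
      _ ≤ _ := by gcongr; exact hlΓ i
  -- the a priori bound
  have hbd : ∀ x ∈ ball (0 : Euc I) R, |φ x| ≤ B * R / 2 := by
    have := sol_bound hI hμ hc hγ hR0 hφ (fun x hx i => ?_)
    · intro x hx
      refine (this x hx).trans (le_of_eq ?_)
      rw [hB]; field_simp; rfl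
    have hxR : ‖x‖ ≤ R := (mem_ball_zero_iff.1 hx).le
    have h1 : max (∑ j, x j) 0 ≤ Γ * R := by
      refine max_le ?_ (by positivity)
      exact (le_abs_self _).trans ((abs_sum_coord_le x).trans (by gcongr))
    have h2 : -R ≤ x i := by
      have := neg_abs_le (x i); have := abs_coord_le x i; linarith
    have h3 := (abs_le.1 (hl' i)).1
    have h4 : (Γ ^ 2)⁻¹ ≤ d i ^ 2 := by
      have h5 : Γ⁻¹ ≤ d i := by
        have := hdΓ' i
        rw [div_le_iff₀ (hdp i)] at this
        rw [inv_le_iff_one_le_mul₀ hΓ0]; linarith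
      rw [← inv_pow]; gcongr
    have h6 : √n ≤ R / κ := by rw [le_div_iff₀ hκ]; linarith
    have hm1 : μ i * max (∑ j, x j) 0 ≤ Γ * (Γ * R) := by
      exact mul_le_mul (hμΓ i) h1 (le_max_right _ _) hΓ0.le
    have hm2 : -(Γ * R) ≤ μ i * x i := by
      have h7 := mul_le_mul_of_nonneg_right (hμΓ i) hR0.le
      have h8 := mul_le_mul_of_nonneg_left h2 (hμ i).le
      linarith
    have h9 : (Γ * (Γ + 1) + Γ / κ) * R ≤ 2 * (d i ^ 2 * n) := by
      calc (Γ * (Γ + 1) + Γ / κ) * R ≤ (Γ * (Γ + 1) + Γ / κ) * (η' * n) := by gcongr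
        _ = (Γ * (Γ + 1) + Γ / κ) * η' * n := by ring
        _ ≤ 2 * (Γ ^ 2)⁻¹ * n := by gcongr
        _ ≤ 2 * (d i ^ 2) * n := by gcongr
        _ = _ := by ring
    have h10 : Γ * √n ≤ Γ / κ * R := by
      calc Γ * √n ≤ Γ * (R / κ) := by gcongr
        _ = _ := by ring
    have h11 : μ i * (nu μ a i * n + x i) = d i ^ 2 * n + μ i * x i := by rw [← hdn]; ring
    have h12 : μ i * nu μ a i * n = d i ^ 2 * n := by rw [hdn]
    rw [h11]
    linarith
  refine ⟨(hbd x0 (mem_ball_zero_iff.2 hx0)).trans ?_, ?_⟩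
  · have : 0 ≤ C0 * Γ ^ 3 * B * R + B * R / 2 := by positivity
    linarith
  set M : ℝ := B * R with hM
  have hM0 : 0 < M := by positivity
  set Λ : ℝ := K * T ^ 2 with hΛ
  have hT2 : T ≤ T ^ 2 := le_self_pow₀ hT1 (by norm_num)
  have hΛK : K ≤ Λ := le_mul_of_one_le_right hK0.le (by nlinarith)
  have hΛ0 : 0 < Λ := by linarith
  set ρ : ℝ := (R - ‖x0‖) / Λ with hρdef
  have hρ : 0 < ρ := div_pos (by linarith) hΛ0
  have hρδ : ρ * Λ = R - ‖x0‖ := by rw [hρdef]; field_simp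
  have hρR' : ρ * Λ ≤ R := by rw [hρδ]; have := norm_nonneg x0; linarith
  have hρR : ρ ≤ R := by nlinarith
  -- `R = κ √n T` and `Λ = K T²`, so that `ρ T ≤ κ √n / K`
  have hρT : K * (ρ * T) ≤ κ * √n := by
    have h1 : K * (ρ * T) * T ≤ κ * √n * T := by rw [← hReq]; rw [hΛ] at hρR'; linarith
    exact le_of_mul_le_mul_right h1 (by linarith)
  have hρK : K * ρ ≤ κ * √n := by
    have : K * ρ ≤ K * (ρ * T) := by gcongr; exact le_mul_of_one_le_right hρ.le hT1
    linarith
  have hκη2 : κ ^ 2 ≤ η * K := by rwa [div_le_iff₀ hη, mul_comm] at hK2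
  have hκη : κ ≤ η * K := by rwa [div_le_iff₀ hη, mul_comm] at hK3
  have e2 : ρ * R / n ≤ η := by
    rw [div_le_iff₀ hn0]
    refine le_of_mul_le_mul_left ?_ hK0
    calc K * (ρ * R) = K * (ρ * T) * (κ * √n) := by rw [hReq]; ring
      _ ≤ κ * √n * (κ * √n) := by gcongr
      _ = κ ^ 2 * n := by linear_combination κ ^ 2 * hss
      _ ≤ η * K * n := by gcongr
      _ = _ := by ring
  have e1 : ρ ^ 2 / n ≤ η := by
    refine le_trans ?_ e2
    rw [sq]; gcongr
  have e4 : ρ * √n / n ≤ η := by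
    rw [div_le_iff₀ hn0]
    refine le_of_mul_le_mul_left ?_ hK0
    calc K * (ρ * √n) = K * ρ * √n := by ring
      _ ≤ κ * √n * √n := by gcongr
      _ = κ * n := by linear_combination κ * hss
      _ ≤ η * K * n := by gcongr
      _ = _ := by ring
  have e3 : R / n ≤ η := hRn.trans hη1
  have e5 : ρ / n ≤ η := le_trans (by gcongr) e3
  have e6 : √n / n ≤ η := by
    rw [div_le_iff₀ hn0]
    refine le_of_mul_le_mul_left ?_ hκ
    calc κ * √n ≤ η' * n := hsR.trans hRη
      _ ≤ κ * η * n := by gcongr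
      _ = _ := by ring
  have hball : ∀ z ∈ ball (0 : Euc I) 2,
      x0 + dg (fun i => ρ * d i) z ∈ ball (0 : Euc I) R := fun z hz => by
    rw [mem_ball_zero_iff] at hz ⊢
    have h1 := norm_dg_le (s := fun i => ρ * d i) (S := ρ * Γ) (by positivity) (fun i => by
      rw [abs_of_pos (mul_pos hρ (hdp i))]
      exact mul_le_mul_of_nonneg_left (hdΓ i) hρ.le) z
    have h2 : ρ * Γ * ‖z‖ < ρ * Γ * 2 := by gcongr
    have h3 : ρ * (2 * Γ) ≤ ρ * Λ := by gcongr; linarith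
    have h4 := norm_add_le x0 (dg (fun i => ρ * d i) z)
    linarith
  have hell := hjb_ellOp hI (a := a) (lam := lam n) (M := M) (x0 := x0) hn0 hρ hM0 hdp hμ hc hγ
    hΓ1 hball hIΓ hγΓ hμΓ hcΓ hdΓ hdΓ' hρR (by
      have e : R = γ / (2 * I * Sc) * M := by rw [hM, hB]; field_simp
      rw [e]
      gcongr) hl' hdn e1 e2 e3 e4 e5 e6 hR0
  rw [hηε] at hell
  obtain ⟨-, hφ2, -, heq⟩ := hφ
  have hca : ∀ z ∈ ball (0 : Euc I) 2, ContDiffAt ℝ 2 φ (x0 + dg (fun i => ρ * d i) z) :=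
    fun z hz => hφ2.contDiffAt (isOpen_ball.mem_nhds (hball z hz))
  obtain ⟨q, hq, hqz⟩ := main _ (fun z => M⁻¹ * φ (x0 + dg (fun i => ρ * d i) z)) hell
    (fun z hz => (contDiffAt_scale _ _ (hca z hz)).contDiffWithinAt)
    (fun z hz => by
      rw [abs_mul, abs_of_pos (inv_pos.2 hM0), inv_mul_le_iff₀ hM0]
      have := hbd _ (hball z hz)
      linarith)
    (fun z hz => hjb_scaled hn1 hρ hM0 hdp (hca z hz) (heq _ (hball z hz)))
  obtain ⟨q', h1, h2, h3⟩ := expands_of_scaled hρ hM0 hC0 hΓ1 hdp hdΓ' hq hqz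
  have hA : C0 * Γ ^ 3 * M ≤ (C0 * Γ ^ 3 * B + B) * R := by
    rw [hM]
    have : 0 ≤ B * R := by positivity
    linarith
  refine ⟨q', fun i => (h1 i).trans (by gcongr), fun i j => (h2 i j).trans (by gcongr),
    fun h hh => (h3 h hh).trans (by gcongr)⟩

/-! ### From quadratic expansions to the weighted Schauder bound -/

/-- A function of size `O(|t| ^ (5/2))` has vanishing first and second derivatives at `0`. -/
lemma hasD2_eq_zero {g : ℝ → ℝ} {a b C : ℝ} (h : HasD2 g a b)
    (hg : ∀ᶠ t in 𝓝 (0 : ℝ), |g t| ≤ C * √|t| ^ 5) : a = 0 ∧ b = 0 := by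
  have key : ∀ {f : ℝ → ℝ} {a b : ℝ}, HasD2 f a b →
      (∀ᶠ t in 𝓝 (0 : ℝ), |f t| ≤ C * √|t| ^ 5) → ∀ ε > 0, a = 0 ∧ b ≤ 2 * ε := by
    intro f a b hf hfC ε hε
    have h1 : HasD2 (fun t => f t - ε * (t * t)) a (b - 2 * ε) :=
      (hf.sub ((HasD2.id.mul HasD2.id).const_mul ε)).congr (by ring) (by ring)
    have hlim : Tendsto (fun t : ℝ => C * √|t|) (𝓝 0) (𝓝 (C * √|0|)) := by
      apply Continuous.tendsto; fun_prop
    rw [abs_zero, Real.sqrt_zero, mul_zero] at hlim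
    have hf0 : f 0 = 0 := by
      have := hfC.self_of_nhds
      simpa using this
    have hmax : IsLocalMax (fun t => f t - ε * (t * t)) 0 := by
      filter_upwards [hfC, hlim.eventually_le_const hε] with t h2 h3
      have h4 : √|t| ^ 5 = √|t| * (t * t) := by
        have h5 : √|t| ^ 2 = |t| := Real.sq_sqrt (abs_nonneg t)
        calc √|t| ^ 5 = √|t| * ((√|t| ^ 2) * √|t| ^ 2) := by ring
          _ = _ := by rw [h5, abs_mul_abs_self]
      rw [h4, ← mul_assoc] at h2
      have h6 : C * √|t| * (t * t) ≤ ε * (t * t) :=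
        mul_le_mul_of_nonneg_right h3 (mul_self_nonneg t)
      have := le_abs_self (f t)
      simp only [hf0]
      linarith
    have := h1.max hmax
    exact ⟨this.1, by linarith [this.2]⟩
  have h2 := key h hg
  have h3 := key (h.const_mul (-1)) (by simpa using hg)
  refine ⟨(h2 1 one_pos).1, le_antisymm ?_ ?_⟩
  · refine le_of_forall_pos_le_add fun ε hε => ?_
    linarith [(h2 (ε / 2) (by linarith)).2]
  · refine le_of_forall_pos_le_add fun ε hε => ?_
    linarith [(h3 (ε / 2) (by linarith)).2]

lemma qd_smul (q : Quad I) (t : ℝ) (ξ : Euc I) :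
    qd q (t • ξ) = q.1 + t * (∑ i, q.2.1 i * ξ i)
      + t * t * (1 / 2 * ∑ i, ∑ j, q.2.2 i j * (ξ i * ξ j)) := by
  simp only [qd, PiLp.smul_apply, smul_eq_mul, Finset.mul_sum]
  refine congrArg₂ (· + ·) (congrArg₂ (· + ·) rfl (Finset.sum_congr rfl fun i _ => ?_))
        (Finset.sum_congr rfl fun i _ => Finset.sum_congr rfl fun j _ => ?_) <;> ring

/-- The coefficients of the expansion are the derivatives of `φ`. -/
lemma fderiv_of_expand {φ : Euc I → ℝ} {x0 : Euc I} {q : Quad I} {A s ρ : ℝ}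
    (hs : 0 < s) (hφ : ContDiffAt ℝ 2 φ x0)
    (h : ∀ h : Euc I, ‖h‖ ≤ s → |φ (x0 + h) - qd q h| ≤ A * √(‖h‖ / ρ) ^ 5) (ξ : Euc I) :
    fderiv ℝ φ x0 ξ = ∑ i, q.2.1 i * ξ i ∧
      fderiv ℝ (fderiv ℝ φ) x0 ξ ξ = ∑ i, ∑ j, q.2.2 i j * (ξ i * ξ j) := by
  have h1 := HasD2.line hφ ξ
  have h2 : HasD2 (fun t => qd q (t • ξ)) (∑ i, q.2.1 i * ξ i)
      (∑ i, ∑ j, q.2.2 i j * (ξ i * ξ j)) := by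
    simp only [qd_smul]
    exact (((HasD2.const _).add (HasD2.id.mul (HasD2.const _))).add
      ((HasD2.id.mul HasD2.id).mul (HasD2.const _))).congr (by ring) (by ring)
  have h3 := hasD2_eq_zero (C := A * √(‖ξ‖ / ρ) ^ 5) (h1.sub h2) (by
    have hlim : Tendsto (fun t : ℝ => ‖t • ξ‖) (𝓝 0) (𝓝 ‖(0 : ℝ) • ξ‖) := by
      apply Continuous.tendsto; fun_prop
    rw [zero_smul, norm_zero] at hlim
    filter_upwards [hlim.eventually_le_const hs] with t ht
    refine (h _ ht).trans (le_of_eq ?_)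
    rw [norm_smul, Real.norm_eq_abs, mul_div_assoc, Real.sqrt_mul (abs_nonneg t)]
    ring)
  exact ⟨sub_eq_zero.1 h3.1, sub_eq_zero.1 h3.2⟩

/-- In a Hilbert space a symmetric bilinear form has the same norm as its quadratic form. -/
lemma opNorm_le_of_diag {B : Euc I →L[ℝ] Euc I →L[ℝ] ℝ} (hB : ∀ v w, B v w = B w v) {K : ℝ}
    (hK : 0 ≤ K) (h : ∀ v, |B v v| ≤ K * ‖v‖ ^ 2) : ‖B‖ ≤ K := by
  have h1 : ∀ v w, |B v w| ≤ K / 2 * (‖v‖ ^ 2 + ‖w‖ ^ 2) := fun v w => by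
    have e1 : 4 * B v w = B (v + w) (v + w) - B (v - w) (v - w) := by
      simp only [map_add, map_sub, _root_.add_apply, _root_.sub_apply, hB w v]; ring
    have h2 := h (v + w)
    have h3 := h (v - w)
    have h4 := parallelogram_law_with_norm ℝ v w
    have h5 : |4 * B v w| ≤ K * (‖v + w‖ ^ 2 + ‖v - w‖ ^ 2) := by
      rw [e1]
      refine (abs_sub _ _).trans ?_
      linarith
    rw [abs_mul, abs_of_pos (by norm_num : (0 : ℝ) < 4)] at h5
    have h6 : ‖v + w‖ ^ 2 + ‖v - w‖ ^ 2 = 2 * (‖v‖ ^ 2 + ‖w‖ ^ 2) := by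
      simp only [sq]; linarith
    rw [h6] at h5
    linarith
  refine B.opNorm_le_bound hK fun v => (B v).opNorm_le_bound (by positivity) fun w => ?_
  rw [Real.norm_eq_abs]
  rcases eq_or_ne v 0 with rfl | hv
  · simp
  rcases eq_or_ne w 0 with rfl | hw
  · simp
  have hv' := norm_pos_iff.2 hv
  have hw' := norm_pos_iff.2 hw
  have h2 := h1 (‖w‖ • v) (‖v‖ • w)
  simp only [map_smul, _root_.smul_apply, smul_eq_mul, abs_mul, abs_norm, norm_smul,
    norm_norm] at h2
  have hvw := mul_pos hv' hw'
  refine le_of_mul_le_mul_left ?_ hvw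
  calc ‖v‖ * ‖w‖ * |B v w| ≤ K / 2 * ((‖w‖ * ‖v‖) ^ 2 + (‖v‖ * ‖w‖) ^ 2) := by linarith
    _ = _ := by ring

lemma Expands.mono {A r ρ ρ' : ℝ} {φ : Euc I → ℝ} {x0 : Euc I} (h : Expands A r ρ φ x0)
    (hA : 0 ≤ A) (hr : 0 ≤ r) (hρ' : 0 < ρ') (hρ : ρ' ≤ ρ) : Expands A r ρ' φ x0 := by
  obtain ⟨q, h1, h2, h3⟩ := h
  refine ⟨q, fun i => (h1 i).trans (by gcongr), fun i j => (h2 i j).trans (by gcongr),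
    fun h hh => (h3 h (hh.trans (by gcongr))).trans (by gcongr)⟩

lemma abs_lin_le {f : Fin I → ℝ} {B : ℝ} (hf : ∀ i, |f i| ≤ B) (ξ : Euc I) :
    |∑ i, f i * ξ i| ≤ I * B * ‖ξ‖ := by
  have := abs_sum_mul_le (y := ξ) hf
  simp only [mul_comm (f _)]
  linarith

lemma abs_quad_le {f : Fin I → Fin I → ℝ} {B : ℝ} (hf : ∀ i j, |f i j| ≤ B) (ξ : Euc I) :
    |∑ i, ∑ j, f i j * (ξ i * ξ j)| ≤ I ^ 2 * B * ‖ξ‖ ^ 2 := by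
  have h1 : ∀ i, |∑ j, f i j * ξ j| ≤ I * B * ‖ξ‖ := fun i => abs_lin_le (hf i) ξ
  have h2 := abs_lin_le h1 ξ
  have e : ∑ i, ∑ j, f i j * (ξ i * ξ j) = ∑ i, (∑ j, f i j * ξ j) * ξ i := by
    refine Finset.sum_congr rfl fun i _ => ?_
    rw [Finset.sum_mul]
    refine Finset.sum_congr rfl fun j _ => ?_
    ring
  rw [e]
  refine h2.trans (le_of_eq (by ring))

lemma Expands.bounds {A r ρ : ℝ} {φ : Euc I → ℝ} {x : Euc I} (h : Expands A r ρ φ x)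
    (hA : 0 ≤ A) (hr : 0 < r) (hρ : 0 < ρ) (hφ : ContDiffAt ℝ 2 φ x) :
    ‖fderiv ℝ φ x‖ ≤ I * (A / ρ) ∧ ‖fderiv ℝ (fderiv ℝ φ) x‖ ≤ I ^ 2 * (A / ρ ^ 2) := by
  obtain ⟨q, h1, h2, h3⟩ := h
  have h4 := fderiv_of_expand (mul_pos hr hρ) hφ h3
  have hsym : IsSymmSndFDerivAt ℝ φ x := hφ.isSymmSndFDerivAt (by simp)
  constructor
  · refine ContinuousLinearMap.opNorm_le_bound _ (by positivity) fun ξ => ?_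
    rw [(h4 ξ).1]
    exact abs_lin_le h1 ξ
  · refine opNorm_le_of_diag (fun v w => hsym v w) (by positivity) fun ξ => ?_
    rw [(h4 ξ).2]
    exact abs_quad_le h2 ξ

/-- The second differences of `φ` at `x` with step `‖x - y‖`, computed from the expansions at
`x` and at `y`, compare the two Hessians. -/
lemma hessian_near {A r ρ : ℝ} {φ : Euc I → ℝ} {x y : Euc I} (hx : Expands A r ρ φ x)
    (hy : Expands A r ρ φ y) (hA : 0 ≤ A) (hr : 0 < r) (hρ : 0 < ρ)
    (hφx : ContDiffAt ℝ 2 φ x) (hφy : ContDiffAt ℝ 2 φ y) (hxy : x ≠ y)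
    (hnear : 2 * ‖x - y‖ ≤ r * ρ) :
    ‖fderiv ℝ (fderiv ℝ φ) x - fderiv ℝ (fderiv ℝ φ) y‖
      ≤ 34 * (A / ρ ^ 2) * √(‖x - y‖ / ρ) := by
  obtain ⟨p, -, -, hp⟩ := hx
  obtain ⟨q, -, -, hq⟩ := hy
  have hp2 := fderiv_of_expand (mul_pos hr hρ) hφx hp
  have hq2 := fderiv_of_expand (mul_pos hr hρ) hφy hq
  have hsx : IsSymmSndFDerivAt ℝ φ x := hφx.isSymmSndFDerivAt (by simp)
  have hsy : IsSymmSndFDerivAt ℝ φ y := hφy.isSymmSndFDerivAt (by simp)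
  set v := x - y with hv
  have hv0 : 0 < ‖v‖ := norm_pos_iff.2 (sub_ne_zero.2 hxy)
  refine opNorm_le_of_diag (fun v w => ?_) (by positivity) fun ξ => ?_
  · rw [_root_.sub_apply, _root_.sub_apply, _root_.sub_apply, _root_.sub_apply, hsx v w, hsy v w]
  rcases eq_or_ne ξ 0 with rfl | hξ
  · simp
  have hξ0 := norm_pos_iff.2 hξ
  rw [_root_.sub_apply, _root_.sub_apply, (hp2 ξ).2, (hq2 ξ).2]
  -- the step `t • ξ` has length `‖x - y‖`, so that both error terms are of the same order
  set t : ℝ := ‖v‖ / ‖ξ‖ with ht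
  have ht0 : 0 < t := div_pos hv0 hξ0
  have htξ : t * ‖ξ‖ = ‖v‖ := by rw [ht]; field_simp
  have hn : ‖t • ξ‖ = ‖v‖ := by rw [norm_smul, Real.norm_eq_abs, abs_of_pos ht0, htξ]
  have hn' : ‖(-t) • ξ‖ = ‖v‖ := by rw [neg_smul, norm_neg, hn]
  set w : ℝ := √(‖v‖ / ρ) with hw
  have hw0 : 0 ≤ w := Real.sqrt_nonneg _
  have errx : ∀ s : ℝ, ‖s • ξ‖ = ‖v‖ → |φ (x + s • ξ) - qd p (s • ξ)| ≤ A * w ^ 5 := fun s hs => by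
    have := hp (s • ξ) (by rw [hs]; linarith)
    rwa [hs] at this
  have erry : ∀ z : Euc I, ‖z‖ ≤ ‖v‖ → |φ (x + z) - qd q (v + z)| ≤ A * (8 * w ^ 5) :=
    fun z hz => by
    have h1 : ‖v + z‖ ≤ 2 * ‖v‖ := (norm_add_le _ _).trans (by linarith)
    have h2 := hq (v + z) (h1.trans hnear)
    have e : y + (v + z) = x + z := by rw [hv]; abel
    rw [e] at h2
    refine h2.trans ?_
    have h3 : √(‖v + z‖ / ρ) ≤ √2 * w := by
      rw [hw, ← Real.sqrt_mul (by norm_num)]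
      refine Real.sqrt_le_sqrt ?_
      rw [← mul_div_assoc]; gcongr
    have h4 : √2 ^ 5 ≤ (8 : ℝ) := by
      have h5 : (1 : ℝ) ≤ √2 := by rw [Real.one_le_sqrt]; norm_num
      calc √2 ^ 5 ≤ √2 ^ 6 := pow_le_pow_right₀ h5 (by norm_num)
        _ = (√2 ^ 2) ^ 3 := by ring
        _ = (8 : ℝ) := by rw [Real.sq_sqrt (by norm_num)]; norm_num
    calc A * √(‖v + z‖ / ρ) ^ 5 ≤ A * (√2 * w) ^ 5 := by gcongr
      _ = A * (√2 ^ 5 * w ^ 5) := by ring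
      _ ≤ _ := by gcongr
  have hx0 : φ x = p.1 := by
    have h := hp 0 (by rw [norm_zero]; positivity)
    rw [norm_zero, zero_div, Real.sqrt_zero, add_zero] at h
    have h' : |φ x - qd p 0| ≤ 0 := by simpa using h
    rw [abs_nonpos_iff, sub_eq_zero] at h'
    rw [h']; simp [qd]
  have a1 := abs_le.1 (errx t hn)
  have a2 := abs_le.1 (errx (-t) hn')
  have b0 := abs_le.1 (erry 0 (by rw [norm_zero]; exact hv0.le))
  have b1 := abs_le.1 (erry (t • ξ) hn.le)
  have b2 := abs_le.1 (erry ((-t) • ξ) hn'.le)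
  rw [qd_smul] at a1 a2
  rw [add_zero, add_zero] at b0
  rw [qd_add_vec] at b1 b2
  have c1 : ∀ s : ℝ, ∑ k, (s • ξ) k * qd1 q k v = s * ∑ k, ξ k * qd1 q k v := fun s => by
    rw [Finset.mul_sum]
    refine Finset.sum_congr rfl fun k _ => ?_
    simp only [PiLp.smul_apply, smul_eq_mul]; ring
  have c2 : ∀ s : ℝ, ∑ i, ∑ j, q.2.2 i j * ((s • ξ) i * (s • ξ) j)
      = s * s * ∑ i, ∑ j, q.2.2 i j * (ξ i * ξ j) := fun s => by
    simp only [Finset.mul_sum]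
    refine Finset.sum_congr rfl fun i _ => Finset.sum_congr rfl fun j _ => ?_
    simp only [PiLp.smul_apply, smul_eq_mul]; ring
  rw [c1, c2] at b1 b2
  set P := ∑ i, ∑ j, p.2.2 i j * (ξ i * ξ j)
  set Q := ∑ i, ∑ j, q.2.2 i j * (ξ i * ξ j)
  have main : t ^ 2 * |P - Q| ≤ 34 * (A * w ^ 5) := by
    rw [← abs_of_pos (pow_pos ht0 2), ← abs_mul, abs_le]
    constructor <;> linarith [a1.1, a1.2, a2.1, a2.2, b0.1, b0.2, b1.1, b1.2, b2.1, b2.2]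
  have hw4 : w ^ 5 = w * (‖v‖ ^ 2 / ρ ^ 2) := by
    have h5 : w ^ 2 = ‖v‖ / ρ := Real.sq_sqrt (by positivity)
    calc w ^ 5 = w * (w ^ 2) ^ 2 := by ring
      _ = _ := by rw [h5, div_pow]
  refine le_of_mul_le_mul_left (main.trans (le_of_eq ?_)) (pow_pos ht0 2)
  rw [hw4, ← htξ]
  ring

/-- If `x` and `y` are far apart at scale `ρ`, the size of the two Hessians suffices. -/
lemma hessian_holder (hI : 0 < I) {A r ρ : ℝ} {φ : Euc I → ℝ} {x y : Euc I}
    (hx : Expands A r ρ φ x)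
    (hy : Expands A r ρ φ y) (hA : 0 ≤ A) (hr : 0 < r) (hr1 : r ≤ 1) (hρ : 0 < ρ)
    (hφx : ContDiffAt ℝ 2 φ x) (hφy : ContDiffAt ℝ 2 φ y) (hxy : x ≠ y) :
    ‖fderiv ℝ (fderiv ℝ φ) x - fderiv ℝ (fderiv ℝ φ) y‖
      ≤ (34 + 4 * I ^ 2 / r) * (A / ρ ^ 2) * √(‖x - y‖ / ρ) := by
  have hAρ : 0 ≤ A / ρ ^ 2 := by positivity
  set w := √(‖x - y‖ / ρ) with hw
  have hw0 : 0 ≤ w := Real.sqrt_nonneg _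
  rcases le_total (2 * ‖x - y‖) (r * ρ) with h | h
  · refine (hessian_near hx hy hA hr hρ hφx hφy hxy h).trans ?_
    have : (0 : ℝ) ≤ 4 * I ^ 2 / r := by positivity
    gcongr
    linarith
  · have h1 := (hx.bounds hA hr hρ hφx).2
    have h2 := (hy.bounds hA hr hρ hφy).2
    have h3 : 1 ≤ 2 / r * w := by
      have h4 : r / 2 ≤ w := by
        rw [hw]
        refine Real.le_sqrt_of_sq_le ?_
        rw [le_div_iff₀ hρ]
        have : (r / 2) ^ 2 * ρ = r / 4 * (r * ρ) := by ring
        nlinarith [mul_pos hr hρ]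
      calc (1 : ℝ) = 2 / r * (r / 2) := by field_simp
        _ ≤ _ := by gcongr
    calc ‖fderiv ℝ (fderiv ℝ φ) x - fderiv ℝ (fderiv ℝ φ) y‖
        ≤ I ^ 2 * (A / ρ ^ 2) + I ^ 2 * (A / ρ ^ 2) := 
          (norm_sub_le (fderiv ℝ (fderiv ℝ φ) x) (fderiv ℝ (fderiv ℝ φ) y)).trans
            (add_le_add h1 h2)
      _ = 2 * I ^ 2 * (A / ρ ^ 2) * 1 := by ring
      _ ≤ 2 * I ^ 2 * (A / ρ ^ 2) * (2 / r * w) := by gcongr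
      _ = (4 * I ^ 2 / r) * (A / ρ ^ 2) * w := by ring
      _ ≤ _ := by gcongr; linarith

/-- Quadratic expansions at scale `dist (x, ∂B) / Λ` give the weighted Schauder bound with exponent
`1/2`: each derivative costs one factor `Λ`, and the Hölder seminorm costs at most one more. -/
theorem schauder_of_expands (hI : 0 < I) {A r Λ R : ℝ} {φ : Euc I → ℝ} (hA : 0 ≤ A) (hr : 0 < r)
    (hr1 : r ≤ 1) (hΛ : 1 ≤ Λ) (hφ : ContDiffOn ℝ 2 φ (ball 0 R))
    (h : ∀ x : Euc I, ‖x‖ < R → |φ x| ≤ A ∧ Expands A r ((R - ‖x‖) / Λ) φ x) :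
    SchauderBound (1 / 2) R ((34 + 4 * I ^ 2 / r) * A * Λ ^ 3) φ := by
  have hI1 : (1 : ℝ) ≤ I := by exact_mod_cast hI
  have hΛ0 : 0 < Λ := by linarith
  have hca : ∀ x : Euc I, ‖x‖ < R → ContDiffAt ℝ 2 φ x := fun x hx =>
    hφ.contDiffAt (isOpen_ball.mem_nhds (mem_ball_zero_iff.2 hx))
  have hII : (I : ℝ) ≤ I ^ 2 := le_self_pow₀ hI1 (by norm_num)
  have hc2 : (I : ℝ) ^ 2 ≤ 34 + 4 * I ^ 2 / r := by
    have : (I : ℝ) ^ 2 ≤ 4 * I ^ 2 / r := by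
      rw [le_div_iff₀ hr]; nlinarith [sq_nonneg (I : ℝ)]
    linarith
  have hc1 : (I : ℝ) ≤ 34 + 4 * I ^ 2 / r := hII.trans hc2
  have hΛ3 : 1 ≤ Λ ^ 3 := one_le_pow₀ hΛ
  refine ⟨fun x hx => (h x hx).1.trans ?_, fun x hx => ?_, fun x hx => ?_,
    fun x y hx hy hxy => ?_⟩
  · calc A = 1 * A * 1 := by ring
      _ ≤ _ := by gcongr; linarith
  · have hδ : 0 < R - ‖x‖ := by linarith
    have h1 := ((h x hx).2.bounds hA hr (div_pos hδ hΛ0) (hca x hx)).1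
    calc (R - ‖x‖) * ‖fderiv ℝ φ x‖ ≤ (R - ‖x‖) * (I * (A / ((R - ‖x‖) / Λ))) := by gcongr
      _ = I * A * Λ := by field_simp
      _ ≤ _ := by gcongr; exact le_self_pow₀ hΛ (by norm_num)
  · have hδ : 0 < R - ‖x‖ := by linarith
    have h1 := ((h x hx).2.bounds hA hr (div_pos hδ hΛ0) (hca x hx)).2
    calc (R - ‖x‖) ^ 2 * ‖fderiv ℝ (fderiv ℝ φ) x‖
        ≤ (R - ‖x‖) ^ 2 * (I ^ 2 * (A / ((R - ‖x‖) / Λ) ^ 2)) := by gcongr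
      _ = I ^ 2 * A * Λ ^ 2 := by field_simp
      _ ≤ _ := by gcongr; norm_num
  · set δ := min (R - ‖x‖) (R - ‖y‖) with hδd
    have hδ : 0 < δ := lt_min (by linarith) (by linarith)
    have hρ : 0 < δ / Λ := div_pos hδ hΛ0
    have hex := (h x hx).2.mono hA hr.le hρ (by gcongr; exact min_le_left _ _)
    have hey := (h y hy).2.mono hA hr.le hρ (by gcongr; exact min_le_right _ _)
    have h1 := hessian_holder hI hex hey hA hr hr1 hρ (hca x hx) (hca y hy) hxy
    have e1 : δ ^ (2 + 1 / 2 : ℝ) = δ ^ 2 * √δ := by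
      rw [Real.rpow_add hδ, ← Real.sqrt_eq_rpow, Real.rpow_ofNat]
    have e2 : √(‖x - y‖ / (δ / Λ)) = √‖x - y‖ * √Λ / √δ := by
      rw [div_div_eq_mul_div, Real.sqrt_div (by positivity), Real.sqrt_mul (norm_nonneg _)]
    have hsδ : 0 < √δ := Real.sqrt_pos.2 hδ
    have hsΛ : √Λ ≤ Λ := by
      rw [Real.sqrt_le_left hΛ0.le]; exact le_self_pow₀ hΛ (by norm_num)
    rw [e1, ← Real.sqrt_eq_rpow]
    rw [e2] at h1
    calc δ ^ 2 * √δ * ‖fderiv ℝ (fderiv ℝ φ) x - fderiv ℝ (fderiv ℝ φ) y‖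
        ≤ δ ^ 2 * √δ * ((34 + 4 * I ^ 2 / r) * (A / (δ / Λ) ^ 2) * (√‖x - y‖ * √Λ / √δ)) := by
          gcongr
      _ = (34 + 4 * I ^ 2 / r) * A * (Λ ^ 2 * √Λ) * √‖x - y‖ := by field_simp
      _ ≤ (34 + 4 * I ^ 2 / r) * A * (Λ ^ 2 * Λ) * √‖x - y‖ := by gcongr
      _ = _ := by ring

lemma SchauderBound.mono {α R M M' : ℝ} {φ : Euc I → ℝ} (h : SchauderBound α R M φ)
    (hM : M ≤ M') : SchauderBound α R M' φ :=
  ⟨fun x hx => (h.1 x hx).trans hM, fun x hx => (h.2.1 x hx).trans hM,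
    fun x hx => (h.2.2.1 x hx).trans hM, fun x y hx hy hxy => (h.2.2.2 x y hx hy hxy).trans
      (mul_le_mul_of_nonneg_right hM (by positivity))⟩

/-- There are `α ∈ (0,1]` and `C > 0` independent of `n` such that for all
sufficiently large `n`, every classical solution of the HJB equation on `B_κ^n` satisfies the
weighted interior Schauder bound `|φ|*_{2,α,B_κ^n} ≤ C √n (log n)^{k₀}` with
`k₀ = 4m(1 + 1/α)`. -/
theorem stmt1
    (I : ℕ) (hI : 0 < I)
    (μ a c : Fin I → ℝ) (γ β : ℝ)
    (hμ : ∀ i, 0 < μ i) (ha : ∀ i, 0 < a i) (hsum : ∑ i, a i = 1)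
    (hc : ∀ i, 0 < c i) (hγ : 0 < γ)
    (lam : ℕ → ℝ)
    (hlam : ∀ n : ℕ, 1 ≤ n → 0 < lam n ∧
      (n : ℝ) = lam n * (∑ i, a i / μ i)
        + β * Real.sqrt (lam n * (∑ i, a i / μ i)))
    (κ : ℝ) (hκ : 0 < κ) (m : ℕ) (hm : 3 ≤ m) :
    ∃ α C : ℝ, 0 < α ∧ α ≤ 1 ∧ 0 < C ∧
      ∃ N : ℕ, ∀ n : ℕ, N ≤ n →
        ∀ φ : Euc I → ℝ,
          IsSolGen μ a c γ (lam n) n (Rad κ m n) (fun y => max y 0) φ →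
          SchauderBound α (Rad κ m n)
            (C * Real.sqrt n * Real.log n ^ ((4 * (m : ℝ)) * (1 + 1 / α))) φ := by
  obtain ⟨K, r, C, hK, hr, hr1, hC, N, hN⟩ :=
    local_expansion hI μ a c γ β hμ ha hc hγ lam hlam κ hκ m
  refine ⟨1 / 2, (34 + 4 * I ^ 2 / r) * C * κ * K ^ 3, by norm_num, by norm_num, by positivity,
    N, fun n hn φ hφ => ?_⟩
  obtain ⟨hL, h⟩ := hN n hn
  have hT : 1 ≤ Real.log n ^ m := one_le_pow₀ hL
  have hR : 0 ≤ Rad κ m n := by unfold Rad; positivity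
  refine (schauder_of_expands hI (mul_nonneg hC.le hR) hr hr1
    (one_le_mul_of_one_le_of_one_le hK (one_le_pow₀ hT)) hφ.2.1 (h φ hφ)).mono ?_
  -- `4 * m * (1 + 1 / α) = 12 * m`, whereas `R Λ ^ 3` only involves the power `7 * m` of the logarithm
  have e : Real.log n ^ ((4 * (m : ℝ)) * (1 + 1 / (1 / 2))) = (Real.log n ^ m) ^ 12 := by
    rw [← pow_mul, ← Real.rpow_natCast]
    congr 1
    push_cast
    ring
  rw [e]
  calc (34 + 4 * I ^ 2 / r) * (C * Rad κ m n) * (K * (Real.log n ^ m) ^ 2) ^ 3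
      = (34 + 4 * I ^ 2 / r) * C * κ * K ^ 3 * √n * (Real.log n ^ m) ^ 7 := by
        rw [Rad]; ring
    _ ≤ _ := by
        gcongr
        norm_num

end HW
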